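/- arXiv:1102.5229 — 5 statements merged into one kernel-verified Lean document; each statement's English description precedes it below -/
import Mathlib

section
/- For every real c with 0 < c ≤ 1/2 and every γ > 0 there exist ε₀, d₀ > 0 and integers n₀, k₀ such that for all positive d ≤ d₀, ε ≤ ε₀, all ε′ > 0, and all integers n ≥ n₀, k ≥ k₀, k′ the following holds. If R is a coloured graph on k vertices which has at most εk² non-edges and contains no triangle all three of whose edges are grey, then |ℛ(R,ε,ε′,d,k′,n,c)| ≤ 2^{(h(c)+γ)·C(n,2)}, where C(n,2) = n(n−1)/2. -/
/-! Fix a partition of the vertex set into an exceptional class and `k` clusters of common size `m`,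
so `k m ≤ n`. The pairs of vertices split into three kinds.

* Pairs touching the exceptional class, inside a cluster, or over a non-edge of `R`: there are at
  most `(3ε + 1/k) n²` of them (some counted in both orders), and they may be filled arbitrarily.
* Pairs over grey edges: the grey graph is triangle-free, so by Mantel's theorem there are at most
  `(k²/4) m² ≤ n²/4` such pairs (`card_grey_le`). As the graph has at most `c·C(n,2)` edges, there
  are at most `2^(h(c)·C(n,2) + n/4)` ways to fill them (`card_grey_choices_le`).
* Pairs over white or black edges: the graph differs from the pattern given by the colours in at
  most `d n²` pairs, which leaves `2^(o(1) n²)` choices as `d → 0` (`card_error_choices_le`).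

`card_graphs_le` multiplies the three counts, `card_fitsPartition_le` carries this out for one
partition. Finally, if some graph has type `R` then `k ≤ n`, so there are at most `(n+1)^n` relevant
partitions, which is `2^(o(n²))` uniformly in `k`.
-/

open Finset SimpleGraph
open scoped Classical

/-- Binary entropy with base-2 logarithm. -/
noncomputable def binEnt (x : ℝ) : ℝ := -(x * Real.logb 2 x) - (1 - x) * Real.logb 2 (1 - x)

/-- The function `h(c)` from the paper. -/
noncomputable def hfun (c : ℝ) : ℝ :=
  if c < 1/4 then binEnt (2*c) / 2
  else if c ≤ 3/4 then 1/2
  else binEnt (2*c - 1) / 2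
/-- Number of edges of a graph. -/
noncomputable def edgeCount {V : Type} (G : SimpleGraph V) : ℕ := Nat.card G.edgeSet
/-- Density of the pair `(A, B)` in `G`: `e(A,B)/(|A|·|B|)`. -/
noncomputable def dens {V : Type} (G : SimpleGraph V) (A B : Finset V) : ℝ :=
  (((A ×ˢ B).filter fun p => G.Adj p.1 p.2).card : ℝ) / ((A.card : ℝ) * (B.card : ℝ))

/-- The pair `(A, B)` is `ε`-regular in `G`: all sufficiently large subpairs have density within
`ε` of `d(A,B)`. -/
noncomputable def EpsRegular {V : Type} (G : SimpleGraph V) (ε : ℝ) (A B : Finset V) : Prop :=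
  ∀ A' ⊆ A, ∀ B' ⊆ B, ε * (A.card : ℝ) ≤ (A'.card : ℝ) → ε * (B.card : ℝ) ≤ (B'.card : ℝ) →
    |dens G A B - dens G A' B'| ≤ ε
/-- `W` is a `(μ, ε, k)`-subpartition of `G`: pairwise disjoint vertex sets, each of size at
least `μ|V|`, forming pairwise `ε`-regular pairs. -/
noncomputable def IsSubpartition {V : Type} [Fintype V] (G : SimpleGraph V) (μ ε : ℝ) (k : ℕ)
    (W : Fin k → Finset V) : Prop :=
  (∀ i j, i ≠ j → Disjoint (W i) (W j)) ∧
  (∀ i, μ * (Fintype.card V : ℝ) ≤ ((W i).card : ℝ)) ∧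
  (∀ i j, i ≠ j → EpsRegular G ε (W i) (W j))

/-- `G` has a sparse `(μ, ε, k)`-subpartition (all pairs of density below `1/2`). -/
noncomputable def HasSparseSub {V : Type} [Fintype V] (G : SimpleGraph V) (μ ε : ℝ) (k : ℕ) :
    Prop :=
  ∃ W : Fin k → Finset V, IsSubpartition G μ ε k W ∧
    ∀ i j, i ≠ j → dens G (W i) (W j) < 1/2

/-- `G` has a dense `(μ, ε, k)`-subpartition (all pairs of density at least `1/2`). -/
noncomputable def HasDenseSub {V : Type} [Fintype V] (G : SimpleGraph V) (μ ε : ℝ) (k : ℕ) :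
    Prop :=
  ∃ W : Fin k → Finset V, IsSubpartition G μ ε k W ∧
    ∀ i j, i ≠ j → 1/2 ≤ dens G (W i) (W j)
/-- `μ` is a valid constant for `(ε', k')`: every graph on at least `μ⁻¹` vertices has a sparse
or a dense `(μ, ε', k')`-subpartition. -/
noncomputable def GoodMu (μ ε' : ℝ) (k' : ℕ) : Prop :=
  0 < μ ∧ ∀ (V : Type) [Fintype V] (G : SimpleGraph V), μ⁻¹ ≤ (Fintype.card V : ℝ) →
    HasSparseSub G μ ε' k' ∨ HasDenseSub G μ ε' k'

/-- A coloured graph: a graph on `Fin k` together with a colouring of the vertices by `{0, 1}`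
and of the edges by `{0, 1/2, 1}` (white, grey, black). -/
structure ColouredGraph (k : ℕ) where
  graph : SimpleGraph (Fin k)
  vcol : Fin k → ℝ
  ecol : Fin k → Fin k → ℝ
  vcol_mem : ∀ i, vcol i = 0 ∨ vcol i = 1
  ecol_symm : ∀ i j, ecol i j = ecol j i
  ecol_mem : ∀ i j, graph.Adj i j → ecol i j = 0 ∨ ecol i j = 1/2 ∨ ecol i j = 1

/-- The number of non-edges of the underlying graph of a coloured graph. -/
noncomputable def ColouredGraph.nonEdges {k : ℕ} (R : ColouredGraph k) : ℕ :=
  ((univ : Finset (Fin k × Fin k)).filter fun p => p.1 < p.2 ∧ ¬ R.graph.Adj p.1 p.2).card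

/-- `R` contains a triangle all three of whose edges are grey. -/
def ColouredGraph.HasGreyTriangle {k : ℕ} (R : ColouredGraph k) : Prop :=
  ∃ i j l : Fin k, R.graph.Adj i j ∧ R.graph.Adj j l ∧ R.graph.Adj i l ∧
    R.ecol i j = 1/2 ∧ R.ecol j l = 1/2 ∧ R.ecol i l = 1/2

/-- `G` has `(ε, ε', d, k')`-type `R`: there is a partition `V(G) = V₀ ∪ V₁ ∪ … ∪ V_k` with
`|V₀| ≤ ε|V(G)|`, `|V₁| = … = |V_k|`, such that `{i,j}` is an edge of `R` exactly when
`(Vᵢ,Vⱼ)` is `ε`-regular, at most `ε·C(k,2)` pairs are not `ε`-regular, edges of `R` are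
coloured `0`/`1`/`1/2` according to whether the density of the corresponding pair is `< d`,
`> 1 − d`, or in between, and a vertex `i` is coloured `0` (resp. `1`) only if `G[Vᵢ]` has a
sparse (resp. dense) `(μ, ε', k')`-subpartition, where `μ = μ(ε',k')` is a valid constant. -/
noncomputable def HasType {n : ℕ} (G : SimpleGraph (Fin n)) (ε ε' d : ℝ) (k' : ℕ) {k : ℕ}
    (R : ColouredGraph k) : Prop :=
  ∃ μ : ℝ, GoodMu μ ε' k' ∧
  ∃ (V0 : Finset (Fin n)) (W : Fin k → Finset (Fin n)),
    (∀ i j, i ≠ j → Disjoint (W i) (W j)) ∧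
    (∀ i, Disjoint V0 (W i)) ∧
    (V0 ∪ univ.biUnion W = univ) ∧
    ((V0.card : ℝ) ≤ ε * n) ∧
    (∀ i j, (W i).card = (W j).card) ∧
    (∀ i j, i ≠ j → (R.graph.Adj i j ↔ EpsRegular G ε (W i) (W j))) ∧
    ((((univ : Finset (Fin k × Fin k)).filter fun p =>
        p.1 < p.2 ∧ ¬ EpsRegular G ε (W p.1) (W p.2)).card : ℝ) ≤ ε * (k.choose 2 : ℝ)) ∧
    (∀ i j, R.graph.Adj i j →
      (dens G (W i) (W j) < d → R.ecol i j = 0) ∧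
      (1 - d < dens G (W i) (W j) → R.ecol i j = 1) ∧
      (d ≤ dens G (W i) (W j) → dens G (W i) (W j) ≤ 1 - d → R.ecol i j = 1/2)) ∧
    (∀ i, (R.vcol i = 0 → HasSparseSub (G.induce ↑(W i)) μ ε' k') ∧
          (R.vcol i = 1 → HasDenseSub (G.induce ↑(W i)) μ ε' k'))

/-- `ℛ(R,ε,ε',d,k',n,c)`: the graphs on vertex set `{1,…,n}` with exactly `⌊c·C(n,2)⌋` edges
that have `(ε,ε',d,k')`-type `R`. -/
noncomputable def Rset {k : ℕ} (R : ColouredGraph k) (ε ε' d : ℝ) (k' n : ℕ) (c : ℝ) :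
    Finset (SimpleGraph (Fin n)) :=
  univ.filter fun G => edgeCount G = ⌊c * (n.choose 2 : ℝ)⌋₊ ∧ HasType G ε ε' d k' R

/-! ### Counting small subsets -/

/-- Chernoff-type bound: weighting a set `T` by `l ^ |T|` with `l ≤ 1` bounds the number of
subsets of size at most `t`. -/
lemma card_small_subsets_le {α : Type*} (S : Finset α) (t l : ℝ) (hl : 0 < l) (hl1 : l ≤ 1) :
    ((S.powerset.filter fun T => (T.card : ℝ) ≤ t).card : ℝ) ≤ l ^ (-t) * (1 + l) ^ S.card := by
  have h1 : ((S.powerset.filter fun T => (T.card : ℝ) ≤ t).card : ℝ)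
      ≤ ∑ T ∈ S.powerset.filter (fun T => (T.card : ℝ) ≤ t), l ^ (-t) * l ^ T.card := by
    rw [Finset.card_eq_sum_ones, Nat.cast_sum]
    refine Finset.sum_le_sum fun T hT => ?_
    have hT2 := (Finset.mem_filter.1 hT).2
    rw [← Real.rpow_natCast l, ← Real.rpow_add hl, Nat.cast_one]
    exact Real.one_le_rpow_of_pos_of_le_one_of_nonpos hl hl1 (by linarith)
  refine h1.trans ?_
  have h2 : (1 + l) ^ S.card = ∑ T ∈ S.powerset, l ^ T.card := by
    rw [add_comm, ← Finset.sum_pow_mul_eq_add_pow]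
    simp
  rw [h2, Finset.mul_sum]
  refine Finset.sum_le_sum_of_subset_of_nonneg (Finset.filter_subset _ _) fun T _ _ => ?_
  positivity

/-- Few subsets of a set of at most `n ^ 2 / 4` points have at most `c * (n.choose 2)` elements.
For `c < 1/4` the weight `l = 2c / (1 - 2c)` is the optimal one. -/
lemma card_grey_choices_le {α : Type*} (S : Finset α) (c : ℝ) (hc0 : 0 < c) (hc1 : c ≤ 1/2)
    (n : ℕ) (hS : (S.card : ℝ) ≤ (n : ℝ) ^ 2 / 4) :
    ((S.powerset.filter fun T => (T.card : ℝ) ≤ c * (n.choose 2 : ℝ)).card : ℝ)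
      ≤ (2 : ℝ) ^ (hfun c * (n.choose 2 : ℝ) + (n : ℝ) / 4) := by
  have hN : (n : ℝ) ^ 2 / 4 = (n.choose 2 : ℝ) / 2 + (n : ℝ) / 4 := by
    rw [Nat.cast_choose_two]; ring
  set N : ℝ := (n.choose 2 : ℝ) with hNdef
  unfold hfun
  split_ifs with h1 h2
  · have hp : (0 : ℝ) < 1 - 2 * c := by linarith
    have hc2 : (0 : ℝ) < 2 * c := by linarith
    refine (card_small_subsets_le S (c * N) (2 * c / (1 - 2 * c)) (by positivity)
      ((div_le_one hp).2 (by linarith))).trans ?_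
    have e1 : 1 + 2 * c / (1 - 2 * c) = (1 - 2 * c)⁻¹ := by field_simp; ring
    rw [e1]
    have hinv1 : 1 ≤ (1 - 2 * c)⁻¹ := (one_le_inv₀ hp).2 (by linarith)
    have hinv2 : (1 - 2 * c)⁻¹ ≤ 2 := by
      rw [inv_le_comm₀ hp (by norm_num)]; linarith
    have hpow : ((1 - 2 * c)⁻¹) ^ S.card ≤ ((1 - 2 * c)⁻¹) ^ (N / 2) * (2 : ℝ) ^ ((n : ℝ) / 4) := by
      calc ((1 - 2 * c)⁻¹) ^ S.card = ((1 - 2 * c)⁻¹) ^ (S.card : ℝ) := (Real.rpow_natCast _ _).symm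
        _ ≤ ((1 - 2 * c)⁻¹) ^ (N / 2 + (n : ℝ) / 4) :=
            Real.rpow_le_rpow_of_exponent_le hinv1 (by linarith)
        _ = ((1 - 2 * c)⁻¹) ^ (N / 2) * ((1 - 2 * c)⁻¹) ^ ((n : ℝ) / 4) :=
            Real.rpow_add (by positivity) _ _
        _ ≤ _ := by gcongr
    have h2c : 2 * c = (2 : ℝ) ^ Real.logb 2 (2 * c) :=
      (Real.rpow_logb (by norm_num) (by norm_num) hc2).symm
    have h12c : 1 - 2 * c = (2 : ℝ) ^ Real.logb 2 (1 - 2 * c) :=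
      (Real.rpow_logb (by norm_num) (by norm_num) hp).symm
    have key : (2 * c / (1 - 2 * c)) ^ (-(c * N)) * ((1 - 2 * c)⁻¹) ^ (N / 2)
        = (2 : ℝ) ^ (binEnt (2 * c) / 2 * N) := by
      unfold binEnt
      set a := Real.logb 2 (2 * c)
      set b := Real.logb 2 (1 - 2 * c)
      have e2 : 2 * c / (1 - 2 * c) = (2 : ℝ) ^ (a - b) := by
        rw [Real.rpow_sub (by norm_num), ← h2c, ← h12c]
      have e3 : (1 - 2 * c)⁻¹ = (2 : ℝ) ^ (-b) := by
        rw [Real.rpow_neg (by norm_num), ← h12c]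
      rw [e2, e3, ← Real.rpow_mul (by norm_num), ← Real.rpow_mul (by norm_num),
        ← Real.rpow_add (by norm_num)]
      congr 1
      ring
    calc (2 * c / (1 - 2 * c)) ^ (-(c * N)) * ((1 - 2 * c)⁻¹) ^ S.card
        ≤ (2 * c / (1 - 2 * c)) ^ (-(c * N)) *
          (((1 - 2 * c)⁻¹) ^ (N / 2) * (2 : ℝ) ^ ((n : ℝ) / 4)) := by gcongr
      _ = _ := by rw [← mul_assoc, key, ← Real.rpow_add (by norm_num)]
  · have h3 : (S.powerset.filter fun T => (T.card : ℝ) ≤ c * N).card ≤ 2 ^ S.card := by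
      rw [← Finset.card_powerset]; exact Finset.card_filter_le _ _
    calc ((S.powerset.filter fun T => (T.card : ℝ) ≤ c * N).card : ℝ)
        ≤ (2 : ℝ) ^ S.card := by exact_mod_cast h3
      _ = (2 : ℝ) ^ (S.card : ℝ) := (Real.rpow_natCast _ _).symm
      _ ≤ _ := Real.rpow_le_rpow_of_exponent_le (by norm_num) (by linarith)
  · linarith

/-- A set of at most `M` points has at most `2 ^ (s t + 2 M / 2 ^ s)` subsets of size at
most `t`. -/
lemma card_error_choices_le {α : Type*} (S : Finset α) (t M : ℝ) (s : ℕ)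
    (hS : (S.card : ℝ) ≤ M) :
    ((S.powerset.filter fun T => (T.card : ℝ) ≤ t).card : ℝ)
      ≤ (2 : ℝ) ^ (s * t + 2 * (1 / 2) ^ s * M) := by
  have hl : (0 : ℝ) < (1 / 2) ^ s := by positivity
  refine (card_small_subsets_le S t ((1 / 2) ^ s) hl
    (pow_le_one₀ (by norm_num) (by norm_num))).trans ?_
  rw [Real.rpow_add (by norm_num)]
  have e1 : (((1 : ℝ) / 2) ^ s) ^ (-t) = (2 : ℝ) ^ (s * t) := by
    have : ((1 : ℝ) / 2) ^ s = (2 : ℝ) ^ (-(s : ℝ)) := by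
      rw [Real.rpow_neg (by norm_num), Real.rpow_natCast]; simp
    rw [this, ← Real.rpow_mul (by norm_num)]
    congr 1; ring
  rw [e1]
  gcongr
  have hexp : (2 : ℝ) ^ (2 * (1 / 2 : ℝ) ^ s * M)
      = Real.exp (Real.log 2 * (2 * (1 / 2 : ℝ) ^ s * M)) :=
    Real.rpow_def_of_pos (by norm_num) _
  rw [hexp]
  have hlog : (1 : ℝ) / 2 ≤ Real.log 2 := by linarith [Real.log_two_gt_d9]
  have hM : 0 ≤ M := le_trans (Nat.cast_nonneg _) hS
  calc (1 + (1 / 2 : ℝ) ^ s) ^ S.card ≤ (Real.exp ((1 / 2 : ℝ) ^ s)) ^ S.card := by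
        gcongr
        rw [add_comm]; exact Real.add_one_le_exp _
    _ = Real.exp (S.card * (1 / 2 : ℝ) ^ s) := by rw [← Real.exp_nat_mul]
    _ ≤ _ := by
        apply Real.exp_le_exp.2
        have : 0 ≤ (1 / 2 : ℝ) ^ s * M := by positivity
        nlinarith

/-! ### Encoding graphs by three sets of vertex pairs -/

/-- A graph is determined by its adjacencies on ordered pairs of `F`, `C`, `W`, provided these
sets contain every pair of distinct vertices in at least one order. On `W` one may record
instead the pairs where adjacency differs from a fixed pattern `B`. -/
lemma card_graphs_le {n : ℕ} (F C W : Finset (Fin n × Fin n)) (B : Fin n × Fin n → Prop)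
    (𝒢 : Finset (SimpleGraph (Fin n))) (tc tw : ℝ)
    (hcover : ∀ a b, a ≠ b → ((a, b) ∈ F ∨ (a, b) ∈ C ∨ (a, b) ∈ W) ∨
      ((b, a) ∈ F ∨ (b, a) ∈ C ∨ (b, a) ∈ W))
    (hC : ∀ G ∈ 𝒢, ((C.filter fun p => G.Adj p.1 p.2).card : ℝ) ≤ tc)
    (hW : ∀ G ∈ 𝒢, ((W.filter fun p => ¬ (G.Adj p.1 p.2 ↔ B p)).card : ℝ) ≤ tw) :
    𝒢.card ≤ 2 ^ F.card * ((C.powerset.filter fun T => (T.card : ℝ) ≤ tc).card *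
      (W.powerset.filter fun T => (T.card : ℝ) ≤ tw).card) := by
  rw [← Finset.card_powerset, ← Finset.card_product, ← Finset.card_product]
  refine Finset.card_le_card_of_injOn (fun G => (F.filter fun p => G.Adj p.1 p.2,
    C.filter fun p => G.Adj p.1 p.2, W.filter fun p => ¬ (G.Adj p.1 p.2 ↔ B p))) ?_ ?_
  · intro G hG
    simp only [Finset.coe_product, Set.mem_prod, Finset.mem_coe, Finset.mem_powerset,
      Finset.mem_filter]
    exact ⟨Finset.filter_subset _ _, ⟨Finset.filter_subset _ _, hC G hG⟩,
      Finset.filter_subset _ _, hW G hG⟩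
  · intro G _ H _ hGH
    simp only [Prod.mk.injEq, Finset.ext_iff, Finset.mem_filter] at hGH
    obtain ⟨h1, h2, h3⟩ := hGH
    have key : ∀ a b, ((a, b) ∈ F ∨ (a, b) ∈ C ∨ (a, b) ∈ W) → (G.Adj a b ↔ H.Adj a b) := by
      rintro a b (h | h | h)
      · have := h1 (a, b); simp only at this; tauto
      · have := h2 (a, b); simp only at this; tauto
      · have := h3 (a, b); simp only at this; tauto
    ext a b
    by_cases hab : a = b
    · subst hab; simp
    · rcases hcover a b hab with h | h
      · exact key a b h
      · rw [G.adj_comm, H.adj_comm]; exact key b a h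

/-! ### Vertex pairs lying over pairs of clusters -/

/-- The cluster with index `i` of the partition encoded by `f`; the exceptional class is the
fibre of `none`. -/
noncomputable def cluster {n k : ℕ} (f : Fin n → Option (Fin k)) (i : Fin k) : Finset (Fin n) :=
  univ.filter fun v => f v = some i

/-- The ordered vertex pairs whose clusters form a pair in `Q`. -/
noncomputable def pairsOver {n k : ℕ} (f : Fin n → Option (Fin k)) (Q : Finset (Fin k × Fin k)) :
    Finset (Fin n × Fin n) :=
  univ.filter fun p => ∃ q ∈ Q, f p.1 = some q.1 ∧ f p.2 = some q.2

lemma card_filter_pairsOver_le {n k : ℕ} (f : Fin n → Option (Fin k))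
    (Q : Finset (Fin k × Fin k)) (P : Fin n × Fin n → Prop) [DecidablePred P] (b : ℝ)
    (hb : ∀ q ∈ Q, (((cluster f q.1 ×ˢ cluster f q.2).filter P).card : ℝ) ≤ b) :
    (((pairsOver f Q).filter P).card : ℝ) ≤ Q.card * b := by
  have hsub : (pairsOver f Q).filter P ⊆
      Q.biUnion fun q => (cluster f q.1 ×ˢ cluster f q.2).filter P := by
    intro p hp
    simp only [pairsOver, Finset.mem_filter, Finset.mem_univ, true_and] at hp
    obtain ⟨⟨q, hq, h1, h2⟩, hP⟩ := hp
    simp only [Finset.mem_biUnion, Finset.mem_filter, Finset.mem_product, cluster,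
      Finset.mem_univ, true_and]
    exact ⟨q, hq, ⟨h1, h2⟩, hP⟩
  calc (((pairsOver f Q).filter P).card : ℝ)
      ≤ ((∑ q ∈ Q, ((cluster f q.1 ×ˢ cluster f q.2).filter P).card : ℕ) : ℝ) := by
        exact_mod_cast (Finset.card_le_card hsub).trans Finset.card_biUnion_le
    _ ≤ ∑ q ∈ Q, b := by rw [Nat.cast_sum]; exact Finset.sum_le_sum hb
    _ = Q.card * b := by simp

lemma card_pairsOver_le {n k : ℕ} (f : Fin n → Option (Fin k))
    (Q : Finset (Fin k × Fin k)) (m : ℕ) (hm : ∀ i, (cluster f i).card = m) :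
    ((pairsOver f Q).card : ℝ) ≤ Q.card * (m : ℝ) ^ 2 := by
  have := card_filter_pairsOver_le f Q (fun _ => True) ((m : ℝ) ^ 2) (fun q _ => by
    simp [Finset.card_product, hm, sq])
  simpa using this

/-- Edges over increasing cluster pairs are counted only once. -/
lemma card_edges_pairsOver_le {n k : ℕ} (f : Fin n → Option (Fin k))
    (Q : Finset (Fin k × Fin k)) (hQ : ∀ q ∈ Q, q.1 < q.2) (G : SimpleGraph (Fin n)) :
    ((pairsOver f Q).filter fun p => G.Adj p.1 p.2).card ≤ edgeCount G := by
  unfold edgeCount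
  rw [Nat.card_eq_fintype_card, ← SimpleGraph.edgeFinset_card]
  refine Finset.card_le_card_of_injOn (fun p => s(p.1, p.2)) ?_ ?_
  · intro p hp
    simpa using (Finset.mem_filter.1 hp).2
  · intro p hp p' hp' h
    simp only [pairsOver, Finset.coe_filter, Finset.mem_filter, Finset.mem_univ, true_and,
      Set.mem_ofPred_eq] at hp hp'
    obtain ⟨⟨q, hq, h1, h2⟩, -⟩ := hp
    obtain ⟨⟨q', hq', h1', h2'⟩, -⟩ := hp'
    rcases Sym2.eq_iff.1 h with ⟨e1, e2⟩ | ⟨e1, e2⟩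
    · exact Prod.ext e1 e2
    · exfalso
      rw [e1, h2'] at h1
      rw [e2, h1'] at h2
      have a1 := hQ q hq
      have a2 := hQ q' hq'
      rw [← Option.some.inj h1, ← Option.some.inj h2] at a1
      exact lt_asymm a1 a2

/-! ### Mantel's theorem for the grey edges -/

lemma card_grey_le {k : ℕ} (R : ColouredGraph k) (hR : ¬ R.HasGreyTriangle) :
    (((univ : Finset (Fin k × Fin k)).filter fun q =>
      q.1 < q.2 ∧ R.graph.Adj q.1 q.2 ∧ R.ecol q.1 q.2 = 1/2).card : ℝ) ≤ (k : ℝ) ^ 2 / 4 := by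
  let Γ : SimpleGraph (Fin k) :=
    { Adj := fun i j => R.graph.Adj i j ∧ R.ecol i j = 1/2
      symm := ⟨fun i j h => ⟨h.1.symm, by rw [R.ecol_symm]; exact h.2⟩⟩
      loopless := ⟨fun i h => h.1.ne rfl⟩ }
  have hfree : Γ.CliqueFree (2 + 1) := by
    intro s hs
    obtain ⟨a, b, e, hab, hae, hbe, -⟩ := SimpleGraph.is3Clique_iff.1 hs
    exact hR ⟨a, b, e, hab.1, hbe.1, hae.1, hab.2, hbe.2, hae.2⟩
  have h1 : ((univ : Finset (Fin k × Fin k)).filter fun q =>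
      q.1 < q.2 ∧ R.graph.Adj q.1 q.2 ∧ R.ecol q.1 q.2 = 1/2).card ≤ Γ.edgeFinset.card := by
    refine Finset.card_le_card_of_injOn (fun p => s(p.1, p.2)) ?_ ?_
    · intro p hp
      have := (Finset.mem_filter.1 hp).2
      simpa [Γ] using this.2
    · intro p hp p' hp' h
      have a1 := (Finset.mem_filter.1 hp).2.1
      have a2 := (Finset.mem_filter.1 hp').2.1
      rcases Sym2.eq_iff.1 h with ⟨e1, e2⟩ | ⟨e1, e2⟩
      · exact Prod.ext e1 e2
      · rw [e1, e2] at a1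
        exact absurd a1 (lt_asymm a2)
  have h2 := hfree.card_edgeFinset_le
  have h3 : (k % 2).choose 2 = 0 := Nat.choose_eq_zero_of_lt (Nat.mod_lt _ (by norm_num))
  simp only [Fintype.card_fin, h3] at h2
  have h4 : 4 * ((univ : Finset (Fin k × Fin k)).filter fun q =>
      q.1 < q.2 ∧ R.graph.Adj q.1 q.2 ∧ R.ecol q.1 q.2 = 1/2).card ≤ k ^ 2 := by omega
  have h5 : (4 : ℝ) * (((univ : Finset (Fin k × Fin k)).filter fun q =>
      q.1 < q.2 ∧ R.graph.Adj q.1 q.2 ∧ R.ecol q.1 q.2 = 1/2).card : ℝ) ≤ (k : ℝ) ^ 2 := by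
    exact_mod_cast h4
  linarith

/-! ### Graphs of a given type with a prescribed partition -/

/-- The consequences of `HasType` used in the count, for the partition encoded by `f`: a small
exceptional class, clusters of equal size, and extreme densities on white and black edges. -/
def FitsPartition {n k : ℕ} (R : ColouredGraph k) (ε d : ℝ) (f : Fin n → Option (Fin k))
    (G : SimpleGraph (Fin n)) : Prop :=
  (((univ.filter fun v => f v = none).card : ℝ) ≤ ε * n) ∧
  (∀ i j, (cluster f i).card = (cluster f j).card) ∧
  (∀ i j, R.graph.Adj i j → R.ecol i j = 0 → dens G (cluster f i) (cluster f j) < d) ∧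
  (∀ i j, R.graph.Adj i j → R.ecol i j = 1 → 1 - d < dens G (cluster f i) (cluster f j))

lemma exists_fitsPartition {n k : ℕ} (R : ColouredGraph k) (ε ε' d : ℝ) (k' : ℕ)
    (G : SimpleGraph (Fin n)) (h : HasType G ε ε' d k' R) :
    ∃ f : Fin n → Option (Fin k), FitsPartition R ε d f G := by
  obtain ⟨μ, -, V0, W, hdisj, hdisj0, hcov, hV0, hcard, -, -, hcol, -⟩ := h
  let f : Fin n → Option (Fin k) := fun v => if h : ∃ i, v ∈ W i then some h.choose else none
  have hf : ∀ v i, f v = some i ↔ v ∈ W i := by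
    intro v i
    by_cases hv : ∃ i, v ∈ W i
    · have hfv : f v = some hv.choose := dif_pos hv
      rw [hfv, Option.some_inj]
      refine ⟨fun e => e ▸ hv.choose_spec, fun hi => ?_⟩
      by_contra hne
      exact Finset.disjoint_left.1 (hdisj _ _ hne) hv.choose_spec hi
    · have hfv : f v = none := dif_neg hv
      rw [hfv]
      exact ⟨fun e => (Option.some_ne_none i e.symm).elim, fun hi => (hv ⟨i, hi⟩).elim⟩
  have hclu : ∀ i, cluster f i = W i := by
    intro i; ext v; simp [cluster, hf]
  refine ⟨f, ?_, ?_, ?_, ?_⟩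
  · refine le_trans ?_ hV0
    exact_mod_cast Finset.card_le_card fun v hv => by
      have hv1 : f v = none := (Finset.mem_filter.1 hv).2
      have hv2 : v ∈ V0 ∪ univ.biUnion W := by rw [hcov]; exact Finset.mem_univ v
      rcases Finset.mem_union.1 hv2 with h | h
      · exact h
      · obtain ⟨i, -, hi⟩ := Finset.mem_biUnion.1 h
        rw [(hf v i).2 hi] at hv1
        exact (Option.some_ne_none i hv1).elim
  · intro i j; rw [hclu, hclu]; exact hcard i j
  · intro i j hij h0
    rw [hclu, hclu]
    obtain ⟨-, c1, c2⟩ := hcol i j hij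
    by_contra hlt
    push Not at hlt
    rcases lt_or_ge (1 - d) (dens G (W i) (W j)) with h | h
    · have := c1 h; rw [h0] at this; norm_num at this
    · have := c2 hlt h; rw [h0] at this; norm_num at this
  · intro i j hij h1
    rw [hclu, hclu]
    obtain ⟨c0, -, c2⟩ := hcol i j hij
    by_contra hlt
    push Not at hlt
    rcases lt_or_ge (dens G (W i) (W j)) d with h | h
    · have := c0 h; rw [h1] at this; norm_num at this
    · have := c2 h hlt; rw [h1] at this; norm_num at this

lemma card_adj_le_of_dens_lt {n : ℕ} (G : SimpleGraph (Fin n)) (A B : Finset (Fin n)) (d : ℝ)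
    (m : ℕ) (hA : A.card = m) (hB : B.card = m) (h : dens G A B < d) :
    (((A ×ˢ B).filter fun p => G.Adj p.1 p.2).card : ℝ) ≤ d * (m : ℝ) ^ 2 := by
  rcases Nat.eq_zero_or_pos m with rfl | hm
  · rw [Finset.card_eq_zero] at hA; subst hA; simp
  · have hm' : (0 : ℝ) < m := by exact_mod_cast hm
    unfold _root_.dens at h
    rw [hA, hB, div_lt_iff₀ (by positivity)] at h
    rw [sq]; exact h.le

lemma card_nonadj_le_of_lt_dens {n : ℕ} (G : SimpleGraph (Fin n)) (A B : Finset (Fin n)) (d : ℝ)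
    (m : ℕ) (hA : A.card = m) (hB : B.card = m) (h : 1 - d < dens G A B) :
    (((A ×ˢ B).filter fun p => ¬ G.Adj p.1 p.2).card : ℝ) ≤ d * (m : ℝ) ^ 2 := by
  rcases Nat.eq_zero_or_pos m with rfl | hm
  · rw [Finset.card_eq_zero] at hA; subst hA; simp
  · have hm' : (0 : ℝ) < m := by exact_mod_cast hm
    unfold _root_.dens at h
    rw [hA, hB, lt_div_iff₀ (by positivity)] at h
    have h2 := Finset.card_filter_add_card_filter_not (s := A ×ˢ B) (fun p => G.Adj p.1 p.2)
    rw [Finset.card_product, hA, hB] at h2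
    have h3 : (((A ×ˢ B).filter fun p => G.Adj p.1 p.2).card : ℝ) +
      (((A ×ˢ B).filter fun p => ¬ G.Adj p.1 p.2).card : ℝ) = (m : ℝ) * m := by exact_mod_cast h2
    nlinarith

/-- The clusters partition the non-exceptional vertices. -/
lemma mul_card_cluster {n k : ℕ} (f : Fin n → Option (Fin k)) (m : ℕ)
    (hm : ∀ i, (cluster f i).card = m) :
    (univ.filter fun v => f v = none).card + k * m = n := by
  have h := Finset.card_eq_sum_card_fiberwise (s := (univ : Finset (Fin n))) (t := univ) (f := f)
    (fun _ _ => Finset.mem_coe.2 (Finset.mem_univ _))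
  rw [Fintype.sum_option] at h
  simp only [Finset.card_univ, Fintype.card_fin] at h
  have h2 : ∀ i, (univ.filter fun v => f v = some i).card = m := hm
  simp only [h2, Finset.sum_const, Finset.card_univ, Fintype.card_fin, smul_eq_mul] at h
  exact h.symm

lemma card_touching_le {n : ℕ} (A : Finset (Fin n)) :
    (((univ : Finset (Fin n × Fin n)).filter fun p => p.1 ∈ A ∨ p.2 ∈ A).card : ℝ)
      ≤ 2 * A.card * n := by
  have hsub : ((univ : Finset (Fin n × Fin n)).filter fun p => p.1 ∈ A ∨ p.2 ∈ A)
      ⊆ A ×ˢ univ ∪ univ ×ˢ A := by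
    intro p hp; simpa using hp
  have := (Finset.card_le_card hsub).trans (Finset.card_union_le _ _)
  simp only [Finset.card_product, Finset.card_univ, Fintype.card_fin] at this
  have h2 : (((univ : Finset (Fin n × Fin n)).filter fun p => p.1 ∈ A ∨ p.2 ∈ A).card : ℝ)
      ≤ A.card * n + n * A.card := by exact_mod_cast this
  linarith

/-- The count for a fixed partition. Pairs that touch the exceptional class, lie inside a cluster
or over a non-edge of `R` are free; pairs over grey edges carry at most `c * (n.choose 2)` edges;
over white and black edges only `d * n ^ 2` pairs disagree with the colour. -/
lemma card_fitsPartition_le {n k : ℕ} (hk : 0 < k) (R : ColouredGraph k) (c ε d : ℝ) (hc0 : 0 < c)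
    (hc1 : c ≤ 1/2) (hε : 0 < ε) (hd : 0 < d)
    (hR : (R.nonEdges : ℝ) ≤ ε * (k : ℝ) ^ 2) (hT : ¬ R.HasGreyTriangle) (s : ℕ)
    (f : Fin n → Option (Fin k)) :
    ((univ.filter fun G : SimpleGraph (Fin n) =>
        edgeCount G = ⌊c * (n.choose 2 : ℝ)⌋₊ ∧ FitsPartition R ε d f G).card : ℝ)
      ≤ (2 : ℝ) ^ ((3 * ε + 1 / k) * (n : ℝ) ^ 2 + (hfun c * (n.choose 2 : ℝ) + (n : ℝ) / 4) +
        (s * (d * (n : ℝ) ^ 2) + 2 * (1 / 2) ^ s * (n : ℝ) ^ 2)) := by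
  set 𝒢 := univ.filter fun G : SimpleGraph (Fin n) =>
        edgeCount G = ⌊c * (n.choose 2 : ℝ)⌋₊ ∧ FitsPartition R ε d f G with h𝒢
  rcases 𝒢.eq_empty_or_nonempty with h0 | ⟨G₀, hG₀⟩
  · rw [h0]; simp only [Finset.card_empty, Nat.cast_zero]; positivity
  obtain ⟨-, hnone, heq, -, -⟩ := (Finset.mem_filter.1 hG₀).2
  obtain ⟨m, hm⟩ : ∃ m, ∀ i, (cluster f i).card = m := ⟨_, fun i => heq i ⟨0, hk⟩⟩
  have hkR : (0 : ℝ) < k := by exact_mod_cast hk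
  have hkm : (k : ℝ) * m ≤ n := by
    have := mul_card_cluster f m hm
    exact_mod_cast (by omega : k * m ≤ n)
  have hkm2 : (k : ℝ) ^ 2 * (m : ℝ) ^ 2 ≤ (n : ℝ) ^ 2 := by
    rw [← mul_pow]; gcongr
  let QG : Finset (Fin k × Fin k) := univ.filter fun q =>
    q.1 < q.2 ∧ R.graph.Adj q.1 q.2 ∧ R.ecol q.1 q.2 = 1/2
  let QW : Finset (Fin k × Fin k) := univ.filter fun q =>
    q.1 < q.2 ∧ R.graph.Adj q.1 q.2 ∧ R.ecol q.1 q.2 ≠ 1/2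
  let QN : Finset (Fin k × Fin k) := univ.filter fun q =>
    q.1 < q.2 ∧ ¬ R.graph.Adj q.1 q.2
  let QD : Finset (Fin k × Fin k) := univ.filter fun q => q.1 = q.2
  let X : Finset (Fin n) := univ.filter fun v => f v = none
  let F : Finset (Fin n × Fin n) := (univ.filter fun p => p.1 ∈ X ∨ p.2 ∈ X) ∪
    (pairsOver f QD ∪ pairsOver f QN)
  obtain ⟨B, hB⟩ : ∃ B : Fin n × Fin n → Prop, ∀ p, B p ↔
      ∃ i j, f p.1 = some i ∧ f p.2 = some j ∧ R.ecol i j = 1 := ⟨_, fun _ => Iff.rfl⟩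
  have hF : (F.card : ℝ) ≤ (3 * ε + 1 / k) * (n : ℝ) ^ 2 := by
    have h1 : (F.card : ℝ) ≤ ((univ.filter fun p : Fin n × Fin n => p.1 ∈ X ∨ p.2 ∈ X).card : ℝ) +
        ((pairsOver f QD).card + (pairsOver f QN).card) := by
      exact_mod_cast (Finset.card_union_le _ _).trans
        (Nat.add_le_add_left (Finset.card_union_le _ _) _)
    have h2 := card_touching_le X
    have h3 := card_pairsOver_le f QD m hm
    have h4 := card_pairsOver_le f QN m hm
    have hQD : (QD.card : ℝ) ≤ k := by
      have : QD.card ≤ (univ : Finset (Fin k)).card :=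
        Finset.card_le_card_of_injOn Prod.fst (fun _ _ => by simp) (fun p hp p' hp' h => by
          have a1 : p.1 = p.2 := (Finset.mem_filter.1 hp).2
          have a2 : p'.1 = p'.2 := (Finset.mem_filter.1 hp').2
          exact Prod.ext h (by rw [← a1, ← a2]; exact h))
      simpa using (by exact_mod_cast this : (QD.card : ℝ) ≤ ((univ : Finset (Fin k)).card : ℝ))
    have hQN : (QN.card : ℝ) ≤ ε * (k : ℝ) ^ 2 := hR
    have h5 : 2 * (X.card : ℝ) * n ≤ 2 * ε * (n : ℝ) ^ 2 := by
      have : (X.card : ℝ) * n ≤ ε * n * n := by gcongr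
      nlinarith
    have h6 : (QD.card : ℝ) * (m : ℝ) ^ 2 ≤ 1 / k * (n : ℝ) ^ 2 := by
      calc (QD.card : ℝ) * (m : ℝ) ^ 2 ≤ k * (m : ℝ) ^ 2 := by gcongr
        _ = 1 / k * ((k : ℝ) ^ 2 * (m : ℝ) ^ 2) := by field_simp
        _ ≤ _ := by gcongr
    have h7 : (QN.card : ℝ) * (m : ℝ) ^ 2 ≤ ε * (n : ℝ) ^ 2 := by
      calc (QN.card : ℝ) * (m : ℝ) ^ 2 ≤ ε * (k : ℝ) ^ 2 * (m : ℝ) ^ 2 := by gcongr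
        _ = ε * ((k : ℝ) ^ 2 * (m : ℝ) ^ 2) := by ring
        _ ≤ _ := by gcongr
    linarith
  have hG : ((pairsOver f QG).card : ℝ) ≤ (n : ℝ) ^ 2 / 4 := by
    have h1 := card_pairsOver_le f QG m hm
    have h2 : (QG.card : ℝ) ≤ (k : ℝ) ^ 2 / 4 := card_grey_le R hT
    have h3 : (QG.card : ℝ) * (m : ℝ) ^ 2 ≤ (k : ℝ) ^ 2 / 4 * (m : ℝ) ^ 2 := by gcongr
    linarith
  have hQW : (QW.card : ℝ) ≤ (k : ℝ) ^ 2 := by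
    have : QW.card ≤ (univ : Finset (Fin k × Fin k)).card := Finset.card_filter_le _ _
    simp only [Finset.card_univ, Fintype.card_prod, Fintype.card_fin] at this
    rw [sq]; exact_mod_cast this
  have hW : ((pairsOver f QW).card : ℝ) ≤ (n : ℝ) ^ 2 := by
    have h1 := card_pairsOver_le f QW m hm
    have h3 : (QW.card : ℝ) * (m : ℝ) ^ 2 ≤ (k : ℝ) ^ 2 * (m : ℝ) ^ 2 := by gcongr
    linarith
  have hcount := card_graphs_le F (pairsOver f QG) (pairsOver f QW) B 𝒢
    (c * (n.choose 2 : ℝ)) (d * (n : ℝ) ^ 2) ?_ ?_ ?_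
  · have h1 : (2 : ℝ) ^ F.card ≤ (2 : ℝ) ^ ((3 * ε + 1 / k) * (n : ℝ) ^ 2) := by
      rw [← Real.rpow_natCast]
      exact Real.rpow_le_rpow_of_exponent_le (by norm_num) hF
    have h2 := card_grey_choices_le (pairsOver f QG) c hc0 hc1 n hG
    have h3 := card_error_choices_le (pairsOver f QW) (d * (n : ℝ) ^ 2) _ s hW
    rw [Real.rpow_add (by norm_num), Real.rpow_add (by norm_num), mul_assoc]
    refine (Nat.cast_le.2 hcount).trans ?_
    rw [Nat.cast_mul, Nat.cast_mul, Nat.cast_pow, Nat.cast_ofNat]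
    exact mul_le_mul h1 (mul_le_mul h2 h3 (by positivity) (by positivity)) (by positivity)
      (by positivity)
  -- Every vertex pair is free, or lies over a grey, white or black edge of `R` in some order.
  · have hlt : ∀ a b i j, f a = some i → f b = some j → i < j →
        (a, b) ∈ F ∨ (a, b) ∈ pairsOver f QG ∨ (a, b) ∈ pairsOver f QW := by
      intro a b i j ha hb hij
      have hover : ∀ Q : Finset (Fin k × Fin k), (i, j) ∈ Q → (a, b) ∈ pairsOver f Q :=
        fun Q hQ => Finset.mem_filter.2 ⟨Finset.mem_univ _, (i, j), hQ, ha, hb⟩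
      by_cases hadj : R.graph.Adj i j
      · by_cases hg : R.ecol i j = 1/2
        · exact Or.inr (Or.inl (hover QG (Finset.mem_filter.2 ⟨Finset.mem_univ _, hij, hadj, hg⟩)))
        · exact Or.inr (Or.inr (hover QW (Finset.mem_filter.2 ⟨Finset.mem_univ _, hij, hadj, hg⟩)))
      · exact Or.inl (Finset.mem_union_right _ (Finset.mem_union_right _
          (hover QN (Finset.mem_filter.2 ⟨Finset.mem_univ _, hij, hadj⟩))))
    intro a b _
    rcases ha : f a with _ | i
    · exact Or.inl (Or.inl (Finset.mem_union_left _ (Finset.mem_filter.2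
        ⟨Finset.mem_univ _, Or.inl (Finset.mem_filter.2 ⟨Finset.mem_univ _, ha⟩)⟩)))
    rcases hb : f b with _ | j
    · exact Or.inl (Or.inl (Finset.mem_union_left _ (Finset.mem_filter.2
        ⟨Finset.mem_univ _, Or.inr (Finset.mem_filter.2 ⟨Finset.mem_univ _, hb⟩)⟩)))
    rcases lt_trichotomy i j with h | h | h
    · exact Or.inl (hlt a b i j ha hb h)
    · exact Or.inl (Or.inl (Finset.mem_union_right _ (Finset.mem_union_left _
        (Finset.mem_filter.2 ⟨Finset.mem_univ _, (i, j),
          Finset.mem_filter.2 ⟨Finset.mem_univ _, h⟩, ha, hb⟩))))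
    · exact Or.inr (hlt b a j i hb ha h)
  · intro G hG𝒢
    have hE := (Finset.mem_filter.1 hG𝒢).2.1
    have h1 := card_edges_pairsOver_le f QG (fun q hq => (Finset.mem_filter.1 hq).2.1) G
    rw [hE] at h1
    exact (Nat.cast_le.2 h1).trans (Nat.floor_le (by positivity))
  · intro G hG𝒢
    obtain ⟨-, -, -, hwhite, hblack⟩ := (Finset.mem_filter.1 hG𝒢).2
    refine (card_filter_pairsOver_le f QW (fun p => ¬ (G.Adj p.1 p.2 ↔ B p))
      (d * (m : ℝ) ^ 2) ?_).trans ?_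
    · intro q hq
      obtain ⟨-, hadj, hng⟩ := (Finset.mem_filter.1 hq).2
      have hBq : ∀ p ∈ cluster f q.1 ×ˢ cluster f q.2, (B p ↔ R.ecol q.1 q.2 = 1) := by
        intro p hp
        obtain ⟨hp1, hp2⟩ := Finset.mem_product.1 hp
        have hp1 : f p.1 = some q.1 := (Finset.mem_filter.1 hp1).2
        have hp2 : f p.2 = some q.2 := (Finset.mem_filter.1 hp2).2
        rw [hB]
        constructor
        · rintro ⟨i, j, hi, hj, h⟩
          rw [hp1] at hi
          rw [hp2] at hj
          rw [Option.some.inj hi, Option.some.inj hj]; exact h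
        · exact fun h => ⟨_, _, hp1, hp2, h⟩
      rcases R.ecol_mem _ _ hadj with h | h | h
      · rw [Finset.filter_congr (q := fun p => G.Adj p.1 p.2) (fun p hp => by
          rw [hBq p hp, h]; norm_num)]
        exact card_adj_le_of_dens_lt G _ _ d m (hm _) (hm _) (hwhite _ _ hadj h)
      · exact (hng h).elim
      · rw [Finset.filter_congr (q := fun p => ¬ G.Adj p.1 p.2) (fun p hp => by
          rw [hBq p hp, h]; norm_num)]
        exact card_nonadj_le_of_lt_dens G _ _ d m (hm _) (hm _) (hblack _ _ hadj h)
    · calc (QW.card : ℝ) * (d * (m : ℝ) ^ 2) ≤ (k : ℝ) ^ 2 * (d * (m : ℝ) ^ 2) := by gcongr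
        _ = d * ((k : ℝ) ^ 2 * (m : ℝ) ^ 2) := by ring
        _ ≤ _ := by gcongr

/-- The number of partitions of `n` vertices into at most `n + 1` classes is `2 ^ o(n ^ 2)`. -/
lemma exists_pow_le (δ : ℝ) (hδ : 0 < δ) :
    ∃ n₁ : ℕ, ∀ n : ℕ, n₁ ≤ n → ((n : ℝ) + 1) ^ n ≤ (2 : ℝ) ^ (δ * (n : ℝ) ^ 2) := by
  have h2 : (1 : ℝ) < (2 : ℝ) ^ δ := Real.one_lt_rpow (by norm_num) hδ
  have h3 := tendsto_pow_const_div_const_pow_of_one_lt 1 h2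
  have h4 : ∀ᶠ n : ℕ in Filter.atTop, (n : ℝ) ^ 1 / ((2 : ℝ) ^ δ) ^ n < 1 / 2 :=
    h3.eventually_lt_const (by norm_num)
  obtain ⟨n₁, hn₁⟩ := Filter.eventually_atTop.1 h4
  refine ⟨max n₁ 1, fun n hn => ?_⟩
  have h5 := hn₁ n (le_trans (le_max_left _ _) hn)
  have hn1 : (1 : ℝ) ≤ n := by exact_mod_cast le_trans (le_max_right _ _) hn
  rw [pow_one, div_lt_iff₀ (by positivity)] at h5
  have h6 : (n : ℝ) + 1 ≤ ((2 : ℝ) ^ δ) ^ n := by linarith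
  calc ((n : ℝ) + 1) ^ n ≤ (((2 : ℝ) ^ δ) ^ n) ^ n := by gcongr
    _ = (2 : ℝ) ^ (δ * (n : ℝ) ^ 2) := by
      rw [← pow_mul, ← Real.rpow_natCast, ← Real.rpow_mul (by norm_num)]
      congr 1; push_cast; ring

/-- Counting lemma: for every `0 < c ≤ 1/2` and `γ > 0` there exist `ε₀, d₀ > 0` and integers
`n₀, k₀` such that for all `0 < d ≤ d₀`, `0 < ε ≤ ε₀`, `ε' > 0`, `n ≥ n₀`, `k ≥ k₀`, `k'`: if
`R` is a coloured graph on `k` vertices with at most `εk²` non-edges and no grey triangle, then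
`|ℛ(R,ε,ε',d,k',n,c)| ≤ 2^{(h(c)+γ)·C(n,2)}`. -/
theorem stmt12 (c γ : ℝ) (hc0 : 0 < c) (hc1 : c ≤ 1/2) (hγ : 0 < γ) :
    ∃ ε₀ d₀ : ℝ, ∃ n₀ k₀ : ℕ, 0 < ε₀ ∧ 0 < d₀ ∧
      ∀ d : ℝ, 0 < d → d ≤ d₀ → ∀ ε : ℝ, 0 < ε → ε ≤ ε₀ → ∀ ε' : ℝ, 0 < ε' →
      ∀ n : ℕ, n₀ ≤ n → ∀ k : ℕ, k₀ ≤ k → ∀ k' : ℕ, ∀ R : ColouredGraph k,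
        ((R.nonEdges : ℝ) ≤ ε * (k : ℝ)^2) → ¬ R.HasGreyTriangle →
        ((Rset R ε ε' d k' n c).card : ℝ) ≤ (2 : ℝ) ^ ((hfun c + γ) * (n.choose 2 : ℝ)) := by
  -- Each of the six error terms below gets a share `δ n ^ 2`, and `8 δ n ^ 2 ≤ γ * (n.choose 2)`.
  set δ : ℝ := γ / 32 with hδdef
  have hδ : 0 < δ := by positivity
  obtain ⟨s, hs⟩ : ∃ s : ℕ, ((1 : ℝ) / 2) ^ s < δ / 2 :=
    exists_pow_lt_of_lt_one (by positivity) (by norm_num)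
  obtain ⟨n₁, hn₁⟩ := exists_pow_le δ hδ
  obtain ⟨n₂, hn₂⟩ := exists_nat_ge (1 / (4 * δ))
  obtain ⟨k₁, hk₁⟩ := exists_nat_ge (1 / δ)
  refine ⟨min (1 / 2) (δ / 3), δ / (s + 1), max n₁ (max n₂ 2), max k₁ 1, by positivity,
    by positivity, ?_⟩
  intro d hd hd0 ε hε hε0 ε' _ n hn k hk k' R hR hT
  simp only [max_le_iff] at hn hk
  obtain ⟨hnn₁, hnn₂, hn2⟩ := hn
  obtain ⟨hkk₁, hk1⟩ := hk
  have hn2R : (2 : ℝ) ≤ n := by exact_mod_cast hn2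
  have hkR : (0 : ℝ) < k := by exact_mod_cast hk1
  rcases (Rset R ε ε' d k' n c).eq_empty_or_nonempty with h0 | ⟨G₀, hG₀⟩
  · rw [h0]; simp only [Finset.card_empty, Nat.cast_zero]; positivity
  -- The clusters are nonempty, so that `k ≤ n` although `n₀` is chosen before `k`.
  have hkn : k ≤ n := by
    obtain ⟨f, hnone, heq, -, -⟩ :=
      exists_fitsPartition R ε ε' d k' G₀ (Finset.mem_filter.1 hG₀).2.2
    obtain ⟨m, hm⟩ : ∃ m, ∀ i, (cluster f i).card = m := ⟨_, fun i => heq i ⟨0, hk1⟩⟩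
    have hsum := mul_card_cluster f m hm
    rcases Nat.eq_zero_or_pos m with rfl | hmpos
    · exfalso
      rw [mul_zero, add_zero] at hsum
      rw [hsum] at hnone
      have : ε ≤ 1 / 2 := hε0.trans (min_le_left _ _)
      nlinarith
    · calc k ≤ k * m := Nat.le_mul_of_pos_right k hmpos
        _ ≤ n := by omega
  set E : ℝ := (3 * ε + 1 / k) * (n : ℝ) ^ 2 + (hfun c * (n.choose 2 : ℝ) + (n : ℝ) / 4) +
        (s * (d * (n : ℝ) ^ 2) + 2 * (1 / 2) ^ s * (n : ℝ) ^ 2) with hE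
  have hcard : ((Rset R ε ε' d k' n c).card : ℝ) ≤ ((n : ℝ) + 1) ^ n * (2 : ℝ) ^ E := by
    have hsub : Rset R ε ε' d k' n c ⊆ (univ : Finset (Fin n → Option (Fin k))).biUnion fun f =>
        univ.filter fun G : SimpleGraph (Fin n) =>
          edgeCount G = ⌊c * (n.choose 2 : ℝ)⌋₊ ∧ FitsPartition R ε d f G := by
      intro G hG
      obtain ⟨-, hG1, hG2⟩ := Finset.mem_filter.1 hG
      obtain ⟨f, hf⟩ := exists_fitsPartition R ε ε' d k' G hG2
      exact Finset.mem_biUnion.2 ⟨f, Finset.mem_univ _,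
        Finset.mem_filter.2 ⟨Finset.mem_univ _, hG1, hf⟩⟩
    have h1 := (Finset.card_le_card hsub).trans Finset.card_biUnion_le
    calc ((Rset R ε ε' d k' n c).card : ℝ)
        ≤ ∑ f : Fin n → Option (Fin k), ((univ.filter fun G : SimpleGraph (Fin n) =>
          edgeCount G = ⌊c * (n.choose 2 : ℝ)⌋₊ ∧ FitsPartition R ε d f G).card : ℝ) := by
          exact_mod_cast h1
      _ ≤ ∑ _f : Fin n → Option (Fin k), (2 : ℝ) ^ E := Finset.sum_le_sum fun f _ =>
          card_fitsPartition_le hk1 R c ε d hc0 hc1 hε hd hR hT s f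
      _ = ((k : ℝ) + 1) ^ n * (2 : ℝ) ^ E := by simp
      _ ≤ _ := by gcongr
  calc ((Rset R ε ε' d k' n c).card : ℝ) ≤ ((n : ℝ) + 1) ^ n * (2 : ℝ) ^ E := hcard
    _ ≤ (2 : ℝ) ^ (δ * (n : ℝ) ^ 2) * (2 : ℝ) ^ E := by gcongr; exact hn₁ n hnn₁
    _ = (2 : ℝ) ^ (δ * (n : ℝ) ^ 2 + E) := (Real.rpow_add (by norm_num) _ _).symm
    _ ≤ _ := by
      apply Real.rpow_le_rpow_of_exponent_le (by norm_num)
      have hn0 : (0 : ℝ) ≤ (n : ℝ) ^ 2 := by positivity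
      have a1 : 3 * ε ≤ δ := by have := hε0.trans (min_le_right _ _); linarith
      have a2 : 1 / (k : ℝ) ≤ δ := by
        have hkk : 1 / δ ≤ (k : ℝ) := hk₁.trans (by exact_mod_cast hkk₁)
        rw [div_le_iff₀ hkR]; rw [div_le_iff₀ hδ] at hkk; linarith
      have a3 : (n : ℝ) / 4 ≤ δ * (n : ℝ) ^ 2 := by
        have hnn : 1 / (4 * δ) ≤ (n : ℝ) := hn₂.trans (by exact_mod_cast hnn₂)
        rw [div_le_iff₀ (by positivity)] at hnn
        nlinarith
      have a4 : s * d ≤ δ := by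
        rw [le_div_iff₀ (by positivity)] at hd0
        linarith
      have b1 : (3 * ε + 1 / k) * (n : ℝ) ^ 2 ≤ (2 * δ) * (n : ℝ) ^ 2 := by gcongr; linarith
      have b2 : s * (d * (n : ℝ) ^ 2) ≤ δ * (n : ℝ) ^ 2 := by rw [← mul_assoc]; gcongr
      have b3 : 2 * (1 / 2) ^ s * (n : ℝ) ^ 2 ≤ δ * (n : ℝ) ^ 2 := by gcongr; linarith
      have b4 : 8 * δ * (n : ℝ) ^ 2 ≤ γ * (n.choose 2 : ℝ) := by
        rw [Nat.cast_choose_two]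
        have : (n : ℝ) ^ 2 / 4 ≤ (n : ℝ) * (n - 1) / 2 := by nlinarith
        calc 8 * δ * (n : ℝ) ^ 2 = γ * ((n : ℝ) ^ 2 / 4) := by rw [hδdef]; ring
          _ ≤ _ := by gcongr
      have b5 : 0 ≤ δ * (n : ℝ) ^ 2 := by positivity
      rw [hE, add_mul]
      linarith
end

section
/- Let G be a graph on n vertices with hom(G) ≤ n/6. Then G contains ⌊n/6⌋ pairwise vertex-disjoint induced copies of P₃, or G contains ⌊n/6⌋ pairwise vertex-disjoint induced copies of the complement of P₃. -/
open Finset SimpleGraph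
open scoped Classical

/-!
Put `k = ⌊n/6⌋`, so that every homogeneous set has at most `k` vertices. Remove induced copies of
`P₃` greedily. If fewer than `k` are found, the remaining set `T` has at least `3k` vertices and
induces no `P₃`, so adjacency is transitive on `T`, which is thus a disjoint union of cliques.
Since independent sets have at most `k` vertices, `k` disjoint edges `aᵢbᵢ` can be chosen greedily
in `T`, leaving a set `W` of at least `k` vertices.

By Hall's theorem the edges can be matched to distinct vertices of `W` lying in other cliques: if
a set `I` of edges meets two cliques, every vertex of `W` is available to one of them; if all of
`I` lies in a single clique, then the `aᵢ` with `i ∈ I` together with the unavailable vertices of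
`W` form a clique, of size at most `k ≤ |W|`, so at least `|I|` vertices of `W` are available.
Each edge with its matched vertex induces the complement of `P₃`.
-/

/-- `hom(G)`: the maximum size of a homogeneous set of `G`, i.e. of a set of vertices inducing a
complete or an empty graph. -/
noncomputable def homNum {V : Type} [Fintype V] (G : SimpleGraph V) : ℕ :=
  sSup {m | ∃ s : Finset V, s.card = m ∧ (G.IsClique ↑s ∨ Gᶜ.IsClique ↑s)}
/-- `G` contains `m` pairwise vertex-disjoint induced copies of `F`. -/
def DisjointInducedCopies {V β : Type} (G : SimpleGraph V) (F : SimpleGraph β) (m : ℕ) : Prop :=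
  ∃ S : Fin m → Finset V, (∀ i j, i ≠ j → Disjoint (S i) (S j)) ∧
    ∀ i, Nonempty ((G.induce ↑(S i)) ≃g F)

/-- Greedy selection: either `R` contains `m` disjoint sets satisfying `P`, or some `T ⊆ R` contains
none. In the second case `T` is what remains of `R` after removing fewer than `m` such sets, each of
size `c`, which gives the bound on its size. -/
lemma greedy_disjoint {V : Type} [DecidableEq V] (P : Finset V → Prop) (c : ℕ)
    (hc : ∀ s, P s → s.card = c) (R : Finset V) (m : ℕ) :
    (∃ S : Fin m → Finset V, (∀ i j, i ≠ j → Disjoint (S i) (S j)) ∧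
      ∀ i, P (S i) ∧ S i ⊆ R) ∨
    ∃ T ⊆ R, (∀ s ⊆ T, ¬ P s) ∧ R.card + c ≤ T.card + c * m := by
  induction m with
  | zero => exact Or.inl ⟨fun i => i.elim0, fun i => i.elim0, fun i => i.elim0⟩
  | succ m ih =>
    rcases ih with ⟨S, hd, hS⟩ | ⟨T, hTR, hT, hcard⟩
    · by_cases hex : ∃ s ⊆ R \ univ.biUnion S, P s
      · obtain ⟨s, hs, hPs⟩ := hex
        have hsd : ∀ i, Disjoint s (S i) := fun i =>
          Finset.disjoint_left.2 fun x hx hxi =>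
            (mem_sdiff.1 (hs hx)).2 (mem_biUnion.2 ⟨i, mem_univ _, hxi⟩)
        refine Or.inl ⟨Fin.cons s S, ?_, ?_⟩
        · intro i j
          refine Fin.cases ?_ (fun i => ?_) i <;> refine Fin.cases ?_ (fun j => ?_) j
          · simp
          · intro _; simpa using hsd j
          · intro _; simpa using (hsd i).symm
          · intro hij; simpa using hd i j (fun e => hij (by rw [e]))
        · intro i
          refine Fin.cases ?_ (fun i => ?_) i
          · simpa using ⟨hPs, hs.trans sdiff_subset⟩
          · simpa using hS i
      · push Not at hex
        refine Or.inr ⟨R \ univ.biUnion S, sdiff_subset, hex, ?_⟩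
        have h1 : (univ.biUnion S).card ≤ c * m := by
          refine card_biUnion_le.trans ?_
          rw [Finset.sum_congr rfl fun i _ => hc _ (hS i).1]
          simp [mul_comm]
        have h2 := Finset.le_card_sdiff (univ.biUnion S) R
        rw [mul_add]
        omega
    · exact Or.inr ⟨T, hTR, hT, by rw [mul_add]; omega⟩

lemma nonempty_iso_of_adj_iff {V : Type} [DecidableEq V] (G : SimpleGraph V)
    (F : SimpleGraph (Fin 3))
    (x y z : V) (hxy : x ≠ y) (hyz : y ≠ z) (hxz : x ≠ z)
    (h01 : G.Adj x y ↔ F.Adj 0 1) (h12 : G.Adj y z ↔ F.Adj 1 2) (h02 : G.Adj x z ↔ F.Adj 0 2) :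
    Nonempty ((G.induce (↑({x, y, z} : Finset V) : Set V)) ≃g F) := by
  have hinj : Function.Injective ![x, y, z] := by
    intro i j
    fin_cases i <;> fin_cases j <;> simp [hxy, hyz, hxz, hxy.symm, hyz.symm, hxz.symm]
  have hr : Set.range ![x, y, z] = (↑({x, y, z} : Finset V) : Set V) := by
    ext v; simp [eq_comm]; tauto
  rw [← hr]
  refine ⟨RelIso.symm ⟨Equiv.ofInjective _ hinj, ?_⟩⟩
  intro i j
  fin_cases i <;> fin_cases j <;>
    simp [h01, h12, h02, G.adj_comm y x, G.adj_comm z x, G.adj_comm z y,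
      F.adj_comm 1 0, F.adj_comm 2 0, F.adj_comm 2 1]

lemma nonempty_iso_path {V : Type} [DecidableEq V] (G : SimpleGraph V) (x y z : V) (hxz : x ≠ z)
    (h1 : G.Adj x y) (h2 : G.Adj y z) (h3 : ¬ G.Adj x z) :
    Nonempty ((G.induce (↑({x, y, z} : Finset V) : Set V)) ≃g pathGraph 3) := by
  apply nonempty_iso_of_adj_iff G _ x y z h1.ne h2.ne hxz <;>
    simp [h1, h2, h3, pathGraph_adj]

lemma nonempty_iso_path_compl {V : Type} [DecidableEq V] (G : SimpleGraph V) (x y z : V)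
    (hxy : x ≠ y) (hyz : y ≠ z) (h1 : ¬ G.Adj x y) (h2 : ¬ G.Adj y z) (h3 : G.Adj x z) :
    Nonempty ((G.induce (↑({x, y, z} : Finset V) : Set V)) ≃g (pathGraph 3)ᶜ) := by
  apply nonempty_iso_of_adj_iff G _ x y z hxy hyz h3.ne <;>
    simp [h1, h2, h3, pathGraph_adj]

lemma card_le_homNum {V : Type} [Fintype V] (G : SimpleGraph V) (s : Finset V)
    (hs : G.IsClique ↑s ∨ Gᶜ.IsClique ↑s) : s.card ≤ homNum G := by
  refine le_csSup ⟨Fintype.card V, ?_⟩ ⟨s, rfl, hs⟩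
  rintro m ⟨t, rfl, -⟩
  exact card_le_univ t

/-- The matching step, by Hall's theorem: `T` carries no induced `P₃`, expressed as transitivity of
adjacency, and cliques have at most `k` vertices. Then `k` distinct vertices `a i` of `T` can be
matched to distinct non-neighbours in any `W ⊆ T` that avoids them and has at least `k` vertices. -/
lemma exists_matching {V : Type} [DecidableEq V] (G : SimpleGraph V) (T W : Finset V) (k : ℕ)
    (htr : ∀ x ∈ T, ∀ y ∈ T, ∀ z ∈ T, x ≠ z → G.Adj x y → G.Adj y z → G.Adj x z)
    (hcl : ∀ s : Finset V, G.IsClique ↑s → s.card ≤ k)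
    (a : Fin k → V) (ha : ∀ i, a i ∈ T) (hinj : Function.Injective a)
    (hWT : W ⊆ T) (haW : ∀ i, a i ∉ W) (hW : k ≤ W.card) :
    ∃ f : Fin k → V, Function.Injective f ∧ ∀ i, f i ∈ W ∧ ¬ G.Adj (a i) (f i) := by
  have key : ∀ I : Finset (Fin k),
      I.card ≤ (I.biUnion fun i => W.filter fun w => ¬ G.Adj (a i) w).card := by
    intro I
    have hIk : I.card ≤ k := by simpa using card_le_univ I
    rcases I.eq_empty_or_nonempty with rfl | ⟨i₀, hi₀⟩
    · simp
    by_cases hI : ∃ i ∈ I, i ≠ i₀ ∧ ¬ G.Adj (a i) (a i₀)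
    · obtain ⟨i, hi, hne, hadj⟩ := hI
      refine hIk.trans (hW.trans (card_le_card fun w hw => ?_))
      rw [mem_biUnion]
      by_contra hcon
      push Not at hcon
      have h1 := hcon i hi
      have h2 := hcon i₀ hi₀
      simp only [mem_filter, hw, true_and, not_not] at h1 h2
      exact hadj (htr _ (ha i) w (hWT hw) _ (ha i₀) (fun e => hne (hinj e)) h1 h2.symm)
    · push Not at hI
      have hmem : ∀ x ∈ I.image a ∪ W.filter (fun w => G.Adj (a i₀) w),
          x ∈ T ∧ (x = a i₀ ∨ G.Adj x (a i₀)) := by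
        intro x hx
        rcases mem_union.1 hx with hx | hx
        · obtain ⟨i, hi, rfl⟩ := mem_image.1 hx
          refine ⟨ha i, ?_⟩
          by_cases e : i = i₀
          · exact Or.inl (by rw [e])
          · exact Or.inr (hI i hi e)
        · exact ⟨hWT (mem_filter.1 hx).1, Or.inr (mem_filter.1 hx).2.symm⟩
      have hclique := hcl (I.image a ∪ W.filter (fun w => G.Adj (a i₀) w)) (by
        intro x hx y hy hxy
        obtain ⟨hxT, hx⟩ := hmem x hx
        obtain ⟨hyT, hy⟩ := hmem y hy
        rcases hx with rfl | hx
        · rcases hy with rfl | hy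
          · exact absurd rfl hxy
          · exact hy.symm
        · rcases hy with rfl | hy
          · exact hx
          · exact htr x hxT _ (ha i₀) y hyT hxy hx hy.symm)
      have hdisj : Disjoint (I.image a) (W.filter (fun w => G.Adj (a i₀) w)) := by
        rw [Finset.disjoint_left]
        intro x hx hx'
        obtain ⟨i, hi, rfl⟩ := mem_image.1 hx
        exact haW i (mem_filter.1 hx').1
      rw [card_union_of_disjoint hdisj, card_image_of_injective _ hinj] at hclique
      have hsplit := card_filter_add_card_filter_not (s := W) (fun w => G.Adj (a i₀) w)
      have hle : (W.filter fun w => ¬ G.Adj (a i₀) w).card ≤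
          (I.biUnion fun i => W.filter fun w => ¬ G.Adj (a i) w).card :=
        card_le_card (subset_biUnion_of_mem (fun i => W.filter fun w => ¬ G.Adj (a i) w) hi₀)
      omega
  obtain ⟨f, hf, hf'⟩ := (Finset.all_card_le_biUnion_card_iff_exists_injective _).1 key
  exact ⟨f, hf, fun i => mem_filter.1 (hf' i)⟩

/-- If `G` is a graph on `n` vertices with `hom(G) ≤ n/6`, then `G` contains `⌊n/6⌋` pairwise
vertex-disjoint induced copies of `P₃` or `⌊n/6⌋` pairwise vertex-disjoint induced copies of the
complement of `P₃`. -/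
theorem stmt13 (n : ℕ) (G : SimpleGraph (Fin n)) (h : (homNum G : ℝ) ≤ (n : ℝ) / 6) :
    DisjointInducedCopies G (pathGraph 3) (n / 6) ∨
    DisjointInducedCopies G (pathGraph 3)ᶜ (n / 6) := by
  have hk : homNum G ≤ n / 6 := by
    rw [Nat.le_div_iff_mul_le (by norm_num)]
    have : (homNum G : ℝ) * 6 ≤ n := by linarith
    exact_mod_cast this
  have h6 : 6 * (n / 6) ≤ n := Nat.mul_div_le n 6
  generalize n / 6 = k at hk h6 ⊢
  have hcard3 : ∀ s : Finset (Fin n), Nonempty ((G.induce (↑s : Set (Fin n))) ≃g pathGraph 3) →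
      s.card = 3 := by
    rintro s ⟨e⟩
    simpa using Fintype.card_congr e.toEquiv
  rcases greedy_disjoint (fun s : Finset (Fin n) =>
      Nonempty ((G.induce (↑s : Set (Fin n))) ≃g pathGraph 3)) 3 hcard3
      univ k with
    ⟨S, hd, hS⟩ | ⟨T, -, hT, hTc⟩
  · exact Or.inl ⟨S, hd, fun i => (hS i).1⟩
  right
  rw [card_univ, Fintype.card_fin] at hTc
  have htr : ∀ x ∈ T, ∀ y ∈ T, ∀ z ∈ T, x ≠ z → G.Adj x y → G.Adj y z → G.Adj x z := by
    intro x hx y hy z hz hxz h1 h2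
    by_contra h3
    refine hT {x, y, z} ?_ (nonempty_iso_path G x y z hxz h1 h2 h3)
    simp [insert_subset_iff, hx, hy, hz]
  have hcard2 : ∀ s : Finset (Fin n), (∃ a b, G.Adj a b ∧ s = {a, b}) → s.card = 2 := by
    rintro s ⟨a, b, hab, rfl⟩
    exact card_pair hab.ne
  rcases greedy_disjoint (fun s : Finset (Fin n) => ∃ a b, G.Adj a b ∧ s = {a, b}) 2 hcard2
      T k with
    ⟨S, hd, hS⟩ | ⟨U, -, hU, hUc⟩
  swap
  · have := card_le_homNum G U (Or.inr (by
      intro x hx y hy hxy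
      rw [compl_adj]
      refine ⟨hxy, fun hadj => hU {x, y} ?_ ⟨x, y, hadj, rfl⟩⟩
      simpa [insert_subset_iff] using ⟨hx, hy⟩))
    omega
  choose hP hST using hS
  choose a b hab hSab using hP
  have haS : ∀ i, a i ∈ S i := fun i => by rw [hSab i]; simp
  have hbS : ∀ i, b i ∈ S i := fun i => by rw [hSab i]; simp
  have hWS : ∀ w ∈ T \ univ.biUnion S, ∀ i, w ∉ S i := fun w hw i hwi =>
    (mem_sdiff.1 hw).2 (mem_biUnion.2 ⟨i, mem_univ _, hwi⟩)
  obtain ⟨f, hf, hfW⟩ := exists_matching G T (T \ univ.biUnion S) k htr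
    (fun s hs => (card_le_homNum G s (Or.inl hs)).trans hk) a (fun i => hST i (haS i))
    (by
      intro i j hij
      by_contra hne
      exact Finset.disjoint_left.1 (hd i j hne) (haS i) (by rw [hij]; exact haS j))
    sdiff_subset (fun i hi => hWS _ hi i (haS i))
    (by
      have h1 : (univ.biUnion S).card ≤ 2 * k := by
        refine card_biUnion_le.trans ?_
        rw [Finset.sum_congr rfl fun i _ => hcard2 (S i) ⟨a i, b i, hab i, hSab i⟩]
        simp [mul_comm]
      have h2 := Finset.le_card_sdiff (univ.biUnion S) T
      omega)
  have hfS : ∀ i j, f i ∉ S j := fun i j => hWS _ (hfW i).1 j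
  refine ⟨fun i => {a i, f i, b i}, ?_, ?_⟩
  · intro i j hij
    have hsub : ∀ i, ({a i, f i, b i} : Finset (Fin n)) = insert (f i) (S i) := by
      intro i
      rw [hSab i, Finset.insert_comm]
    simp only [hsub, disjoint_insert_left, disjoint_insert_right, mem_insert, not_or]
    exact ⟨⟨fun e => hij (hf e.symm), hfS j i⟩, hfS i j, hd i j hij⟩
  · intro i
    have hfT := (mem_sdiff.1 (hfW i).1).1
    have hne : a i ≠ f i := fun e => hfS i i (e ▸ haS i)
    refine nonempty_iso_path_compl G _ _ _ hne
      (fun e => hfS i i (by rw [e]; exact hbS i)) (hfW i).2 ?_ (hab i)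
    -- otherwise `a i, b i, f i` would induce a `P₃` inside `T`
    intro hadj
    exact (hfW i).2 (htr _ (hST i (haS i)) _ (hST i (hbS i)) _ hfT hne (hab i) hadj.symm)
end

section
/- For every real c₀ with 0 < c₀ ≤ 1/2 there is an n₀ such that for all reals c with c₀ ≤ 2c ≤ 1−c₀ and all n ≥ n₀ the following holds. Let G₁ = (V₁,E₁) and G₂ = (V₂,E₂) be two n-vertex graphs, each of which contains ⌊n/6⌋ pairwise vertex-disjoint induced copies of P₃ or ⌊n/6⌋ pairwise vertex-disjoint induced copies of the complement of P₃, and let G = (V₁ ∪ V₂, E₁ ∪ E₂) be their disjoint union. Then the number of edge sets of size exactly ⌊2cn²⌋ consisting of pairs with one endpoint in V₁ and one in V₂ whose addition to G creates no induced cycle of length 5 is at most 2^{2n²(h(c) − r(c))}. -/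
/-!
Put `q = min (2c) (1/2)` and let every cross pair be present independently with probability `q`.
A set of `m = ⌊2cn²⌋` pairs has probability `q ^ m * (1 - q) ^ (n² - m)`, which is at least
`2 ^ (-2 n² h(c))` (for `2c ≤ 1/2` rounding `2cn²` down only helps). So it is enough to bound the
probability that no induced `C₅` arises by `2 ^ (-n² q⁴(1-q)⁴ / 36)`.

Let `S` be one of the given triples in `G₁` and `T` one in `G₂`. Five vertices of `S ∪ T` can always
be completed to an induced `C₅` by prescribing six cross pairs (`exists_block`): if `S` induces a
`P₃`, close it up through an edge of `T`; if `S` induces an edge plus an isolated vertex, use a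
nonadjacent pair of `T`. Hence with probability at least `q⁴(1-q)⁴` the pair `(S, T)` yields an
induced `C₅`, and the `⌊n/6⌋²` events are independent because the blocks of pairs are disjoint
(`sum_avoid`). Thus the probability of no induced `C₅` is at most `(1 - q⁴(1-q)⁴) ^ ⌊n/6⌋²`, and
`1 - x ≤ exp (-x)` together with `log 2 < 0.7` absorbs the rounding once `n ≥ 60`.
-/

open Finset SimpleGraph
open scoped Classical

/-- `G` contains an induced cycle of length 5, i.e. an induced copy of `C₅`. -/
def HasInducedC5 {V : Type} (G : SimpleGraph V) : Prop :=
  Nonempty (SimpleGraph.cycleGraph 5 ↪g G)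
/-- The function `r(c)` from the paper, with `R(x) = x⁴(1−x)⁴`. -/
noncomputable def rfun (c : ℝ) : ℝ :=
  (1/72) * (if c < 1/4 then (2*c)^4 * (1-2*c)^4
            else if c ≤ 3/4 then (1/4)^4
            else (2*c-1)^4 * (1-(2*c-1))^4)

/-- The disjoint union of `G₁` and `G₂` together with the cross edges in `E` added between the
two sides. -/
def addCross {n : ℕ} (G₁ G₂ : SimpleGraph (Fin n)) (E : Finset (Fin n × Fin n)) :
    SimpleGraph (Fin n ⊕ Fin n) :=
  SimpleGraph.fromRel (fun x y => match x, y with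
    | Sum.inl a, Sum.inl b => G₁.Adj a b
    | Sum.inr a, Sum.inr b => G₂.Adj a b
    | Sum.inl a, Sum.inr b => (a, b) ∈ E
    | Sum.inr _, Sum.inl _ => False)

/-! ### Avoiding prescribed patterns on disjoint blocks -/

/-- The probability that a `q`-random subset of `α` meets `C` exactly in `D`. -/
lemma sum_inter_eq {α : Type*} [Fintype α] [DecidableEq α] (q : ℝ) (C D : Finset α) (hD : D ⊆ C) :
    ∑ E ∈ (univ : Finset (Finset α)).filter (fun E => E ∩ C = D),
      q ^ E.card * (1 - q) ^ (Eᶜ).card = q ^ D.card * (1 - q) ^ (C \ D).card := by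
  have h1 := Finset.sum_pow_mul_eq_add_pow q (1 - q) Cᶜ
  have h2 : ∑ E ∈ (univ : Finset (Finset α)).filter (fun E => E ∩ C = D),
      q ^ E.card * (1 - q) ^ (Eᶜ).card
      = ∑ t ∈ (Cᶜ).powerset, (q ^ D.card * (1 - q) ^ (C \ D).card) *
          (q ^ t.card * (1 - q) ^ ((Cᶜ).card - t.card)) := by
    symm
    refine Finset.sum_bij (fun t _ => D ∪ t) ?_ ?_ ?_ ?_
    · intro t ht
      rw [Finset.mem_powerset] at ht
      simp only [Finset.mem_filter, Finset.mem_univ, true_and]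
      ext a
      have := @ht a
      have := @hD a
      simp only [Finset.mem_compl] at *
      simp only [Finset.mem_inter, Finset.mem_union]
      tauto
    · intro s hs t ht hst
      rw [Finset.mem_powerset] at hs ht
      ext a
      have h := Finset.ext_iff.1 hst a
      have := @hs a
      have := @ht a
      have := @hD a
      simp only [Finset.mem_compl, Finset.mem_union] at *
      tauto
    · intro E hE
      simp only [Finset.mem_filter, Finset.mem_univ, true_and] at hE
      refine ⟨E \ C, ?_, ?_⟩
      · rw [Finset.mem_powerset]
        intro a ha
        simp only [Finset.mem_compl, Finset.mem_sdiff] at *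
        exact ha.2
      · rw [← hE]
        ext a
        simp only [Finset.mem_union, Finset.mem_inter, Finset.mem_sdiff]
        tauto
    · intro t ht
      rw [Finset.mem_powerset] at ht
      have hd : Disjoint D t := by
        rw [Finset.disjoint_left]
        intro a ha hat
        exact (Finset.mem_compl.1 (ht hat)) (hD ha)
      have hc : (D ∪ t)ᶜ = (C \ D) ∪ (Cᶜ \ t) := by
        ext a
        have := @ht a
        have := @hD a
        simp only [Finset.mem_compl, Finset.mem_union, Finset.mem_sdiff] at *
        tauto
      have hd2 : Disjoint (C \ D) (Cᶜ \ t) := by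
        rw [Finset.disjoint_left]
        intro a ha hat
        simp only [Finset.mem_compl, Finset.mem_sdiff] at *
        tauto
      rw [hc, Finset.card_union_of_disjoint hd, Finset.card_union_of_disjoint hd2,
        Finset.card_sdiff_of_subset ht, pow_add, pow_add]
      ring
  rw [h2, ← Finset.mul_sum, h1]
  simp

/-- Independence over disjoint blocks. The pattern `(C, D)` is carried along so that the induction
on `I` closes: by complementation, avoiding `F i` on `B i` reduces to prescribing it there, which
only enlarges `(C, D)`. -/
lemma sum_avoid {α ι : Type*} [Fintype α] [DecidableEq α] (q : ℝ)
    (B F : ι → Finset α)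
    (hF : ∀ i, F i ⊆ B i) (hB : ∀ i j, i ≠ j → Disjoint (B i) (B j)) (I : Finset ι) :
    ∀ C D : Finset α, D ⊆ C → (∀ i ∈ I, Disjoint C (B i)) →
    ∑ E ∈ (univ : Finset (Finset α)).filter (fun E => E ∩ C = D ∧ ∀ i ∈ I, E ∩ B i ≠ F i),
      q ^ E.card * (1 - q) ^ (Eᶜ).card
      = q ^ D.card * (1 - q) ^ (C \ D).card *
        ∏ i ∈ I, (1 - q ^ (F i).card * (1 - q) ^ (B i \ F i).card) := by
  induction I using Finset.induction_on with
  | empty =>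
    intro C D hD _
    simpa using sum_inter_eq q C D hD
  | insert i I hi ih =>
    intro C D hD hC
    have hCi : Disjoint C (B i) := hC i (Finset.mem_insert_self _ _)
    have hCI : ∀ j ∈ I, Disjoint C (B j) := fun j hj => hC j (Finset.mem_insert_of_mem hj)
    have e1 := ih C D hD hCI
    have e2 := ih (C ∪ B i) (D ∪ F i) (Finset.union_subset_union hD (hF i)) (by
      intro j hj
      rw [Finset.disjoint_union_left]
      refine ⟨hCI j hj, hB i j ?_⟩
      rintro rfl
      exact hi hj)
    have hDF : Disjoint D (F i) := Finset.disjoint_of_subset_left hD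
      (Finset.disjoint_of_subset_right (hF i) hCi)
    have hsd : (C ∪ B i) \ (D ∪ F i) = (C \ D) ∪ (B i \ F i) := by
      ext a
      have := @hD a
      have : a ∈ F i → a ∈ B i := fun h => hF i h
      have := fun h : a ∈ C => Finset.disjoint_left.1 hCi h
      simp only [Finset.mem_union, Finset.mem_sdiff]
      tauto
    have hsdd : Disjoint (C \ D) (B i \ F i) :=
      Finset.disjoint_of_subset_left Finset.sdiff_subset
        (Finset.disjoint_of_subset_right Finset.sdiff_subset hCi)
    have hpat : ∀ E : Finset α, E ∩ (C ∪ B i) = D ∪ F i ↔ (E ∩ C = D ∧ E ∩ B i = F i) := by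
      intro E
      constructor
      · intro h
        constructor <;>
        · ext a
          have h1 := Finset.ext_iff.1 h a
          have := @hD a
          have : a ∈ F i → a ∈ B i := fun h => hF i h
          have := fun h : a ∈ C => Finset.disjoint_left.1 hCi h
          simp only [Finset.mem_union, Finset.mem_inter] at *
          tauto
      · rintro ⟨h1, h2⟩
        rw [Finset.inter_union_distrib_left, h1, h2]
    have hsplit := Finset.sum_filter_add_sum_filter_not
      ((univ : Finset (Finset α)).filter (fun E => E ∩ C = D ∧ ∀ j ∈ I, E ∩ B j ≠ F j))
      (fun E => E ∩ B i = F i) (fun E => q ^ E.card * (1 - q) ^ (Eᶜ).card)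
    rw [Finset.filter_filter, Finset.filter_filter, e1] at hsplit
    have g1 : (univ : Finset (Finset α)).filter
          (fun E => (E ∩ C = D ∧ ∀ j ∈ I, E ∩ B j ≠ F j) ∧ E ∩ B i = F i)
        = (univ : Finset (Finset α)).filter
          (fun E => E ∩ (C ∪ B i) = D ∪ F i ∧ ∀ j ∈ I, E ∩ B j ≠ F j) := by
      apply Finset.filter_congr
      intro E _
      rw [hpat E]
      tauto
    have g2 : (univ : Finset (Finset α)).filter
          (fun E => (E ∩ C = D ∧ ∀ j ∈ I, E ∩ B j ≠ F j) ∧ ¬ E ∩ B i = F i)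
        = (univ : Finset (Finset α)).filter
          (fun E => E ∩ C = D ∧ ∀ j ∈ insert i I, E ∩ B j ≠ F j) := by
      apply Finset.filter_congr
      intro E _
      rw [Finset.forall_mem_insert]
      tauto
    rw [g1, g2, e2, hsd, Finset.card_union_of_disjoint hDF,
      Finset.card_union_of_disjoint hsdd, pow_add, pow_add] at hsplit
    rw [Finset.prod_insert hi]
    linear_combination hsplit

/-! ### Building an induced `C₅` from two triples -/

section addCross

variable {n : ℕ} (G₁ G₂ : SimpleGraph (Fin n)) (E : Finset (Fin n × Fin n)) (a b : Fin n)

@[simp] lemma addCross_ll : (addCross G₁ G₂ E).Adj (Sum.inl a) (Sum.inl b) ↔ G₁.Adj a b := by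
  simp only [addCross, SimpleGraph.fromRel_adj, G₁.adj_comm b a, or_self, ne_eq, Sum.inl.injEq]
  exact ⟨fun h => h.2, fun h => ⟨h.ne, h⟩⟩

@[simp] lemma addCross_rr : (addCross G₁ G₂ E).Adj (Sum.inr a) (Sum.inr b) ↔ G₂.Adj a b := by
  simp only [addCross, SimpleGraph.fromRel_adj, G₂.adj_comm b a, or_self, ne_eq, Sum.inr.injEq]
  exact ⟨fun h => h.2, fun h => ⟨h.ne, h⟩⟩

@[simp] lemma addCross_lr : (addCross G₁ G₂ E).Adj (Sum.inl a) (Sum.inr b) ↔ (a, b) ∈ E := by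
  simp [addCross]

@[simp] lemma addCross_rl : (addCross G₁ G₂ E).Adj (Sum.inr a) (Sum.inl b) ↔ (b, a) ∈ E := by
  simp [addCross]

end addCross

/-- Injectivity need not be assumed: no two distinct vertices of `C₅` have the same neighbours. -/
lemma hasInducedC5_of {V : Type} (G : SimpleGraph V) (v₀ v₁ v₂ v₃ v₄ : V)
    (h01 : G.Adj v₀ v₁) (h12 : G.Adj v₁ v₂) (h23 : G.Adj v₂ v₃) (h34 : G.Adj v₃ v₄)
    (h40 : G.Adj v₄ v₀) (h02 : ¬ G.Adj v₀ v₂) (h13 : ¬ G.Adj v₁ v₃) (h24 : ¬ G.Adj v₂ v₄)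
    (h30 : ¬ G.Adj v₃ v₀) (h41 : ¬ G.Adj v₄ v₁) : HasInducedC5 G := by
  have hadj : ∀ i j : Fin 5, G.Adj (![v₀, v₁, v₂, v₃, v₄] i) (![v₀, v₁, v₂, v₃, v₄] j) ↔
      (SimpleGraph.cycleGraph 5).Adj i j := by
    intro i j
    fin_cases i <;> fin_cases j <;>
      simp [SimpleGraph.cycleGraph_adj, h01, h12, h23, h34, h40, h02, h13, h24, h30, h41,
        h01.symm, h12.symm, h23.symm, h34.symm, h40.symm, mt (G.symm.symm _ _) h02, mt (G.symm.symm _ _) h13,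
        mt (G.symm.symm _ _) h24, mt (G.symm.symm _ _) h30, mt (G.symm.symm _ _) h41] <;> decide
  have htwin : ∀ i j : Fin 5, (∀ k, (SimpleGraph.cycleGraph 5).Adj i k ↔
      (SimpleGraph.cycleGraph 5).Adj j k) → i = j := by
    simp only [SimpleGraph.cycleGraph_adj]
    decide
  refine ⟨⟨⟨![v₀, v₁, v₂, v₃, v₄], ?_⟩, ?_⟩⟩
  · intro i j hij
    apply htwin
    intro k
    rw [← hadj, ← hadj, hij]
  · intro i j
    exact hadj i j

lemma exists_of_iso_path {n : ℕ} (G : SimpleGraph (Fin n)) (S : Finset (Fin n))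
    (h : Nonempty ((G.induce (S : Set (Fin n))) ≃g pathGraph 3)) :
    ∃ a ∈ S, ∃ b ∈ S, ∃ c ∈ S, a ≠ c ∧ G.Adj a b ∧ G.Adj b c ∧ ¬ G.Adj a c := by
  obtain ⟨φ⟩ := h
  have key : ∀ i j : Fin 3, G.Adj (φ.symm i : Fin n) (φ.symm j) ↔ (pathGraph 3).Adj i j :=
    fun i j => φ.symm.map_adj_iff
  refine ⟨φ.symm 0, (φ.symm 0).2, φ.symm 1, (φ.symm 1).2, φ.symm 2, (φ.symm 2).2, ?_,
    ?_, ?_, ?_⟩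
  · intro h
    have := φ.symm.injective (Subtype.ext h)
    revert this; decide
  all_goals rw [key, pathGraph_adj]; decide

lemma exists_of_iso_path_compl {n : ℕ} (G : SimpleGraph (Fin n)) (S : Finset (Fin n))
    (h : Nonempty ((G.induce (S : Set (Fin n))) ≃g (pathGraph 3)ᶜ)) :
    ∃ a ∈ S, ∃ b ∈ S, ∃ c ∈ S, b ≠ c ∧ a ≠ c ∧ G.Adj a b ∧ ¬ G.Adj b c ∧ ¬ G.Adj a c := by
  obtain ⟨φ⟩ := h
  have key : ∀ i j : Fin 3, G.Adj (φ.symm i : Fin n) (φ.symm j) ↔ (pathGraph 3)ᶜ.Adj i j :=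
    fun i j => φ.symm.map_adj_iff
  have hne : ∀ i j : Fin 3, i ≠ j → (φ.symm i : Fin n) ≠ φ.symm j :=
    fun i j hij h => hij (φ.symm.injective (Subtype.ext h))
  refine ⟨φ.symm 0, (φ.symm 0).2, φ.symm 2, (φ.symm 2).2, φ.symm 1, (φ.symm 1).2,
    hne _ _ (by decide), hne _ _ (by decide), ?_, ?_, ?_⟩
  all_goals rw [key, compl_adj, pathGraph_adj]; decide

/-- A prescribed pattern `F` on a block `B` of six pairs between two triples that forces an induced
`C₅`, whatever happens outside `B`. -/
lemma exists_block {n : ℕ} (G₁ G₂ : SimpleGraph (Fin n)) (S T : Finset (Fin n))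
    (hS : Nonempty ((G₁.induce (S : Set (Fin n))) ≃g pathGraph 3) ∨
      Nonempty ((G₁.induce (S : Set (Fin n))) ≃g (pathGraph 3)ᶜ))
    (hT : Nonempty ((G₂.induce (T : Set (Fin n))) ≃g pathGraph 3) ∨
      Nonempty ((G₂.induce (T : Set (Fin n))) ≃g (pathGraph 3)ᶜ)) :
    ∃ B F : Finset (Fin n × Fin n), F ⊆ B ∧ B ⊆ S ×ˢ T ∧ F.card ≤ 4 ∧ (B \ F).card ≤ 4 ∧
      ∀ E, E ∩ B = F → HasInducedC5 (addCross G₁ G₂ E) := by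
  have hTe : ∃ d ∈ T, ∃ e ∈ T, G₂.Adj d e := by
    rcases hT with h | h
    · obtain ⟨a, ha, b, hb, _, _, _, h, _⟩ := exists_of_iso_path _ _ h
      exact ⟨a, ha, b, hb, h⟩
    · obtain ⟨a, ha, b, hb, _, _, _, _, h, _⟩ := exists_of_iso_path_compl _ _ h
      exact ⟨a, ha, b, hb, h⟩
  have hTn : ∃ d ∈ T, ∃ e ∈ T, d ≠ e ∧ ¬ G₂.Adj d e := by
    rcases hT with h | h
    · obtain ⟨a, ha, b, hb, c, hc, h1, _, _, h2⟩ := exists_of_iso_path _ _ h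
      exact ⟨a, ha, c, hc, h1, h2⟩
    · obtain ⟨a, ha, b, hb, c, hc, h1, _, _, h2, _⟩ := exists_of_iso_path_compl _ _ h
      exact ⟨b, hb, c, hc, h1, h2⟩
  have hcard4 : ∀ w x y z : Fin n × Fin n, ({w, x, y, z} : Finset (Fin n × Fin n)).card ≤ 4 :=
    fun w x y z => Finset.card_le_four
  have hcard2 : ∀ w x : Fin n × Fin n, ({w, x} : Finset (Fin n × Fin n)).card ≤ 4 :=
    fun w x => Finset.card_le_two.trans (by norm_num)
  rcases hS with h | h
  · -- the cycle is `a b c d e`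
    obtain ⟨a, ha, b, hb, c, hc, hac, hab, hbc, nac⟩ := exists_of_iso_path _ _ h
    obtain ⟨d, hd, e, he, hde⟩ := hTe
    have h1 := hab.ne
    have h2 := hbc.ne
    have h3 := hde.ne
    refine ⟨{(a, e), (c, d)} ∪ {(a, d), (b, d), (b, e), (c, e)}, {(a, e), (c, d)},
      Finset.subset_union_left, ?_, hcard2 _ _, ?_, ?_⟩
    · intro x hx
      simp only [Finset.mem_union, Finset.mem_insert, Finset.mem_singleton] at hx
      rw [Finset.mem_product]
      rcases hx with (rfl | rfl) | (rfl | rfl | rfl | rfl) <;> exact ⟨by assumption, by assumption⟩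
    · rw [Finset.union_sdiff_left]
      exact (Finset.card_le_card Finset.sdiff_subset).trans (hcard4 _ _ _ _)
    · intro E hE
      have hm := Finset.ext_iff.1 hE
      have m1 := hm (a, e)
      have m2 := hm (c, d)
      have m3 := hm (a, d)
      have m4 := hm (b, d)
      have m5 := hm (b, e)
      have m6 := hm (c, e)
      simp [h1, h2, h3, hac, h1.symm, h2.symm, h3.symm, hac.symm] at m1 m2 m3 m4 m5 m6
      apply hasInducedC5_of _ (.inl a) (.inl b) (.inl c) (.inr d) (.inr e) <;>
        simpa
  · -- the cycle is `a b d c e`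
    obtain ⟨a, ha, b, hb, c, hc, hbc, hac, hab, nbc, nac⟩ := exists_of_iso_path_compl _ _ h
    obtain ⟨d, hd, e, he, h3, nde⟩ := hTn
    have h1 := hab.ne
    refine ⟨{(b, d), (c, d), (c, e), (a, e)} ∪ {(a, d), (b, e)},
      {(b, d), (c, d), (c, e), (a, e)},
      Finset.subset_union_left, ?_, hcard4 _ _ _ _, ?_, ?_⟩
    · intro x hx
      simp only [Finset.mem_union, Finset.mem_insert, Finset.mem_singleton] at hx
      rw [Finset.mem_product]
      rcases hx with (rfl | rfl | rfl | rfl) | (rfl | rfl) <;> exact ⟨by assumption, by assumption⟩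
    · rw [Finset.union_sdiff_left]
      exact (Finset.card_le_card Finset.sdiff_subset).trans (hcard2 _ _)
    · intro E hE
      have hm := Finset.ext_iff.1 hE
      have m1 := hm (b, d)
      have m2 := hm (c, d)
      have m3 := hm (c, e)
      have m4 := hm (a, e)
      have m5 := hm (a, d)
      have m6 := hm (b, e)
      have nca := mt (G₁.symm.symm _ _) nac
      simp [h1, hbc, h3, hac, h1.symm, hbc.symm, h3.symm, hac.symm] at m1 m2 m3 m4 m5 m6
      apply hasInducedC5_of _ (.inl a) (.inl b) (.inr d) (.inl c) (.inr e) <;>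
        simpa

lemma exists_triples {n k : ℕ} {G : SimpleGraph (Fin n)}
    (h : DisjointInducedCopies G (pathGraph 3) k ∨ DisjointInducedCopies G (pathGraph 3)ᶜ k) :
    ∃ S : Fin k → Finset (Fin n), (∀ i j, i ≠ j → Disjoint (S i) (S j)) ∧
      ∀ i, Nonempty ((G.induce (S i : Set (Fin n))) ≃g pathGraph 3) ∨
        Nonempty ((G.induce (S i : Set (Fin n))) ≃g (pathGraph 3)ᶜ) := by
  rcases h with ⟨S, hd, h⟩ | ⟨S, hd, h⟩
  · exact ⟨S, hd, fun i => Or.inl (h i)⟩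
  · exact ⟨S, hd, fun i => Or.inr (h i)⟩

/-! ### The probability of creating no induced `C₅` -/

/-- The count of admissible edge sets of size `m`, times the probability `q ^ m (1 - q) ^ (n² - m)`
of each of them, is at most the probability that no pair of triples yields an induced `C₅`. -/
lemma count_le {n k : ℕ} (G₁ G₂ : SimpleGraph (Fin n))
    (h₁ : DisjointInducedCopies G₁ (pathGraph 3) k ∨ DisjointInducedCopies G₁ (pathGraph 3)ᶜ k)
    (h₂ : DisjointInducedCopies G₂ (pathGraph 3) k ∨ DisjointInducedCopies G₂ (pathGraph 3)ᶜ k)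
    (q : ℝ) (hq0 : 0 ≤ q) (hq1 : q ≤ 1) (m : ℕ) :
    (((univ : Finset (Finset (Fin n × Fin n))).filter fun E =>
          E.card = m ∧ ¬ HasInducedC5 (addCross G₁ G₂ E)).card : ℝ) *
      (q ^ m * (1 - q) ^ (n ^ 2 - m)) ≤ (1 - q ^ 4 * (1 - q) ^ 4) ^ (k ^ 2) := by
  obtain ⟨S, hSd, hS⟩ := exists_triples h₁
  obtain ⟨T, hTd, hT⟩ := exists_triples h₂
  choose B F hFB hBS hF4 hB4 hC5 using
    fun ij : Fin k × Fin k => exists_block G₁ G₂ (S ij.1) (T ij.2) (hS ij.1) (hT ij.2)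
  have hq1' : 0 ≤ 1 - q := by linarith
  have hBd : ∀ i j, i ≠ j → Disjoint (B i) (B j) := by
    rintro ⟨i, i'⟩ ⟨j, j'⟩ hij
    refine Finset.disjoint_of_subset_left (hBS _) (Finset.disjoint_of_subset_right (hBS _) ?_)
    rw [Finset.disjoint_product]
    by_cases h : i = j
    · right
      apply hTd
      rintro rfl
      exact hij (by rw [h])
    · exact Or.inl (hSd _ _ h)
  have hsum := sum_avoid q B F hFB hBd univ ∅ ∅ (Finset.Subset.refl _) (by simp)
  have hprod : ∏ i : Fin k × Fin k, (1 - q ^ (F i).card * (1 - q) ^ (B i \ F i).card)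
      ≤ (1 - q ^ 4 * (1 - q) ^ 4) ^ (k ^ 2) := by
    have hk : k ^ 2 = (univ : Finset (Fin k × Fin k)).card := by simp [sq]
    rw [hk]
    rw [← Finset.prod_const]
    apply Finset.prod_le_prod
    · intro i _
      have := mul_le_one₀ (pow_le_one₀ (n := (F i).card) hq0 hq1)
        (pow_nonneg hq1' (B i \ F i).card) (pow_le_one₀ hq1' (by linarith))
      linarith
    · intro i _
      have := mul_le_mul (pow_le_pow_of_le_one hq0 hq1 (hF4 i))
        (pow_le_pow_of_le_one hq1' (by linarith) (hB4 i)) (pow_nonneg hq1' 4)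
        (pow_nonneg hq0 _)
      linarith
  refine le_trans ?_ hprod
  simp only [Finset.inter_empty, true_and, Finset.mem_univ, true_imp_iff, Finset.card_empty,
    pow_zero, Finset.empty_sdiff, one_mul] at hsum
  rw [← hsum, ← nsmul_eq_mul, ← Finset.sum_const]
  refine le_trans (Finset.sum_le_sum (g := fun E => q ^ E.card * (1 - q) ^ (Eᶜ).card) ?_)
    (Finset.sum_le_sum_of_subset_of_nonneg ?_ ?_)
  · intro E hE
    have hm := (Finset.mem_filter.1 hE).2.1
    simp [Finset.card_compl, hm, sq]
  · intro E hE
    rw [Finset.mem_filter] at hE ⊢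
    exact ⟨Finset.mem_univ _, fun i h => hE.2.2 (hC5 i E h)⟩
  · intro E _ _
    exact mul_nonneg (pow_nonneg hq0 _) (pow_nonneg hq1' _)

/-! ### Estimates -/

/-- For `n ≥ 60` the factor `1 / log 2 > 1` makes up for `⌊n/6⌋` being smaller than `n/6`. -/
lemma avoid_le (n : ℕ) (hn : 60 ≤ n) (x : ℝ) (hx0 : 0 ≤ x) (hx1 : x ≤ 1) :
    (1 - x) ^ ((n / 6) ^ 2) ≤ (2 : ℝ) ^ (-((n : ℝ) ^ 2 * x / 36)) := by
  have hk : (n : ℝ) - 5 ≤ 6 * ((n / 6 : ℕ) : ℝ) := by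
    have : n ≤ 6 * (n / 6) + 5 := by omega
    have : (n : ℝ) ≤ 6 * ((n / 6 : ℕ) : ℝ) + 5 := by exact_mod_cast this
    linarith
  have hn' : (60 : ℝ) ≤ n := by exact_mod_cast hn
  set k : ℝ := ((n / 6 : ℕ) : ℝ) with hkdef
  have hlog := Real.log_two_lt_d9
  have hlog0 : 0 < Real.log 2 := Real.log_pos (by norm_num)
  have h1 : (n : ℝ) ^ 2 * Real.log 2 ≤ 36 * k ^ 2 := by
    have h2 : ((n : ℝ) - 5) ^ 2 ≤ (6 * k) ^ 2 := pow_le_pow_left₀ (by linarith) hk 2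
    nlinarith
  calc (1 - x) ^ ((n / 6) ^ 2) ≤ (Real.exp (-x)) ^ ((n / 6) ^ 2) :=
        pow_le_pow_left₀ (by linarith) (Real.one_sub_le_exp_neg x) _
    _ = Real.exp (-(x * k ^ 2)) := by
        rw [← Real.exp_nat_mul]
        push_cast
        rw [← hkdef]
        ring_nf
    _ ≤ (2 : ℝ) ^ (-((n : ℝ) ^ 2 * x / 36)) := by
        rw [Real.rpow_def_of_pos (by norm_num), Real.exp_le_exp]
        nlinarith [mul_le_mul_of_nonneg_left h1 hx0]

/-- For `q ≤ 1/2` and `m ≤ qN`, every `m`-set has probability at least `2 ^ (-N H(q))`. -/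
lemma weight_ge (q : ℝ) (hq0 : 0 < q) (hq1 : q ≤ 1 / 2) (N m : ℕ) (hmN : m ≤ N)
    (hm : (m : ℝ) ≤ q * N) :
    (2 : ℝ) ^ (-((N : ℝ) * binEnt q)) ≤ q ^ m * (1 - q) ^ (N - m) := by
  have h1q : 0 < 1 - q := by linarith
  have e1 : q ^ m * (1 - q) ^ (N - m)
      = (2 : ℝ) ^ ((m : ℝ) * Real.logb 2 q + ((N : ℝ) - m) * Real.logb 2 (1 - q)) := by
    rw [Real.rpow_add (by norm_num), mul_comm (m : ℝ), mul_comm ((N : ℝ) - m),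
      Real.rpow_mul (by norm_num), Real.rpow_mul (by norm_num),
      Real.rpow_logb (by norm_num) (by norm_num) hq0,
      Real.rpow_logb (by norm_num) (by norm_num) h1q, ← Nat.cast_sub hmN,
      Real.rpow_natCast, Real.rpow_natCast]
  rw [e1]
  apply Real.rpow_le_rpow_of_exponent_le (by norm_num)
  have hl : Real.logb 2 q ≤ Real.logb 2 (1 - q) :=
    Real.logb_le_logb_of_le (by norm_num) hq0 (by linarith)
  unfold binEnt
  nlinarith [mul_nonneg (sub_nonneg.2 hm) (sub_nonneg.2 hl)]

/-- From a lower bound on the probability of each set to an upper bound on the count. -/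
lemma count_bound (K w t A B : ℝ) (hK : 0 ≤ K) (h : K * w ≤ t) (hw : (2 : ℝ) ^ (-A) ≤ w)
    (ht : t ≤ (2 : ℝ) ^ (-B)) : K ≤ (2 : ℝ) ^ (A - B) := by
  have h1 : K * (2 : ℝ) ^ (-A) ≤ (2 : ℝ) ^ (-B) :=
    (mul_le_mul_of_nonneg_left hw hK).trans (h.trans ht)
  have h2 : (2 : ℝ) ^ A * (2 : ℝ) ^ (-A) = 1 := by
    rw [← Real.rpow_add (by norm_num)]
    simp
  calc K = (2 : ℝ) ^ A * (K * (2 : ℝ) ^ (-A)) := by linear_combination -K * h2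
    _ ≤ (2 : ℝ) ^ A * (2 : ℝ) ^ (-B) := mul_le_mul_of_nonneg_left h1 (by positivity)
    _ = (2 : ℝ) ^ (A - B) := by rw [← Real.rpow_add (by norm_num), sub_eq_add_neg]

/-- Lemma 3.2: For every `0 < c₀ ≤ 1/2` there is `n₀` such that for all `c` with
`c₀ ≤ 2c ≤ 1 − c₀` and `n ≥ n₀`: if `G₁` and `G₂` are `n`-vertex graphs each containing `⌊n/6⌋`
disjoint induced copies of `P₃` or of its complement, then the number of sets of exactly
`⌊2cn²⌋` cross edges whose addition to the disjoint union of `G₁` and `G₂` creates no induced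
`C₅` is at most `2^{2n²(h(c) − r(c))}`. -/
theorem stmt14 (c₀ : ℝ) (hc₀0 : 0 < c₀) (hc₀1 : c₀ ≤ 1/2) :
    ∃ n₀ : ℕ, ∀ c : ℝ, c₀ ≤ 2*c → 2*c ≤ 1 - c₀ → ∀ n : ℕ, n₀ ≤ n →
      ∀ G₁ G₂ : SimpleGraph (Fin n),
      (DisjointInducedCopies G₁ (pathGraph 3) (n / 6) ∨
        DisjointInducedCopies G₁ (pathGraph 3)ᶜ (n / 6)) →
      (DisjointInducedCopies G₂ (pathGraph 3) (n / 6) ∨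
        DisjointInducedCopies G₂ (pathGraph 3)ᶜ (n / 6)) →
      (((univ : Finset (Finset (Fin n × Fin n))).filter fun E =>
          E.card = ⌊2 * c * (n : ℝ)^2⌋₊ ∧ ¬ HasInducedC5 (addCross G₁ G₂ E)).card : ℝ) ≤
        (2 : ℝ) ^ (2 * (n : ℝ)^2 * (hfun c - rfun c)) := by
  refine ⟨60, ?_⟩
  intro c hc1 hc2 n hn G₁ G₂ h₁ h₂
  set m := ⌊2 * c * (n : ℝ) ^ 2⌋₊ with hmdef
  have hn2 : (0 : ℝ) ≤ (n : ℝ) ^ 2 := by positivity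
  have hmle : (m : ℝ) ≤ 2 * c * (n : ℝ) ^ 2 :=
    Nat.floor_le (mul_nonneg (by linarith) hn2)
  have hmN : m ≤ n ^ 2 := by
    have : (m : ℝ) ≤ (n : ℝ) ^ 2 := by nlinarith
    exact_mod_cast this
  have hx : ∀ q : ℝ, 0 ≤ q → q ≤ 1 → 0 ≤ q ^ 4 * (1 - q) ^ 4 ∧ q ^ 4 * (1 - q) ^ 4 ≤ 1 := by
    intro q h0 h1
    have h1' : 0 ≤ 1 - q := by linarith
    exact ⟨by positivity, mul_le_one₀ (pow_le_one₀ h0 h1) (by positivity)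
      (pow_le_one₀ h1' (by linarith))⟩
  by_cases hc : c < 1 / 4
  · have key := count_bound _ _ _ ((n ^ 2 : ℕ) * binEnt (2 * c)) _ (Nat.cast_nonneg _)
      (count_le G₁ G₂ h₁ h₂ (2 * c) (by linarith) (by linarith) m)
      (weight_ge (2 * c) (by linarith) (by linarith) (n ^ 2) m hmN (by push_cast; exact hmle))
      (avoid_le n hn _ (hx (2 * c) (by linarith) (by linarith)).1
        (hx (2 * c) (by linarith) (by linarith)).2)
    refine key.trans_eq ?_
    rw [hfun, rfun, if_pos hc, if_pos hc]
    congr 1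
    push_cast
    ring
  · have hw : (2 : ℝ) ^ (-((n : ℝ) ^ 2)) ≤ (1 / 2 : ℝ) ^ m * (1 - 1 / 2) ^ (n ^ 2 - m) := by
      rw [show (1 - 1 / 2 : ℝ) = 1 / 2 by norm_num, ← pow_add, Nat.add_sub_cancel' hmN,
        Real.rpow_neg (by norm_num), ← Nat.cast_pow, Real.rpow_natCast, one_div, inv_pow]
    have key := count_bound _ _ _ ((n : ℝ) ^ 2) _ (Nat.cast_nonneg _)
      (count_le G₁ G₂ h₁ h₂ (1 / 2) (by norm_num) (by norm_num) m) hw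
      (avoid_le n hn _ (hx (1 / 2) (by norm_num) (by norm_num)).1
        (hx (1 / 2) (by norm_num) (by norm_num)).2)
    refine key.trans_eq ?_
    rw [hfun, rfun, if_neg hc, if_neg hc, if_pos (by linarith), if_pos (by linarith)]
    congr 1
    ring
end

section
/- For every real c with 0 < c ≤ 1/2 and every γ > 0 there exist ε₀, d₀ > 0 and an integer k₀ such that for all integers k₁ ≥ k₀ and k′ there is an integer n₀ such that for all positive d ≤ d₀, ε ≤ ε₀, all ε′ > 0, and all integers n ≥ n₀ and k with k₀ ≤ k ≤ k₁ the following holds. If R is a coloured graph on k vertices which has at most εk² non-edges and contains no triangle all three of whose edges are grey, and η = 1/(6k₁), then |ℛ(R,ε,ε′,d,k′,n,c) ∩ Forb*_{n,η}(C₅,c)| ≤ 2^{(h(c) − r(c) + γ)·C(n,2)}, where C(n,2) = n(n−1)/2. -/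
/-!
The count is a direct entropy argument. Put `p = min (2c) (1/2)` and `q = p⁴(1-p)⁴`, so that
`h(c) = H(p)/2` and `r(c) = q/72`. There are at most `(k+1)ⁿ` partitions, so the partition of type
`R` may be fixed. Its vertex pairs, here called slots, are of three kinds.

* Slots meeting the exceptional set, lying inside a cluster, or between clusters that are not
  joined in `R` number at most `(2ε + 1/k) n²` (`card_freeSlots_le`).
* On the white and black pairs the graph deviates from the colour in at most `d n²` slots
  (`card_deviation_le`), and `card_small_subsets_le` bounds the number of such deviations.
* The grey pairs span at most `n²/4` slots, by Mantel's theorem (`card_indexPairs_le`).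

Fix the graph off the grey slots. Since homogeneous sets have at most a fifth of the size of a
cluster, each cluster is mostly covered by disjoint triples inducing a path on three vertices or
its complement, and also by disjoint edges, and by disjoint non-edges (`exists_packing`).
Between an induced path in one cluster and an edge in another, one pattern on the six slots
completes an induced `C₅` (`exists_bad_trace`); as `C₅` is self-complementary, the same holds for a
co-path and a non-edge. Thus if grey slots are filled independently with probability `p`, each of
at least `g/36` independent forbidden patterns appears with probability at least `q`, where `g` is
the number of grey slots. As the graphs have at most `c·C(n,2)` edges and `p ≤ 1/2`, every
completion has probability at least about `2^{-H(p)·C(n,2)/2}`, so there are at most about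
`2^{(H(p)/2 - q/72)·C(n,2)}` completions (`card_fiber_le`, `fiber_exponent`).
-/

open Finset SimpleGraph
open scoped Classical

/-- `ℛ(R,ε,ε',d,k',n,c) ∩ Forb*_{n,η}(C₅,c)`: the graphs in `ℛ(R,ε,ε',d,k',n,c)` which contain
no induced `C₅` and satisfy `hom(G) < ηn`. -/
noncomputable def RsetForb {k : ℕ} (R : ColouredGraph k) (ε ε' d : ℝ) (k' n : ℕ) (c η : ℝ) :
    Finset (SimpleGraph (Fin n)) :=
  (Rset R ε ε' d k' n c).filter fun G => ¬ HasInducedC5 G ∧ (homNum G : ℝ) < η * n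

/-! ### Counting subsets by weights -/

lemma weight_sum_eq_one {α : Type*} [DecidableEq α] (p : ℝ) (B : Finset α) :
    ∑ U ∈ B.powerset, p ^ #U * (1 - p) ^ #(B \ U) = 1 := by
  have h := Finset.sum_pow_mul_eq_add_pow p (1 - p) B
  rw [show p + (1 - p) = 1 by ring, one_pow] at h
  refine Eq.trans (Finset.sum_congr rfl fun U hU => ?_) h
  rw [card_sdiff_of_subset (mem_powerset.1 hU)]

/-- The probability that a `p`-random subset of `B` avoids the prescribed trace `P l` on each of the
disjoint sets `Q l`: these events are independent, and each fails with probability at least `q`. -/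
lemma weight_avoid_le {α ι : Type*} [DecidableEq α] {p q : ℝ} (hp0 : 0 ≤ p) (hp1 : p ≤ 1)
    (hq1 : q ≤ 1) (P Q : ι → Finset α) (L : Finset ι) :
    ∀ B : Finset α, (∀ l ∈ L, Q l ⊆ B) →
      (∀ l ∈ L, ∀ l' ∈ L, l ≠ l' → Disjoint (Q l) (Q l')) →
      (∀ l ∈ L, P l ⊆ Q l) →
      (∀ l ∈ L, q ≤ p ^ #(P l) * (1 - p) ^ #(Q l \ P l)) →
      ∑ U ∈ B.powerset with (∀ l ∈ L, U ∩ Q l ≠ P l), p ^ #U * (1 - p) ^ #(B \ U)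
        ≤ (1 - q) ^ #L := by
  have hp1' : 0 ≤ 1 - p := by linarith
  induction L using Finset.induction_on with
  | empty =>
    intro B _ _ _ _
    simpa using (weight_sum_eq_one p B).le
  | insert l₀ L hl₀ ih =>
    intro B hQB hdis hPQ hq
    set C := B \ Q l₀ with hC
    have hQ0 : Q l₀ ⊆ B := hQB l₀ (mem_insert_self _ _)
    have hdis0 : ∀ l ∈ L, Disjoint (Q l) (Q l₀) := fun l hl =>
      hdis l (mem_insert_of_mem hl) l₀ (mem_insert_self _ _) (fun h => hl₀ (h ▸ hl))
    have ihC := ih C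
      (fun l hl => subset_sdiff.2 ⟨hQB l (mem_insert_of_mem hl), hdis0 l hl⟩)
      (fun l hl l' hl' => hdis l (mem_insert_of_mem hl) l' (mem_insert_of_mem hl'))
      (fun l hl => hPQ l (mem_insert_of_mem hl)) (fun l hl => hq l (mem_insert_of_mem hl))
    have hfirst : ∑ X ∈ (Q l₀).powerset.erase (P l₀), p ^ #X * (1 - p) ^ #(Q l₀ \ X)
        ≤ 1 - q := by
      have h1 := Finset.add_sum_erase (Q l₀).powerset
        (fun X => p ^ #X * (1 - p) ^ #(Q l₀ \ X))
        (mem_powerset.2 (hPQ l₀ (mem_insert_self _ _)))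
      rw [weight_sum_eq_one] at h1
      have h2 := hq l₀ (mem_insert_self _ _)
      linarith
    -- Split `U` into its trace on `Q l₀` and the rest.
    have hsplit : ∑ U ∈ B.powerset with (∀ l ∈ insert l₀ L, U ∩ Q l ≠ P l),
          p ^ #U * (1 - p) ^ #(B \ U)
        ≤ ∑ XY ∈ (Q l₀).powerset.erase (P l₀) ×ˢ
            (C.powerset.filter fun Y => ∀ l ∈ L, Y ∩ Q l ≠ P l),
          (p ^ #XY.1 * (1 - p) ^ #(Q l₀ \ XY.1)) * (p ^ #XY.2 * (1 - p) ^ #(C \ XY.2)) := by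
      have hinj : Set.InjOn (fun U : Finset α => (U ∩ Q l₀, U \ Q l₀))
          (B.powerset.filter fun U => ∀ l ∈ insert l₀ L, U ∩ Q l ≠ P l) := by
        intro U _ U' _ h
        simp only [Prod.mk.injEq] at h
        rw [← sdiff_union_inter U (Q l₀), ← sdiff_union_inter U' (Q l₀), h.1, h.2]
      calc _ = ∑ U ∈ B.powerset with (∀ l ∈ insert l₀ L, U ∩ Q l ≠ P l),
            (p ^ #(U ∩ Q l₀) * (1 - p) ^ #(Q l₀ \ (U ∩ Q l₀))) *
              (p ^ #(U \ Q l₀) * (1 - p) ^ #(C \ (U \ Q l₀))) := by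
            refine Finset.sum_congr rfl fun U hU => ?_
            have hUB : U ⊆ B := mem_powerset.1 (mem_filter.1 hU).1
            have e1 : #U = #(U ∩ Q l₀) + #(U \ Q l₀) := by
              rw [add_comm]; exact (card_sdiff_add_card_inter U (Q l₀)).symm
            have e2 : #(B \ U) = #(Q l₀ \ (U ∩ Q l₀)) + #(C \ (U \ Q l₀)) := by
              rw [← card_union_of_disjoint]
              · congr 1
                ext x
                simp only [hC, mem_sdiff, mem_union, mem_inter]
                have := @hQ0 x
                tauto
              · rw [Finset.disjoint_left]
                intro x
                simp only [hC, mem_sdiff, mem_inter]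
                tauto
            rw [e1, e2, pow_add, pow_add]
            ring
        _ = ∑ XY ∈ (B.powerset.filter fun U => ∀ l ∈ insert l₀ L, U ∩ Q l ≠ P l).image
              (fun U : Finset α => (U ∩ Q l₀, U \ Q l₀)),
            (p ^ #XY.1 * (1 - p) ^ #(Q l₀ \ XY.1)) *
              (p ^ #XY.2 * (1 - p) ^ #(C \ XY.2)) := by
            rw [Finset.sum_image hinj]
        _ ≤ _ := by
            refine Finset.sum_le_sum_of_subset_of_nonneg ?_ fun _ _ _ => by positivity
            intro XY hXY
            obtain ⟨U, hU, rfl⟩ := mem_image.1 hXY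
            obtain ⟨hUB, hU⟩ := mem_filter.1 hU
            refine mem_product.2 ⟨mem_erase.2 ⟨hU l₀ (mem_insert_self _ _),
              mem_powerset.2 inter_subset_right⟩, mem_filter.2 ⟨mem_powerset.2
                (sdiff_subset_sdiff (mem_powerset.1 hUB) le_rfl), fun l hl => ?_⟩⟩
            have h3 : (U \ Q l₀) ∩ Q l = U ∩ Q l := by
              ext x
              have : x ∈ Q l → x ∉ Q l₀ := fun hx => Finset.disjoint_left.1 (hdis0 l hl) hx
              simp only [mem_inter, mem_sdiff]
              tauto
            simpa only [h3] using hU l (mem_insert_of_mem hl)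
    refine hsplit.trans ?_
    rw [Finset.sum_product, card_insert_of_notMem hl₀, pow_succ']
    simp only [← Finset.mul_sum, ← Finset.sum_mul]
    exact mul_le_mul hfirst ihC (Finset.sum_nonneg fun _ _ => by positivity) (by linarith)

/-- Counting form of `weight_avoid_le`: a family of subsets of `B` of size at most `m`, each
avoiding all the traces `P l`, is small. The weight of such a subset is smallest at size `m`,
because `p ≤ 1 - p`. -/
lemma card_avoid_le {α ι : Type*} [DecidableEq α] {p q : ℝ} (hp0 : 0 < p) (hp2 : p ≤ 1 / 2)
    (hq1 : q ≤ 1) (P Q : ι → Finset α) (L : Finset ι) (B : Finset α) (hQB : ∀ l ∈ L, Q l ⊆ B)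
    (hdis : ∀ l ∈ L, ∀ l' ∈ L, l ≠ l' → Disjoint (Q l) (Q l'))
    (hPQ : ∀ l ∈ L, P l ⊆ Q l)
    (hq : ∀ l ∈ L, q ≤ p ^ #(P l) * (1 - p) ^ #(Q l \ P l))
    (F : Finset (Finset α)) (m : ℕ) (hF : ∀ U ∈ F, U ⊆ B ∧ #U ≤ m ∧ ∀ l ∈ L, U ∩ Q l ≠ P l) :
    (#F : ℝ) * ((1 - p) ^ #B * (p / (1 - p)) ^ m) ≤ (1 - q) ^ #L := by
  have hp1 : 0 < 1 - p := by linarith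
  refine le_trans ?_ (weight_avoid_le hp0.le (by linarith) hq1 P Q L B hQB hdis hPQ hq)
  rw [← nsmul_eq_mul, ← Finset.sum_const]
  calc ∑ _U ∈ F, (1 - p) ^ #B * (p / (1 - p)) ^ m
      ≤ ∑ U ∈ F, p ^ #U * (1 - p) ^ #(B \ U) := by
        refine Finset.sum_le_sum fun U hU => ?_
        obtain ⟨hUB, hUm, -⟩ := hF U hU
        have h1 : (p / (1 - p)) ^ m ≤ (p / (1 - p)) ^ #U :=
          pow_le_pow_of_le_one (by positivity) ((div_le_one hp1).2 (by linarith)) hUm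
        have h2 : #B = #U + #(B \ U) := by
          rw [card_sdiff_of_subset hUB]; have := card_le_card hUB; omega
        calc (1 - p) ^ #B * (p / (1 - p)) ^ m ≤ (1 - p) ^ #B * (p / (1 - p)) ^ #U := by gcongr
          _ = p ^ #U * (1 - p) ^ #(B \ U) := by
            rw [h2, pow_add, div_pow]
            field_simp
    _ ≤ _ := by
        refine Finset.sum_le_sum_of_subset_of_nonneg ?_ fun _ _ _ => by positivity
        intro U hU
        obtain ⟨hUB, -, h⟩ := hF U hU
        exact mem_filter.2 ⟨mem_powerset.2 hUB, h⟩

/-- A Chernoff-type bound for the number of subsets of size at most `x`. -/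
lemma card_small_subsets_le_s15 {α : Type*} [Fintype α] {a x : ℝ} (ha0 : 0 < a) (ha1 : a ≤ 1)
    (F : Finset (Finset α)) (hF : ∀ T ∈ F, (#T : ℝ) ≤ x) :
    (#F : ℝ) * a ^ x ≤ (1 + a) ^ Fintype.card α := by
  rw [add_comm 1 a, ← Fintype.sum_pow_mul_eq_add_pow, ← nsmul_eq_mul, ← Finset.sum_const]
  calc ∑ _T ∈ F, a ^ x ≤ ∑ T ∈ F, a ^ #T * 1 ^ (Fintype.card α - #T) := by
        refine Finset.sum_le_sum fun T hT => ?_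
        rw [one_pow, mul_one, ← Real.rpow_natCast]
        exact Real.rpow_le_rpow_of_exponent_ge ha0 ha1 (hF T hT)
    _ ≤ _ := Finset.sum_le_sum_of_subset_of_nonneg (subset_univ _) fun _ _ _ => by positivity

/-! ### Packing small configurations -/

/-- If every subset of `X` with more than `x` elements contains a good `r`-set, then disjoint good
`r`-sets cover all but `x` elements of `X`. -/
lemma exists_packing {α : Type*} (Good : Finset α → Prop) (r x : ℕ)
    (hr : ∀ t, Good t → #t = r) (hr0 : 0 < r) (X : Finset α)
    (h : ∀ Z ⊆ X, x < #Z → ∃ t ⊆ Z, Good t) :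
    ∃ 𝒯 : Finset (Finset α), (∀ t ∈ 𝒯, Good t ∧ t ⊆ X) ∧
      (∀ t ∈ 𝒯, ∀ t' ∈ 𝒯, t ≠ t' → Disjoint t t') ∧ #X ≤ r * #𝒯 + x := by
  induction hN : #X using Nat.strong_induction_on generalizing X with
  | _ N ih =>
    subst hN
    by_cases hx : #X ≤ x
    · exact ⟨∅, by simp, by simp, by simpa using hx⟩
    · obtain ⟨t, htX, ht⟩ := h X le_rfl (by omega)
      have hc := card_sdiff_of_subset htX
      have hle := card_le_card htX
      have htr := hr t ht
      obtain ⟨𝒯, h1, h2, h3⟩ := ih #(X \ t) (by omega) (X \ t)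
        (fun Z hZ => h Z (hZ.trans sdiff_subset)) rfl
      have hdis : ∀ t' ∈ 𝒯, Disjoint t t' := fun t' ht' =>
        (subset_sdiff.1 (h1 t' ht').2).2.symm
      have hnot : t ∉ 𝒯 := fun hmem => by
        have := hdis t hmem
        rw [disjoint_self_iff_empty] at this
        simp [this] at htr
        omega
      refine ⟨insert t 𝒯, ?_, ?_, ?_⟩
      · intro t' ht'
        rcases mem_insert.1 ht' with rfl | ht'
        · exact ⟨ht, htX⟩
        · exact ⟨(h1 t' ht').1, (h1 t' ht').2.trans sdiff_subset⟩
      · intro t₁ h₁ t₂ h₂ hne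
        rcases mem_insert.1 h₁ with rfl | h₁' <;> rcases mem_insert.1 h₂ with rfl | h₂'
        · exact absurd rfl hne
        · exact hdis _ h₂'
        · exact (hdis _ h₁').symm
        · exact h2 _ h₁' _ h₂' hne
      · rw [card_insert_of_notMem hnot, mul_add]
        omega

/-! ### Induced five-cycles across two clusters -/

/-- The edges of `G` as a finset of unordered pairs. -/
noncomputable def edges {V : Type} [Fintype V] (G : SimpleGraph V) : Finset (Sym2 V) :=
  univ.filter (· ∈ G.edgeSet)

lemma mem_edges {V : Type} [Fintype V] {G : SimpleGraph V} {u v : V} :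
    s(u, v) ∈ edges G ↔ G.Adj u v := by
  simp [edges]

lemma edges_injective {V : Type} [Fintype V] :
    Function.Injective (edges : SimpleGraph V → Finset (Sym2 V)) := by
  intro G G' h
  ext u v
  rw [← mem_edges, h, mem_edges]

lemma card_edges {V : Type} [Fintype V] (G : SimpleGraph V) : #(edges G) = edgeCount G := by
  rw [edgeCount, Nat.card_eq_fintype_card, ← Set.toFinset_card]
  congr 1
  ext e
  simp [edges]

/-- The unordered pairs with one element in `t` and the other in `D`. -/
noncomputable def crossPairs {V : Type} (t D : Finset V) : Finset (Sym2 V) :=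
  (t ×ˢ D).image fun x => s(x.1, x.2)

lemma mem_crossPairs {V : Type} {t D : Finset V} {e : Sym2 V} :
    e ∈ crossPairs t D ↔ ∃ u ∈ t, ∃ v ∈ D, s(u, v) = e := by
  simp only [crossPairs, mem_image, mem_product, Prod.exists]
  constructor
  · rintro ⟨u, v, ⟨hu, hv⟩, h⟩
    exact ⟨u, hu, v, hv, h⟩
  · rintro ⟨u, hu, v, hv, h⟩
    exact ⟨u, v, ⟨hu, hv⟩, h⟩

lemma card_crossPairs_le {V : Type} (t D : Finset V) : #(crossPairs t D) ≤ #t * #D :=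
  card_image_le.trans (card_product _ _).le

/-- `t` is the vertex set of an induced path with three vertices. -/
def Cherry {V : Type} (H : SimpleGraph V) (t : Finset V) : Prop :=
  ∃ a b c, t = {a, b, c} ∧ H.Adj a b ∧ H.Adj b c ∧ a ≠ c ∧ ¬ H.Adj a c

/-- `D` is the vertex set of an edge. -/
def EdgePair {V : Type} (H : SimpleGraph V) (D : Finset V) : Prop :=
  ∃ a b, D = {a, b} ∧ H.Adj a b

lemma Cherry.card_eq {V : Type} {H : SimpleGraph V} {t : Finset V} (h : Cherry H t) :
    #t = 3 := by
  obtain ⟨a, b, c, rfl, hab, hbc, hac, -⟩ := h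
  exact card_eq_three.2 ⟨a, b, c, hab.ne, hac, hbc.ne, rfl⟩

lemma EdgePair.card_eq {V : Type} {H : SimpleGraph V} {t : Finset V} (h : EdgePair H t) :
    #t = 2 := by
  obtain ⟨a, b, rfl, hab⟩ := h
  exact card_pair hab.ne

/-- The five-cycle is self-complementary, via `i ↦ 2 i`. -/
lemma hasInducedC5_of_compl {V : Type} {G : SimpleGraph V} (h : HasInducedC5 Gᶜ) :
    HasInducedC5 G := by
  obtain ⟨f⟩ := h
  have key : ∀ i j : Fin 5, (2 * i = 2 * j → i = j) ∧
      ((cycleGraph 5).Adj i j ↔ 2 * i ≠ 2 * j ∧ ¬ (cycleGraph 5).Adj (2 * i) (2 * j)) := by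
    decide
  refine ⟨⟨⟨fun i => f (2 * i), fun i j hij => (key i j).1 (f.injective hij)⟩, ?_⟩⟩
  intro i j
  have h1 := f.map_rel_iff (a := 2 * i) (b := 2 * j)
  rw [SimpleGraph.compl_adj] at h1
  have h2 : f (2 * i) ≠ f (2 * j) ↔ 2 * i ≠ 2 * j := f.injective.ne_iff
  rw [(key i j).2]
  change G.Adj (f (2 * i)) (f (2 * j)) ↔ _
  constructor
  · intro h
    exact ⟨h2.1 h.ne, fun h' => (h1.2 h').2 h⟩
  · rintro ⟨h, h'⟩
    by_contra hG
    exact h' (h1.1 ⟨h2.2 h, hG⟩)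

lemma hasInducedC5_of_five {V : Type} {G : SimpleGraph V} {a b c d e : V}
    (hab : G.Adj a b) (hbc : G.Adj b c) (hcd : G.Adj c d) (hde : G.Adj d e) (hea : G.Adj e a)
    (hac : ¬ G.Adj a c) (hbd : ¬ G.Adj b d) (hce : ¬ G.Adj c e) (hda : ¬ G.Adj d a)
    (heb : ¬ G.Adj e b) : HasInducedC5 G := by
  have hadj : ∀ i j : Fin 5, G.Adj (![a, b, c, d, e] i) (![a, b, c, d, e] j) ↔
      (cycleGraph 5).Adj i j := by
    intro i j
    have h : (cycleGraph 5).Adj i j ↔ (i = j + 1 ∨ j = i + 1) := by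
      revert i j; decide
    rw [h]
    have hca : ¬ G.Adj c a := fun h => hac h.symm
    have hdb : ¬ G.Adj d b := fun h => hbd h.symm
    have hec : ¬ G.Adj e c := fun h => hce h.symm
    have had : ¬ G.Adj a d := fun h => hda h.symm
    have hbe : ¬ G.Adj b e := fun h => heb h.symm
    fin_cases i <;> fin_cases j <;>
      simp [hab, hbc, hcd, hde, hea, hac, hbd, hce, hda, heb, hab.symm, hbc.symm, hcd.symm,
        hde.symm, hea.symm, hca, hdb, hec, had, hbe]
  refine ⟨⟨⟨![a, b, c, d, e], fun i j hij => ?_⟩, fun {i j} => hadj i j⟩⟩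
  -- Distinct vertices of the five-cycle have distinct neighbourhoods.
  have h1 : ∀ l, (cycleGraph 5).Adj i l ↔ (cycleGraph 5).Adj j l := fun l => by
    rw [← hadj, ← hadj, hij]
  revert h1
  clear hij
  revert i j
  decide

/-- For an induced path `t` and a disjoint edge `D` some bipartite graph between them closes an
induced five-cycle. -/
lemma exists_bad_trace {V : Type} [Fintype V] {H : SimpleGraph V} {t D : Finset V}
    (ht : Cherry H t) (hD : EdgePair H D) (hdis : Disjoint t D) :
    ∃ P ⊆ crossPairs t D, #P ≤ 4 ∧ #(crossPairs t D \ P) ≤ 4 ∧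
      ∀ H' : SimpleGraph V, (∀ u ∈ t, ∀ v ∈ t, H'.Adj u v ↔ H.Adj u v) →
        (∀ u ∈ D, ∀ v ∈ D, H'.Adj u v ↔ H.Adj u v) → ¬ HasInducedC5 H' →
        edges H' ∩ crossPairs t D ≠ P := by
  obtain ⟨a, b, c, rfl, hab, hbc, hac, hnac⟩ := ht
  obtain ⟨d, e, rfl, hde⟩ := hD
  have hd : d ≠ a ∧ d ≠ b ∧ d ≠ c := by
    have := Finset.disjoint_right.1 hdis (mem_insert_self d _)
    simpa using this
  have he : e ≠ a ∧ e ≠ b ∧ e ≠ c := by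
    have := Finset.disjoint_right.1 hdis (mem_insert_of_mem (mem_singleton_self e))
    simpa using this
  have hmem : ∀ x : Sym2 V, x ∈ crossPairs {a, b, c} {d, e} ↔
      x = s(a, d) ∨ x = s(a, e) ∨ x = s(b, d) ∨ x = s(b, e) ∨ x = s(c, d) ∨ x = s(c, e) := by
    intro x
    simp only [mem_crossPairs, mem_insert, mem_singleton]
    constructor
    · rintro ⟨u, rfl | rfl | rfl, v, rfl | rfl, rfl⟩ <;> simp
    · rintro (rfl | rfl | rfl | rfl | rfl | rfl)
      exacts [⟨a, by simp, d, by simp, rfl⟩, ⟨a, by simp, e, by simp, rfl⟩,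
        ⟨b, by simp, d, by simp, rfl⟩, ⟨b, by simp, e, by simp, rfl⟩,
        ⟨c, by simp, d, by simp, rfl⟩, ⟨c, by simp, e, by simp, rfl⟩]
  refine ⟨{s(a, d), s(c, e)}, ?_, (card_le_two).trans (by norm_num), ?_, ?_⟩
  · intro x hx
    rw [hmem]
    simp only [mem_insert, mem_singleton] at hx
    tauto
  · refine (card_le_card (t := {s(a, e), s(b, d), s(b, e), s(c, d)}) ?_).trans card_le_four
    intro x hx
    rw [mem_sdiff, hmem] at hx
    simp only [mem_insert, mem_singleton] at hx ⊢
    tauto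
  · intro H' h1 h2 hC5 heq
    have hx : ∀ u v, s(u, v) ∈ crossPairs {a, b, c} {d, e} →
        (H'.Adj u v ↔ s(u, v) = s(a, d) ∨ s(u, v) = s(c, e)) := by
      intro u v huv
      have := Finset.ext_iff.1 heq s(u, v)
      simp only [mem_inter, huv, and_true, mem_edges, mem_insert, mem_singleton] at this
      exact this
    have hcd : H'.Adj c e := (hx c e ((hmem _).2 (by simp))).2 (by simp)
    have had : H'.Adj a d := (hx a d ((hmem _).2 (by simp))).2 (by simp)
    have hbd : ¬ H'.Adj b d := fun h => by
      have := (hx b d ((hmem _).2 (by simp))).1 h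
      have := hab.ne; have := hbc.ne; have := hde.ne
      simp at *; grind
    have hbe : ¬ H'.Adj b e := fun h => by
      have := (hx b e ((hmem _).2 (by simp))).1 h
      have := hab.ne; have := hbc.ne; have := hde.ne
      simp at *; grind
    have hae : ¬ H'.Adj a e := fun h => by
      have := (hx a e ((hmem _).2 (by simp))).1 h
      have := hab.ne; have := hbc.ne; have := hde.ne
      simp at *; grind
    have hcd' : ¬ H'.Adj c d := fun h => by
      have := (hx c d ((hmem _).2 (by simp))).1 h
      have := hab.ne; have := hbc.ne; have := hde.ne
      simp at *; grind
    refine hC5 (hasInducedC5_of_five (a := a) (b := b) (c := c) (d := e) (e := d)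
      ((h1 a (by simp) b (by simp)).2 hab) ((h1 b (by simp) c (by simp)).2 hbc) hcd
      ((h2 e (by simp) d (by simp)).2 hde.symm) had.symm
      (fun h => hnac ((h1 a (by simp) c (by simp)).1 h)) hbe hcd' (fun h => hae h.symm)
      (fun h => hbd h.symm))

/-- The complementary version of `exists_bad_trace`. -/
lemma exists_bad_trace_compl {V : Type} [Fintype V] {H : SimpleGraph V} {t D : Finset V}
    (ht : Cherry Hᶜ t) (hD : EdgePair Hᶜ D) (hdis : Disjoint t D) :
    ∃ P ⊆ crossPairs t D, #P ≤ 4 ∧ #(crossPairs t D \ P) ≤ 4 ∧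
      ∀ H' : SimpleGraph V, (∀ u ∈ t, ∀ v ∈ t, H'.Adj u v ↔ H.Adj u v) →
        (∀ u ∈ D, ∀ v ∈ D, H'.Adj u v ↔ H.Adj u v) → ¬ HasInducedC5 H' →
        edges H' ∩ crossPairs t D ≠ P := by
  obtain ⟨P, hP, h1, h2, h3⟩ := exists_bad_trace ht hD hdis
  refine ⟨crossPairs t D \ P, sdiff_subset, h2, ?_, ?_⟩
  · rwa [Finset.sdiff_sdiff_eq_self hP]
  · intro H' ht' hD' hC5 heq
    refine h3 H'ᶜ (fun u hu v hv => ?_) (fun u hu v hv => ?_)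
      (fun h => hC5 (hasInducedC5_of_compl h)) ?_
    · simp [ht' u hu v hv]
    · simp [hD' u hu v hv]
    · ext x
      constructor
      · intro hx
        obtain ⟨hx1, hx2⟩ := mem_inter.1 hx
        by_contra hxP
        have hx3 : x ∈ edges H' ∩ crossPairs t D := heq ▸ mem_sdiff.2 ⟨hx2, hxP⟩
        obtain ⟨u, hu, v, hv, rfl⟩ := mem_crossPairs.1 hx2
        exact (mem_edges.1 hx1).2 (mem_edges.1 (mem_inter.1 hx3).1)
      · intro hxP
        refine mem_inter.2 ⟨?_, hP hxP⟩
        obtain ⟨u, hu, v, hv, rfl⟩ := mem_crossPairs.1 (hP hxP)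
        refine mem_edges.2 ⟨fun h => Finset.disjoint_left.1 hdis hu (h ▸ hv), fun h => ?_⟩
        have hx3 : s(u, v) ∈ edges H' ∩ crossPairs t D := mem_inter.2 ⟨mem_edges.2 h, hP hxP⟩
        rw [heq] at hx3
        exact (mem_sdiff.1 hx3).2 hxP

/-- A set of vertices which is neither a clique nor independent contains an induced path on three
vertices in the graph or in its complement. -/
lemma exists_cherry {V : Type} {G : SimpleGraph V} {Z : Finset V}
    (h1 : ¬ G.IsClique (Z : Set V)) (h2 : ¬ Gᶜ.IsClique (Z : Set V)) :
    ∃ t ⊆ Z, Cherry G t ∨ Cherry Gᶜ t := by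
  by_contra! hno
  have hG : ∀ a ∈ Z, ∀ b ∈ Z, ∀ c ∈ Z, G.Adj a b → G.Adj b c → a ≠ c → G.Adj a c := by
    intro a ha b hb c hc hab hbc hac
    by_contra hn
    exact (hno {a, b, c} (by simp [insert_subset_iff, ha, hb, hc])).1
      ⟨a, b, c, rfl, hab, hbc, hac, hn⟩
  have hGc : ∀ a ∈ Z, ∀ b ∈ Z, ∀ c ∈ Z, a ≠ b → b ≠ c → a ≠ c → ¬ G.Adj a b → ¬ G.Adj b c →
      ¬ G.Adj a c := by
    intro a ha b hb c hc hab hbc hac nab nbc had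
    exact (hno {a, b, c} (by simp [insert_subset_iff, ha, hb, hc])).2
      ⟨a, b, c, rfl, ⟨hab, nab⟩, ⟨hbc, nbc⟩, hac, fun h => h.2 had⟩
  -- No vertex has both a neighbour and a non-neighbour in `Z`.
  have hmix : ∀ x ∈ Z, ∀ y ∈ Z, ∀ w ∈ Z, x ≠ y → ¬ G.Adj x y → ¬ G.Adj x w := by
    intro x hx y hy w hw hxy nxy hxw
    have hwy : w ≠ y := fun h => nxy (h ▸ hxw)
    by_cases hadj : G.Adj w y
    · exact nxy (hG x hx w hw y hy hxw hadj hxy)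
    · exact hGc x hx y hy w hw hxy hwy.symm hxw.ne nxy (fun h => hadj h.symm) hxw
  obtain ⟨x, hx, y, hy, hxy, nxy⟩ : ∃ x ∈ Z, ∃ y ∈ Z, x ≠ y ∧ ¬ G.Adj x y := by
    by_contra! h
    exact h1 fun x hx y hy hxy => h x hx y hy hxy
  obtain ⟨u, hu, w, hw, huw⟩ : ∃ u ∈ Z, ∃ w ∈ Z, G.Adj u w := by
    by_contra! h
    exact h2 fun x hx y hy hxy => ⟨hxy, h x hx y hy⟩
  have hxu : ¬ G.Adj x u := hmix x hx y hy u hu hxy nxy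
  have hne : u ≠ x := by
    rintro rfl
    exact hmix u hx y hy w hw hxy nxy huw
  exact hmix u hu x hx w hw hne (fun h => hxu h.symm) huw

lemma exists_edgePair {V : Type} {G : SimpleGraph V} {Z : Finset V}
    (h : ¬ Gᶜ.IsClique (Z : Set V)) : ∃ t ⊆ Z, EdgePair G t := by
  by_contra! hno
  refine h fun x hx y hy hxy => ⟨hxy, fun hadj => hno {x, y} ?_ ⟨x, y, rfl, hadj⟩⟩
  simp only [insert_subset_iff, singleton_subset_iff]
  exact ⟨hx, hy⟩

/-! ### Slots between clusters -/

/-- The vertex pairs running between clusters `W i`, `W j` with `r i j`. -/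
noncomputable def slots {n k : ℕ} (W : Fin k → Finset (Fin n)) (r : Fin k → Fin k → Prop) :
    Finset (Sym2 (Fin n)) :=
  univ.filter fun e => ∃ i j, r i j ∧ e ∈ crossPairs (W i) (W j)

/-- The index pairs `i < j` with `r i j`. -/
noncomputable def indexPairs {k : ℕ} (r : Fin k → Fin k → Prop) : Finset (Fin k × Fin k) :=
  univ.filter fun x => x.1 < x.2 ∧ r x.1 x.2

lemma eq_of_mem_cluster {n k : ℕ} {W : Fin k → Finset (Fin n)}
    (hW : ∀ i j, i ≠ j → Disjoint (W i) (W j)) {i j : Fin k} {u : Fin n}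
    (hi : u ∈ W i) (hj : u ∈ W j) : i = j := by
  by_contra h
  exact Finset.disjoint_left.1 (hW i j h) hi hj

lemma mem_slots {n k : ℕ} {W : Fin k → Finset (Fin n)} {r : Fin k → Fin k → Prop}
    (hW : ∀ i j, i ≠ j → Disjoint (W i) (W j)) (hr : ∀ i j, r i j → r j i)
    {i j : Fin k} {u v : Fin n} (hu : u ∈ W i) (hv : v ∈ W j) :
    s(u, v) ∈ slots W r ↔ r i j := by
  simp only [slots, mem_filter, mem_univ, true_and]
  constructor
  · rintro ⟨i', j', hr', he⟩
    obtain ⟨u', hu', v', hv', h⟩ := mem_crossPairs.1 he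
    rcases Sym2.eq_iff.1 h with ⟨rfl, rfl⟩ | ⟨rfl, rfl⟩
    · rwa [eq_of_mem_cluster hW hu hu', eq_of_mem_cluster hW hv hv']
    · rw [eq_of_mem_cluster hW hu hv', eq_of_mem_cluster hW hv hu']
      exact hr _ _ hr'
  · intro h
    exact ⟨i, j, h, mem_crossPairs.2 ⟨u, hu, v, hv, rfl⟩⟩

lemma exists_of_mem_slots {n k : ℕ} {W : Fin k → Finset (Fin n)} {r : Fin k → Fin k → Prop}
    (hr : ∀ i j, r i j → r j i) (hr' : ∀ i, ¬ r i i) {e : Sym2 (Fin n)} (he : e ∈ slots W r) :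
    ∃ x ∈ indexPairs r, ∃ u ∈ W x.1, ∃ v ∈ W x.2, s(u, v) = e := by
  obtain ⟨i, j, hij, he⟩ := (mem_filter.1 he).2
  obtain ⟨u, hu, v, hv, h⟩ := mem_crossPairs.1 he
  rcases lt_trichotomy i j with hlt | rfl | hlt
  · exact ⟨(i, j), mem_filter.2 ⟨mem_univ _, hlt, hij⟩, u, hu, v, hv, h⟩
  · exact absurd hij (hr' i)
  · exact ⟨(j, i), mem_filter.2 ⟨mem_univ _, hlt, hr _ _ hij⟩, v, hv, u, hu, by
      rw [Sym2.eq_swap]; exact h⟩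

lemma card_slots_le {n k s : ℕ} {W : Fin k → Finset (Fin n)} {r : Fin k → Fin k → Prop}
    (hs : ∀ i, #(W i) = s) (hr : ∀ i j, r i j → r j i) (hr' : ∀ i, ¬ r i i) :
    #(slots W r) ≤ #(indexPairs r) * s ^ 2 := by
  have hsub : slots W r ⊆ (indexPairs r).biUnion fun x => crossPairs (W x.1) (W x.2) := by
    intro e he
    obtain ⟨x, hx, u, hu, v, hv, h⟩ := exists_of_mem_slots hr hr' he
    exact mem_biUnion.2 ⟨x, hx, mem_crossPairs.2 ⟨u, hu, v, hv, h⟩⟩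
  refine (card_le_card hsub).trans (card_biUnion_le_card_mul _ _ _ fun x _ => ?_)
  refine (card_crossPairs_le _ _).trans ?_
  rw [hs, hs, sq]

/-- Mantel's theorem for index pairs. -/
lemma card_indexPairs_le {k : ℕ} {r : Fin k → Fin k → Prop} (hr : ∀ i j, r i j → r j i)
    (hr' : ∀ i, ¬ r i i) (htri : ∀ i j l, r i j → r j l → ¬ r i l) :
    4 * #(indexPairs r) ≤ k ^ 2 := by
  let Γ : SimpleGraph (Fin k) :=
    { Adj := r, symm := ⟨fun i j h => hr i j h⟩, loopless := ⟨fun i h => hr' i h⟩ }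
  have hcf : Γ.CliqueFree (2 + 1) := by
    intro t ht
    obtain ⟨a, b, c, hab, hac, hbc, -⟩ := is3Clique_iff.1 ht
    exact htri a b c hab hbc hac
  have hT := hcf.card_edgeFinset_le
  have hle : #(indexPairs r) ≤ #Γ.edgeFinset := by
    refine card_le_card_of_injOn (fun x => s(x.1, x.2)) ?_ ?_
    · intro x hx
      have := (mem_filter.1 hx).2.2
      simpa using (show Γ.Adj x.1 x.2 from this)
    · intro x hx y hy hxy
      have h1 := (mem_filter.1 hx).2.1
      have h2 := (mem_filter.1 hy).2.1
      rcases Sym2.eq_iff.1 hxy with ⟨h, h'⟩ | ⟨h, h'⟩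
      · exact Prod.ext h h'
      · rw [h, h'] at h1
        exact absurd h1 (not_lt.2 h2.le)
  simp only [Fintype.card_fin] at hT
  rcases Nat.mod_two_eq_zero_or_one k with h | h
  · rw [h] at hT
    simp at hT
    omega
  · rw [h] at hT
    simp at hT
    omega

/-! ### Completing a graph on the grey slots -/

/-- Graphs without induced five-cycles and without large homogeneous sets which agree off the
slots of `r` are few: inside the clusters they share a packing of induced paths, co-paths, edges
and non-edges, and each pair of matching items across an `r`-pair of clusters excludes one trace on
six slots. -/
lemma card_fiber_le {n k s m : ℕ} {p : ℝ} (hp0 : 0 < p) (hp2 : p ≤ 1 / 2)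
    {W : Fin k → Finset (Fin n)} {r : Fin k → Fin k → Prop}
    (hW : ∀ i j, i ≠ j → Disjoint (W i) (W j)) (hs : ∀ i, #(W i) = s)
    (hr : ∀ i j, r i j → r j i) (hr' : ∀ i, ¬ r i i)
    (S : Finset (SimpleGraph (Fin n))) (hC5 : ∀ G ∈ S, ¬ HasInducedC5 G)
    (hm : ∀ G ∈ S, #(edges G) ≤ m)
    (hhom : ∀ G ∈ S, ∀ A : Finset (Fin n),
      (G.IsClique (A : Set (Fin n)) ∨ Gᶜ.IsClique (A : Set (Fin n))) → 5 * #A ≤ s)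
    (hagree : ∀ G ∈ S, ∀ G' ∈ S, ∀ e ∉ slots W r, e ∈ edges G → e ∈ edges G') :
    ∃ L : ℕ, #(indexPairs r) * s ^ 2 ≤ 36 * L ∧
      (#S : ℝ) * ((1 - p) ^ (#(indexPairs r) * s ^ 2) * (p / (1 - p)) ^ m)
        ≤ (1 - p ^ 4 * (1 - p) ^ 4) ^ L := by
  have hp1 : 0 < 1 - p := by linarith
  have hq1 : p ^ 4 * (1 - p) ^ 4 ≤ 1 :=
    mul_le_one₀ (pow_le_one₀ hp0.le (by linarith)) (by positivity)
      (pow_le_one₀ hp1.le (by linarith))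
  rcases S.eq_empty_or_nonempty with rfl | ⟨G₀, hG₀⟩
  · exact ⟨#(indexPairs r) * s ^ 2, by omega, by
      simpa using pow_nonneg (sub_nonneg.2 hq1) _⟩
  have hlarge : ∀ Z : Finset (Fin n), s / 5 < #Z →
      ¬ G₀.IsClique (Z : Set (Fin n)) ∧ ¬ G₀ᶜ.IsClique (Z : Set (Fin n)) := by
    intro Z hZ
    refine ⟨fun h => ?_, fun h => ?_⟩
    · have := hhom G₀ hG₀ Z (Or.inl h); omega
    · have := hhom G₀ hG₀ Z (Or.inr h); omega
  have hT := fun i => exists_packing (fun t => Cherry G₀ t ∨ Cherry G₀ᶜ t) 3 (s / 5)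
    (fun t ht => ht.elim Cherry.card_eq Cherry.card_eq) (by norm_num) (W i)
    (fun Z _ hZ => exists_cherry (hlarge Z hZ).1 (hlarge Z hZ).2)
  have hM := fun i => exists_packing (EdgePair G₀) 2 (s / 5)
    (fun t ht => EdgePair.card_eq ht) (by norm_num) (W i)
    (fun Z _ hZ => exists_edgePair (hlarge Z hZ).2)
  have hM' := fun i => exists_packing (EdgePair G₀ᶜ) 2 (s / 5)
    (fun t ht => EdgePair.card_eq ht) (by norm_num) (W i)
    (fun Z _ hZ => exists_edgePair (by rw [compl_compl]; exact (hlarge Z hZ).1))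
  choose 𝒯 hT1 hT2 hT3 using hT
  choose M hM1 hM2 hM3 using hM
  choose M' hM1' hM2' hM3' using hM'
  simp only [hs] at hT3 hM3 hM3'
  -- A path is combined with edges, a co-path with non-edges.
  set Mt : Finset (Fin n) → Fin k → Finset (Finset (Fin n)) :=
    fun t j => if Cherry G₀ t then M j else M' j with hMt
  have hMtW : ∀ t j, ∀ D ∈ Mt t j, D ⊆ W j := by
    intro t j D hD
    simp only [hMt] at hD
    split_ifs at hD
    exacts [(hM1 j D hD).2, (hM1' j D hD).2]
  have hMtdis : ∀ t j, ∀ D ∈ Mt t j, ∀ D' ∈ Mt t j, D ≠ D' → Disjoint D D' := by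
    intro t j D hD D' hD'
    simp only [hMt] at hD hD'
    split_ifs at hD hD'
    exacts [hM2 j D hD D' hD', hM2' j D hD D' hD']
  have hMtcard : ∀ t j, s ≤ 2 * #(Mt t j) + s / 5 := by
    intro t j
    simp only [hMt]
    split_ifs
    exacts [hM3 j, hM3' j]
  set L : Finset (Σ _ : Fin k × Fin k, Σ _ : Finset (Fin n), Finset (Fin n)) :=
    (indexPairs r).sigma fun x => (𝒯 x.1).sigma fun t => Mt t x.2 with hL
  have hLmem : ∀ l ∈ L, l.1 ∈ indexPairs r ∧ l.2.1 ∈ 𝒯 l.1.1 ∧ l.2.2 ∈ Mt l.2.1 l.1.2 := by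
    intro l hl
    simpa only [hL, mem_sigma] using hl
  have hLW : ∀ l ∈ L, l.1.1 < l.1.2 ∧ r l.1.1 l.1.2 ∧ l.2.1 ⊆ W l.1.1 ∧ l.2.2 ⊆ W l.1.2 := by
    intro l hl
    obtain ⟨h1, h2, h3⟩ := hLmem l hl
    exact ⟨(mem_filter.1 h1).2.1, (mem_filter.1 h1).2.2, (hT1 _ _ h2).2, hMtW _ _ _ h3⟩
  have hLcard : #(indexPairs r) * s ^ 2 ≤ 36 * #L := by
    rw [hL, card_sigma, mul_sum, ← smul_eq_mul, ← sum_const]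
    refine sum_le_sum fun x _ => ?_
    rw [card_sigma]
    have h1 : 4 * s ≤ 15 * #(𝒯 x.1) := by have := hT3 x.1; omega
    have h2 : ∀ t, 2 * s ≤ 5 * #(Mt t x.2) := fun t => by have := hMtcard t x.2; omega
    have h3 : #(𝒯 x.1) * (2 * s) ≤ 5 * ∑ t ∈ 𝒯 x.1, #(Mt t x.2) := by
      rw [mul_sum, ← smul_eq_mul, ← sum_const]
      exact sum_le_sum fun t _ => h2 t
    nlinarith
  have hbad : ∀ l : (Σ _ : Fin k × Fin k, Σ _ : Finset (Fin n), Finset (Fin n)),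
      ∃ P : Finset (Sym2 (Fin n)), l ∈ L → P ⊆ crossPairs l.2.1 l.2.2 ∧ #P ≤ 4 ∧
        #(crossPairs l.2.1 l.2.2 \ P) ≤ 4 ∧
        ∀ H' : SimpleGraph (Fin n), (∀ u ∈ l.2.1, ∀ v ∈ l.2.1, H'.Adj u v ↔ G₀.Adj u v) →
          (∀ u ∈ l.2.2, ∀ v ∈ l.2.2, H'.Adj u v ↔ G₀.Adj u v) → ¬ HasInducedC5 H' →
          edges H' ∩ crossPairs l.2.1 l.2.2 ≠ P := by
    intro l
    by_cases hl : l ∈ L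
    · obtain ⟨h1, h2, h3⟩ := hLmem l hl
      obtain ⟨h4, h5, h6, h7⟩ := hLW l hl
      have hdis : Disjoint l.2.1 l.2.2 := (hW _ _ h4.ne).mono h6 h7
      simp only [hMt] at h3
      by_cases hch : Cherry G₀ l.2.1
      · rw [if_pos hch] at h3
        obtain ⟨P, hP⟩ := exists_bad_trace hch (hM1 _ _ h3).1 hdis
        exact ⟨P, fun _ => by convert hP⟩
      · rw [if_neg hch] at h3
        obtain ⟨P, hP⟩ := exists_bad_trace_compl ((hT1 _ _ h2).1.resolve_left hch)
          (hM1' _ _ h3).1 hdis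
        exact ⟨P, fun _ => by convert hP⟩
    · exact ⟨∅, fun h => absurd h hl⟩
  choose P hP using hbad
  have hQB : ∀ l ∈ L, crossPairs l.2.1 l.2.2 ⊆ slots W r := by
    intro l hl e he
    obtain ⟨h4, h5, h6, h7⟩ := hLW l hl
    obtain ⟨u, hu, v, hv, rfl⟩ := mem_crossPairs.1 he
    exact (mem_slots hW hr (h6 hu) (h7 hv)).2 h5
  have hQdis : ∀ l ∈ L, ∀ l' ∈ L, l ≠ l' →
      Disjoint (crossPairs l.2.1 l.2.2) (crossPairs l'.2.1 l'.2.2) := by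
    intro l hl l' hl' hne
    rw [Finset.disjoint_left]
    intro e he he'
    obtain ⟨u, hu, v, hv, rfl⟩ := mem_crossPairs.1 he
    obtain ⟨u', hu', v', hv', h⟩ := mem_crossPairs.1 he'
    obtain ⟨a1, a2, a3⟩ := hLmem l hl
    obtain ⟨b1, b2, b3⟩ := hLmem l' hl'
    obtain ⟨a4, a5, a6, a7⟩ := hLW l hl
    obtain ⟨b4, b5, b6, b7⟩ := hLW l' hl'
    obtain ⟨⟨i, j⟩, t, D⟩ := l
    obtain ⟨⟨i', j'⟩, t', D'⟩ := l'
    simp only at *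
    rcases Sym2.eq_iff.1 h with ⟨rfl, rfl⟩ | ⟨rfl, rfl⟩
    · obtain rfl := eq_of_mem_cluster hW (a6 hu) (b6 hu')
      obtain rfl := eq_of_mem_cluster hW (a7 hv) (b7 hv')
      have htt : t = t' := by
        by_contra hne'
        exact Finset.disjoint_left.1 (hT2 i t a2 t' b2 hne') hu hu'
      subst htt
      have hDD : D = D' := by
        by_contra hne'
        exact Finset.disjoint_left.1 (hMtdis t j D a3 D' b3 hne') hv hv'
      subst hDD
      exact hne rfl
    · obtain rfl := eq_of_mem_cluster hW (a6 hu) (b7 hv')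
      obtain rfl := eq_of_mem_cluster hW (a7 hv) (b6 hu')
      exact absurd a4 (not_lt.2 b4.le)
  have hinj : Set.InjOn (fun G => edges G ∩ slots W r) (S : Set (SimpleGraph (Fin n))) := by
    intro G hG G' hG' h
    apply edges_injective
    ext e
    by_cases he : e ∈ slots W r
    · have := Finset.ext_iff.1 h e
      simpa [he] using this
    · exact ⟨hagree G hG G' hG' e he, hagree G' hG' G hG e he⟩
  have hmain := card_avoid_le hp0 hp2 hq1 P (fun l => crossPairs l.2.1 l.2.2) L (slots W r)
    hQB hQdis (fun l hl => (hP l hl).1)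
    (fun l hl => by
      obtain ⟨-, h1, h2, -⟩ := hP l hl
      exact mul_le_mul (pow_le_pow_of_le_one hp0.le (by linarith) h1)
        (pow_le_pow_of_le_one hp1.le (by linarith) h2) (by positivity) (by positivity))
    (S.image fun G => edges G ∩ slots W r) m (by
      intro U hU
      obtain ⟨G, hG, rfl⟩ := mem_image.1 hU
      refine ⟨inter_subset_right, (card_le_card inter_subset_left).trans (hm G hG), ?_⟩
      intro l hl
      obtain ⟨h4, h5, h6, h7⟩ := hLW l hl
      have hin : ∀ i, ∀ u ∈ W i, ∀ v ∈ W i, G.Adj u v ↔ G₀.Adj u v := by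
        intro i u hu v hv
        have hns : s(u, v) ∉ slots W r := fun h => hr' i ((mem_slots hW hr hu hv).1 h)
        rw [← mem_edges, ← mem_edges]
        exact ⟨hagree G hG G₀ hG₀ _ hns, hagree G₀ hG₀ G hG _ hns⟩
      have h8 := (hP l hl).2.2.2 G (fun u hu v hv => hin _ u (h6 hu) v (h6 hv))
        (fun u hu v hv => hin _ u (h7 hu) v (h7 hv)) (hC5 G hG)
      rwa [inter_assoc, inter_eq_right.2 (hQB l hl)])
  rw [card_image_of_injOn hinj] at hmain
  refine ⟨#L, hLcard, le_trans ?_ hmain⟩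
  have hB := card_slots_le (W := W) hs hr hr'
  have h9 : (1 - p) ^ (#(indexPairs r) * s ^ 2) ≤ (1 - p) ^ #(slots W r) :=
    pow_le_pow_of_le_one hp1.le (by linarith) hB
  have h10 : 0 ≤ p / (1 - p) := by positivity
  gcongr

/-! ### The non-grey slots -/

/-- The index pair is an edge of `R`, that is, a regular pair of clusters, and is grey. -/
def ColouredGraph.Grey {k : ℕ} (R : ColouredGraph k) (i j : Fin k) : Prop :=
  R.graph.Adj i j ∧ R.ecol i j = 1 / 2

/-- The index pair is an edge of `R`, that is, a regular pair of clusters, and is white or black. -/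
def ColouredGraph.NonGrey {k : ℕ} (R : ColouredGraph k) (i j : Fin k) : Prop :=
  R.graph.Adj i j ∧ R.ecol i j ≠ 1 / 2

/-- The index pair is an edge of `R`, that is, a regular pair of clusters, and is black. -/
def ColouredGraph.Black {k : ℕ} (R : ColouredGraph k) (i j : Fin k) : Prop :=
  R.graph.Adj i j ∧ R.ecol i j = 1

lemma ColouredGraph.Grey.symm {k : ℕ} {R : ColouredGraph k} (i j : Fin k) (h : R.Grey i j) :
    R.Grey j i :=
  ⟨h.1.symm, by rw [R.ecol_symm]; exact h.2⟩

lemma ColouredGraph.NonGrey.symm {k : ℕ} {R : ColouredGraph k} (i j : Fin k)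
    (h : R.NonGrey i j) : R.NonGrey j i :=
  ⟨h.1.symm, by rw [R.ecol_symm]; exact h.2⟩

lemma ColouredGraph.Black.symm {k : ℕ} {R : ColouredGraph k} (i j : Fin k) (h : R.Black i j) :
    R.Black j i :=
  ⟨h.1.symm, by rw [R.ecol_symm]; exact h.2⟩

/-- The slots which lie neither in a grey nor in a white or black pair. -/
noncomputable def freeSlots {n k : ℕ} (R : ColouredGraph k) (W : Fin k → Finset (Fin n)) :
    Finset (Sym2 (Fin n)) :=
  univ.filter fun e => e ∉ slots W R.Grey ∧ e ∉ slots W R.NonGrey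

lemma mem_indexPairs {k : ℕ} {r : Fin k → Fin k → Prop} {x : Fin k × Fin k} :
    x ∈ indexPairs r ↔ x.1 < x.2 ∧ r x.1 x.2 := by
  simp [indexPairs]

lemma card_freeSlots_le {n k s : ℕ} {R : ColouredGraph k} {W : Fin k → Finset (Fin n)}
    (hW : ∀ i j, i ≠ j → Disjoint (W i) (W j)) (hs : ∀ i, #(W i) = s) {V0 : Finset (Fin n)}
    (hcov : V0 ∪ univ.biUnion W = univ) :
    #(freeSlots R W) ≤ #V0 * n + k * s ^ 2 + R.nonEdges * s ^ 2 := by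
  have hN : R.nonEdges = #(indexPairs fun i j => ¬ R.graph.Adj i j) := by
    unfold ColouredGraph.nonEdges indexPairs
    congr
  have hsub : freeSlots R W ⊆ crossPairs V0 univ ∪
      univ.biUnion (fun i => crossPairs (W i) (W i)) ∪
      (indexPairs fun i j => ¬ R.graph.Adj i j).biUnion
        fun x => crossPairs (W x.1) (W x.2) := by
    intro e he
    obtain ⟨he1, he2⟩ := (mem_filter.1 he).2
    induction e using Sym2.ind with
    | _ u v =>
      have hu : u ∈ V0 ∪ univ.biUnion W := hcov ▸ mem_univ u
      have hv : v ∈ V0 ∪ univ.biUnion W := hcov ▸ mem_univ v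
      simp only [mem_union, mem_biUnion, mem_univ, true_and] at hu hv
      simp only [mem_union, mem_biUnion, mem_univ, true_and, mem_crossPairs]
      rcases hu with hu | ⟨i, hu⟩
      · exact Or.inl (Or.inl ⟨u, hu, v, rfl⟩)
      rcases hv with hv | ⟨j, hv⟩
      · exact Or.inl (Or.inl ⟨v, hv, u, Sym2.eq_swap⟩)
      rw [mem_slots hW ColouredGraph.Grey.symm hu hv] at he1
      rw [mem_slots hW ColouredGraph.NonGrey.symm hu hv] at he2
      have hadj : ¬ R.graph.Adj i j := fun h => by
        by_cases h' : R.ecol i j = 1 / 2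
        exacts [he1 ⟨h, h'⟩, he2 ⟨h, h'⟩]
      rcases lt_trichotomy i j with hlt | rfl | hlt
      · exact Or.inr ⟨(i, j), mem_indexPairs.2 ⟨hlt, hadj⟩, u, hu, v, hv, rfl⟩
      · exact Or.inl (Or.inr ⟨i, u, hu, v, hv, rfl⟩)
      · exact Or.inr ⟨(j, i), mem_indexPairs.2 ⟨hlt, fun h => hadj h.symm⟩,
          v, hv, u, hu, Sym2.eq_swap⟩
  refine (card_le_card hsub).trans ((card_union_le _ _).trans
    (add_le_add ((card_union_le _ _).trans (add_le_add ?_ ?_)) ?_))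
  · exact (card_crossPairs_le _ _).trans (by simp)
  · refine (card_biUnion_le_card_mul _ _ (s ^ 2) fun i _ => ?_).trans (by simp)
    exact (card_crossPairs_le _ _).trans (by rw [hs, sq])
  · rw [hN]
    refine card_biUnion_le_card_mul _ _ _ fun x _ => ?_
    exact (card_crossPairs_le _ _).trans (by rw [hs, hs, sq])

/-- The set of white or black slots on which `G` deviates from the colour of the pair. -/
noncomputable def deviation {n k : ℕ} (R : ColouredGraph k) (W : Fin k → Finset (Fin n))
    (G : SimpleGraph (Fin n)) : Finset (Sym2 (Fin n)) :=
  (slots W R.NonGrey).filter fun e => ¬ (e ∈ edges G ↔ e ∈ slots W R.Black)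

lemma card_deviation_le {n k s : ℕ} {R : ColouredGraph k} {W : Fin k → Finset (Fin n)} {d : ℝ}
    (hd : 0 < d) (hW : ∀ i j, i ≠ j → Disjoint (W i) (W j)) (hs : ∀ i, #(W i) = s)
    (hks : k * s ≤ n) {G : SimpleGraph (Fin n)}
    (hcol : ∀ i j, R.NonGrey i j → (R.ecol i j = 1 ∧ 1 - d < dens G (W i) (W j)) ∨
      (R.ecol i j ≠ 1 ∧ dens G (W i) (W j) < d)) :
    (#(deviation R W G) : ℝ) ≤ d * (n : ℝ) ^ 2 := by
  set T : Fin k × Fin k → Finset (Fin n × Fin n) := fun x =>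
    (W x.1 ×ˢ W x.2).filter fun y => ¬ (G.Adj y.1 y.2 ↔ R.ecol x.1 x.2 = 1) with hT
  have hsub : deviation R W G ⊆
      (indexPairs R.NonGrey).biUnion fun x => (T x).image fun y => s(y.1, y.2) := by
    intro e he
    obtain ⟨he1, he2⟩ := mem_filter.1 he
    obtain ⟨x, hx, u, hu, v, hv, rfl⟩ := exists_of_mem_slots ColouredGraph.NonGrey.symm
      (fun i h => R.graph.loopless.irrefl i h.1) he1
    refine mem_biUnion.2 ⟨x, hx, mem_image.2 ⟨(u, v), mem_filter.2
      ⟨mem_product.2 ⟨hu, hv⟩, ?_⟩, rfl⟩⟩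
    rw [mem_edges, mem_slots hW ColouredGraph.Black.symm hu hv] at he2
    have hadj := (mem_filter.1 hx).2.2.1
    intro h
    exact he2 (h.trans ⟨fun h => ⟨hadj, h⟩, fun h => h.2⟩)
  have hTcard : ∀ x ∈ indexPairs R.NonGrey, (#(T x) : ℝ) ≤ d * (s : ℝ) ^ 2 := by
    intro x hx
    have hx' := (mem_filter.1 hx).2.2
    have hsum := card_filter_add_card_filter_not (s := W x.1 ×ˢ W x.2)
      (fun y : Fin n × Fin n => G.Adj y.1 y.2)
    rw [card_product, hs, hs] at hsum
    have hsumR : (#((W x.1 ×ˢ W x.2).filter fun y => G.Adj y.1 y.2) : ℝ) +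
        (#((W x.1 ×ˢ W x.2).filter fun y => ¬ G.Adj y.1 y.2) : ℝ) = (s : ℝ) * s := by
      exact_mod_cast hsum
    have hdens : dens G (W x.1) (W x.2) * ((s : ℝ) * s) =
        (#((W x.1 ×ˢ W x.2).filter fun y => G.Adj y.1 y.2) : ℝ) := by
      rw [_root_.dens, hs, hs]
      rcases Nat.eq_zero_or_pos s with h0 | h0
      · have h1 : (#((W x.1 ×ˢ W x.2).filter fun y => G.Adj y.1 y.2) : ℝ) ≤ 0 := by
          have : (0 : ℝ) ≤ #((W x.1 ×ˢ W x.2).filter fun y => ¬ G.Adj y.1 y.2) := by positivity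
          rw [h0] at hsumR
          norm_num at hsumR
          linarith
        have h2 := le_antisymm h1 (by positivity)
        rw [h2, h0]
        norm_num
      · have : (0 : ℝ) < s := by exact_mod_cast h0
        field_simp
    have hss : (0 : ℝ) ≤ (s : ℝ) * s := by positivity
    rcases hcol _ _ hx' with ⟨hc, hlt⟩ | ⟨hc, hlt⟩
    · have hTx : T x = (W x.1 ×ˢ W x.2).filter fun y => ¬ G.Adj y.1 y.2 := by
        simp only [hT, hc, iff_true]
      rw [hTx]
      nlinarith
    · have hTx : T x = (W x.1 ×ˢ W x.2).filter fun y => G.Adj y.1 y.2 := by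
        simp only [hT, hc, iff_false, not_not]
      rw [hTx]
      nlinarith
  have hcard : (#(indexPairs R.NonGrey) : ℝ) ≤ (k : ℝ) ^ 2 := by
    have : #(indexPairs R.NonGrey) ≤ k ^ 2 := by
      refine (card_le_univ _).trans ?_
      simp [sq]
    exact_mod_cast this
  have hksR : (k : ℝ) * s ≤ n := by exact_mod_cast hks
  calc (#(deviation R W G) : ℝ)
      ≤ ((∑ x ∈ indexPairs R.NonGrey, #(T x) : ℕ) : ℝ) := by
        exact_mod_cast (card_le_card hsub).trans
          (card_biUnion_le.trans (sum_le_sum fun x _ => card_image_le))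
    _ = ∑ x ∈ indexPairs R.NonGrey, (#(T x) : ℝ) := by push_cast; rfl
    _ ≤ ∑ _x ∈ indexPairs R.NonGrey, d * (s : ℝ) ^ 2 := sum_le_sum hTcard
    _ = (#(indexPairs R.NonGrey) : ℝ) * (d * (s : ℝ) ^ 2) := by simp
    _ ≤ (k : ℝ) ^ 2 * (d * (s : ℝ) ^ 2) := by gcongr
    _ = d * ((k : ℝ) * s) ^ 2 := by ring
    _ ≤ d * (n : ℝ) ^ 2 := by gcongr

/-- A graph is determined off the grey slots by its trace on the free slots and its deviation,
so a bound `X` for graphs agreeing off the grey slots gives a bound for all of `S`. -/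
lemma card_le_fiber_mul {n k : ℕ} {R : ColouredGraph k} {W : Fin k → Finset (Fin n)}
    (S : Finset (SimpleGraph (Fin n))) {X : ℝ}
    (hX : ∀ S' ⊆ S, (∀ G ∈ S', ∀ G' ∈ S', ∀ e ∉ slots W R.Grey, e ∈ edges G → e ∈ edges G') →
      (#S' : ℝ) ≤ X) :
    (#S : ℝ) ≤ X * ((2 : ℝ) ^ #(freeSlots R W) * (#(S.image (deviation R W)) : ℝ)) := by
  set φ : SimpleGraph (Fin n) → Finset (Sym2 (Fin n)) × Finset (Sym2 (Fin n)) :=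
    fun G => (edges G ∩ freeSlots R W, deviation R W G) with hφ
  set C := (freeSlots R W).powerset ×ˢ S.image (deviation R W) with hC
  have hmaps : ∀ G ∈ S, φ G ∈ C := fun G hG =>
    mem_product.2 ⟨mem_powerset.2 inter_subset_right, mem_image_of_mem _ hG⟩
  have hCcard : (#C : ℝ) = (2 : ℝ) ^ #(freeSlots R W) * (#(S.image (deviation R W)) : ℝ) := by
    rw [hC, card_product, card_powerset]
    push_cast
    rfl
  rw [← hCcard, card_eq_sum_card_fiberwise hmaps]
  push_cast
  calc ∑ b ∈ C, (#{G ∈ S | φ G = b} : ℝ) ≤ ∑ _b ∈ C, X := by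
        refine sum_le_sum fun b _ => hX _ (filter_subset _ _) ?_
        intro G hG G' hG' e he heG
        have hφG : φ G = φ G' := (mem_filter.1 hG).2.trans (mem_filter.1 hG').2.symm
        simp only [hφ, Prod.mk.injEq] at hφG
        by_cases hng : e ∈ slots W R.NonGrey
        · have := Finset.ext_iff.1 hφG.2 e
          simp only [deviation, mem_filter, hng, true_and] at this
          tauto
        · have hfree : e ∈ freeSlots R W := mem_filter.2 ⟨mem_univ _, he, hng⟩
          have := Finset.ext_iff.1 hφG.1 e
          simp only [mem_inter, hfree, and_true] at this
          exact this.1 heG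
    _ = X * #C := by rw [sum_const, nsmul_eq_mul, mul_comm]

/-! ### Exponents -/

/-- The weighted count of a fibre, rewritten as a power of two. The `n / 4` comes from
`n² / 4 = C(n,2) / 2 + n / 4`. -/
lemma fiber_exponent {p : ℝ} (hp0 : 0 < p) (hp2 : p ≤ 1 / 2) {m g L n : ℕ} {M X : ℝ}
    (hM : M = n * (n - 1) / 2)
    (hm : (m : ℝ) * (Real.logb 2 (1 - p) - Real.logb 2 p) ≤
      p * M / 2 * (Real.logb 2 (1 - p) - Real.logb 2 p))
    (hg : 4 * (g : ℝ) ≤ (n : ℝ) ^ 2) (hL : g ≤ 36 * L)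
    (hX : X * ((1 - p) ^ g * (p / (1 - p)) ^ m) ≤ (1 - p ^ 4 * (1 - p) ^ 4) ^ L) :
    X ≤ (2 : ℝ) ^ (M * (binEnt p / 2 - p ^ 4 * (1 - p) ^ 4 / 72) + n / 4) := by
  have hp1 : 0 < 1 - p := by linarith
  set q := p ^ 4 * (1 - p) ^ 4 with hq
  have hq0 : 0 ≤ q := by positivity
  have hqp : q ≤ p := by
    have h1 : p ^ 4 ≤ p := by
      have : p ^ 4 ≤ p ^ 1 := pow_le_pow_of_le_one hp0.le (by linarith) (by norm_num)
      simpa using this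
    have h2 : (1 - p) ^ 4 ≤ 1 := pow_le_one₀ hp1.le (by linarith)
    calc q ≤ p * 1 := mul_le_mul h1 h2 (by positivity) hp0.le
      _ = p := mul_one p
  -- since `log 2 ≤ 1`, the bound `1 - x ≤ exp (-x)` may be weakened to base two
  have hexp : ∀ x : ℝ, 0 ≤ x → 1 - x ≤ (2 : ℝ) ^ (-x) := by
    intro x hx
    have h1 : 1 - x ≤ Real.exp (-x) := by linarith [Real.add_one_le_exp (-x)]
    refine h1.trans ?_
    rw [Real.rpow_def_of_pos two_pos]
    refine Real.exp_le_exp.2 ?_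
    nlinarith [Real.log_two_lt_d9]
  set l0 := Real.logb 2 (1 - p) with hl0
  set l1 := Real.logb 2 p with hl1
  have e0 : (1 - p) = (2 : ℝ) ^ l0 := (Real.rpow_logb two_pos (by norm_num) hp1).symm
  have e1 : p = (2 : ℝ) ^ l1 := (Real.rpow_logb two_pos (by norm_num) hp0).symm
  have hl0p : l0 ≤ -p := by
    rw [hl0, Real.logb_le_iff_le_rpow one_lt_two hp1]
    exact hexp p hp0.le
  have hl0m : -1 ≤ l0 := by
    rw [hl0, Real.le_logb_iff_rpow_le one_lt_two hp1]
    rw [Real.rpow_neg_one]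
    linarith
  have hbase : (1 - p) ^ g * (p / (1 - p)) ^ m = (2 : ℝ) ^ (l0 * g + (l1 - l0) * m) := by
    rw [Real.rpow_add two_pos, Real.rpow_mul two_pos.le, Real.rpow_mul two_pos.le,
      Real.rpow_natCast, Real.rpow_natCast, Real.rpow_sub two_pos, ← e0, ← e1]
  have hpow : (1 - q) ^ L ≤ (2 : ℝ) ^ (-q * L) := by
    rw [Real.rpow_mul two_pos.le, Real.rpow_natCast]
    exact pow_le_pow_left₀ (by linarith) (hexp q hq0) L
  have hLR : (g : ℝ) ≤ 36 * L := by exact_mod_cast hL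
  rw [hbase] at hX
  have hX' : X ≤ (2 : ℝ) ^ (-q * L - (l0 * g + (l1 - l0) * m)) := by
    rw [Real.rpow_sub two_pos, le_div_iff₀ (by positivity)]
    exact hX.trans hpow
  refine hX'.trans (Real.rpow_le_rpow_of_exponent_le one_le_two ?_)
  have hbin : binEnt p = -(p * l1) - (1 - p) * l0 := rfl
  have h1 : q * g ≤ q * (36 * L) := mul_le_mul_of_nonneg_left hLR hq0
  have h2 : 0 ≤ -l0 - q / 36 := by linarith
  have h3 : -l0 - q / 36 ≤ 1 := by linarith
  have h4 : (g : ℝ) ≤ M / 2 + n / 4 := by rw [hM]; linarith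
  have h5 : (g : ℝ) * (-l0 - q / 36) ≤ (M / 2 + n / 4) * (-l0 - q / 36) :=
    mul_le_mul_of_nonneg_right h4 h2
  have h6 : (n : ℝ) / 4 * (-l0 - q / 36) ≤ n / 4 * 1 :=
    mul_le_mul_of_nonneg_left h3 (by positivity)
  rw [hbin]
  linarith

/-- Both branches of `h` and `r` on `(0, 1/2]` are the entropy and the saving at
`p = min (2c) (1/2)`. -/
lemma hfun_sub_rfun {c : ℝ} (hc1 : c ≤ 1 / 2) :
    hfun c - rfun c = binEnt (min (2 * c) (1 / 2)) / 2 -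
      (min (2 * c) (1 / 2)) ^ 4 * (1 - min (2 * c) (1 / 2)) ^ 4 / 72 := by
  unfold hfun rfun
  by_cases h : c < 1 / 4
  · rw [if_pos h, if_pos h, min_eq_left (by linarith)]
    ring
  · rw [if_neg h, if_neg h, if_pos (by linarith), if_pos (by linarith),
      min_eq_right (by linarith)]
    have hb : binEnt (1 / 2) = 1 := by
      have : Real.logb 2 (1 / 2) = -1 := by
        rw [one_div, Real.logb_inv, Real.logb_self_eq_one one_lt_two]
      unfold binEnt
      norm_num [this]
    rw [hb]
    norm_num

lemma edge_exponent {c M : ℝ} (hc0 : 0 < c) (hM : 0 ≤ M) :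
    (⌊c * M⌋₊ : ℝ) *
      (Real.logb 2 (1 - min (2 * c) (1 / 2)) - Real.logb 2 (min (2 * c) (1 / 2))) ≤
    min (2 * c) (1 / 2) * M / 2 *
      (Real.logb 2 (1 - min (2 * c) (1 / 2)) - Real.logb 2 (min (2 * c) (1 / 2))) := by
  have hfl : (⌊c * M⌋₊ : ℝ) ≤ c * M := Nat.floor_le (by positivity)
  rcases le_total (2 * c) (1 / 2) with h | h
  · rw [min_eq_left h]
    have hlog : Real.logb 2 (2 * c) ≤ Real.logb 2 (1 - 2 * c) :=
      Real.logb_le_logb_of_le one_lt_two (by positivity) (by linarith)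
    exact mul_le_mul_of_nonneg_right (by linarith) (by linarith)
  · rw [min_eq_right h]
    norm_num

/-! ### Counting graphs with a fixed partition -/

/-- The graphs of `S` all have type `R` with respect to the same clusters `W` and exceptional
set `V0`. The four error terms in the exponent account for rounding, the free slots, and the
deviations from the white and black pairs. -/
lemma card_fixed_partition_le {n k s : ℕ} {c a d ε : ℝ} (hc0 : 0 < c) (hc1 : c ≤ 1 / 2)
    (ha0 : 0 < a) (ha1 : a ≤ 1) (hd : 0 < d) (hk : 0 < k)
    {R : ColouredGraph k} (hR : (R.nonEdges : ℝ) ≤ ε * (k : ℝ) ^ 2)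
    (htri : ¬ R.HasGreyTriangle) {V0 : Finset (Fin n)} {W : Fin k → Finset (Fin n)}
    (hW : ∀ i j, i ≠ j → Disjoint (W i) (W j)) (hs : ∀ i, #(W i) = s) (hks : k * s ≤ n)
    (hcov : V0 ∪ univ.biUnion W = univ) (hV0 : (#V0 : ℝ) ≤ ε * n)
    (S : Finset (SimpleGraph (Fin n))) (hC5 : ∀ G ∈ S, ¬ HasInducedC5 G)
    (hm : ∀ G ∈ S, #(edges G) ≤ ⌊c * (n.choose 2 : ℝ)⌋₊)
    (hhom : ∀ G ∈ S, ∀ A : Finset (Fin n),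
      (G.IsClique (A : Set (Fin n)) ∨ Gᶜ.IsClique (A : Set (Fin n))) → 5 * #A ≤ s)
    (hcol : ∀ G ∈ S, ∀ i j, R.NonGrey i j →
      (R.ecol i j = 1 ∧ 1 - d < dens G (W i) (W j)) ∨
      (R.ecol i j ≠ 1 ∧ dens G (W i) (W j) < d)) :
    (#S : ℝ) ≤ (2 : ℝ) ^ ((n.choose 2 : ℝ) * (hfun c - rfun c) + n / 4 +
      ((2 * ε + 1 / k) * (n : ℝ) ^ 2 +
        (Real.logb 2 (1 + a) * (n : ℝ) ^ 2 + d * (n : ℝ) ^ 2 * -Real.logb 2 a))) := by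
  have hkR : (0 : ℝ) < k := by exact_mod_cast hk
  have hksR : (k : ℝ) * s ≤ n := by exact_mod_cast hks
  have hks2 : ((k : ℝ) * s) ^ 2 ≤ (n : ℝ) ^ 2 := by gcongr
  have hirr : ∀ i, ¬ R.Grey i i := fun i h => R.graph.loopless.irrefl i h.1
  have hM : (n.choose 2 : ℝ) = n * (n - 1) / 2 := Nat.cast_choose_two ℝ n
  have hfib := card_le_fiber_mul (R := R) (W := W) S
    (X := (2 : ℝ) ^ ((n.choose 2 : ℝ) * (hfun c - rfun c) + n / 4)) (by
      intro S' hS' hagree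
      obtain ⟨L, hL, hcard⟩ := card_fiber_le (p := min (2 * c) (1 / 2))
        (m := ⌊c * (n.choose 2 : ℝ)⌋₊) (lt_min (by positivity) (by norm_num)) (min_le_right _ _)
        hW hs ColouredGraph.Grey.symm hirr S' (fun G h => hC5 G (hS' h))
        (fun G h => hm G (hS' h)) (fun G h => hhom G (hS' h)) hagree
      rw [hfun_sub_rfun hc1]
      refine fiber_exponent (lt_min (by positivity) (by norm_num)) (min_le_right _ _) hM
        (edge_exponent hc0 (by positivity)) ?_ hL hcard
      have hmantel := card_indexPairs_le ColouredGraph.Grey.symm hirr (fun i j l h1 h2 h3 =>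
        htri ⟨i, j, l, h1.1, h2.1, h3.1, h1.2, h2.2, h3.2⟩)
      have hmR : (4 * #(indexPairs R.Grey) : ℝ) ≤ (k : ℝ) ^ 2 := by exact_mod_cast hmantel
      push_cast
      calc 4 * ((#(indexPairs R.Grey) : ℝ) * (s : ℝ) ^ 2)
          = 4 * #(indexPairs R.Grey) * (s : ℝ) ^ 2 := by ring
        _ ≤ (k : ℝ) ^ 2 * (s : ℝ) ^ 2 := by gcongr
        _ = ((k : ℝ) * s) ^ 2 := by ring
        _ ≤ (n : ℝ) ^ 2 := hks2)
  have hfree : (2 : ℝ) ^ #(freeSlots R W) ≤ (2 : ℝ) ^ ((2 * ε + 1 / k) * (n : ℝ) ^ 2) := by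
    rw [← Real.rpow_natCast]
    refine Real.rpow_le_rpow_of_exponent_le one_le_two ?_
    have h : (#(freeSlots R W) : ℝ) ≤ #V0 * n + k * (s : ℝ) ^ 2 + R.nonEdges * (s : ℝ) ^ 2 := by
      exact_mod_cast card_freeSlots_le (R := R) hW hs hcov
    have h1 : (#V0 : ℝ) * n ≤ ε * n * n := by gcongr
    have h2 : (k : ℝ) * (s : ℝ) ^ 2 ≤ 1 / k * (n : ℝ) ^ 2 := by
      rw [one_div, inv_mul_eq_div, le_div_iff₀ hkR]
      linarith
    have hε : 0 ≤ ε := nonneg_of_mul_nonneg_left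
      ((Nat.cast_nonneg R.nonEdges).trans hR) (by positivity)
    have h3 : (R.nonEdges : ℝ) * (s : ℝ) ^ 2 ≤ ε * (n : ℝ) ^ 2 :=
      calc (R.nonEdges : ℝ) * (s : ℝ) ^ 2 ≤ ε * (k : ℝ) ^ 2 * (s : ℝ) ^ 2 := by gcongr
        _ = ε * ((k : ℝ) * s) ^ 2 := by ring
        _ ≤ ε * (n : ℝ) ^ 2 := by gcongr
    linarith
  have hdev : (#(S.image (deviation R W)) : ℝ) ≤
      (2 : ℝ) ^ (Real.logb 2 (1 + a) * (n : ℝ) ^ 2 + d * (n : ℝ) ^ 2 * -Real.logb 2 a) := by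
    have h := card_small_subsets_le_s15 ha0 ha1 (S.image (deviation R W)) (x := d * (n : ℝ) ^ 2) (by
      intro T hT
      obtain ⟨G, hG, rfl⟩ := mem_image.1 hT
      exact card_deviation_le hd hW hs hks (hcol G hG))
    have hcard : Fintype.card (Sym2 (Fin n)) ≤ n ^ 2 := by
      refine (Fintype.card_le_of_surjective _ Sym2.mk_surjective).trans ?_
      simp [sq]
    have h' : (1 + a) ^ Fintype.card (Sym2 (Fin n)) ≤ (1 + a) ^ (n ^ 2) :=
      pow_le_pow_right₀ (by linarith) hcard
    have e1 : (2 : ℝ) ^ (Real.logb 2 (1 + a) * (n : ℝ) ^ 2) = (1 + a) ^ (n ^ 2) := by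
      rw [Real.rpow_mul two_pos.le, Real.rpow_logb two_pos (by norm_num) (by linarith)]
      exact_mod_cast Real.rpow_natCast (1 + a) (n ^ 2)
    have e2 : (2 : ℝ) ^ (d * (n : ℝ) ^ 2 * -Real.logb 2 a) = (a ^ (d * (n : ℝ) ^ 2))⁻¹ := by
      rw [mul_comm, neg_mul, Real.rpow_neg two_pos.le, Real.rpow_mul two_pos.le,
        Real.rpow_logb two_pos (by norm_num) ha0]
    rw [Real.rpow_add two_pos, e1, e2, ← div_eq_mul_inv, le_div_iff₀ (by positivity)]
    exact h.trans h'
  refine hfib.trans ?_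
  rw [Real.rpow_add two_pos _ ((2 * ε + 1 / k) * (n : ℝ) ^ 2 + _), Real.rpow_add two_pos
    ((2 * ε + 1 / k) * (n : ℝ) ^ 2)]
  gcongr

/-- The exceptional set of an encoded partition. -/
noncomputable def exceptional {n k : ℕ} (f : Fin n → Option (Fin k)) : Finset (Fin n) :=
  univ.filter fun v => f v = none

lemma disjoint_cluster {n k : ℕ} (f : Fin n → Option (Fin k)) (i j : Fin k) (hij : i ≠ j) :
    Disjoint (cluster f i) (cluster f j) := by
  rw [Finset.disjoint_left]
  intro v hi hj
  simp only [cluster, mem_filter, mem_univ, true_and] at hi hj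
  exact hij (Option.some.inj (hi.symm.trans hj))

lemma exceptional_union_cluster {n k : ℕ} (f : Fin n → Option (Fin k)) :
    exceptional f ∪ univ.biUnion (cluster f) = univ := by
  ext v
  simp only [exceptional, cluster, mem_union, mem_filter, mem_univ, true_and, mem_biUnion,
    iff_true]
  cases f v <;> simp

lemma exists_encoding {n k : ℕ} {V0 : Finset (Fin n)} {W : Fin k → Finset (Fin n)}
    (hW : ∀ i j, i ≠ j → Disjoint (W i) (W j)) (hV : ∀ i, Disjoint V0 (W i))
    (hcov : V0 ∪ univ.biUnion W = univ) :
    ∃ f : Fin n → Option (Fin k), cluster f = W ∧ exceptional f = V0 := by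
  have key : ∀ v : Fin n, ∃ o : Option (Fin k), (∀ i, o = some i ↔ v ∈ W i) ∧
      (o = none ↔ v ∈ V0) := by
    intro v
    have hv : v ∈ V0 ∪ univ.biUnion W := hcov ▸ mem_univ v
    simp only [mem_union, mem_biUnion, mem_univ, true_and] at hv
    rcases hv with hv | ⟨i, hv⟩
    · exact ⟨none, fun i => by simpa using Finset.disjoint_left.1 (hV i) hv, by simpa using hv⟩
    · refine ⟨some i, fun j => ⟨?_, fun h => ?_⟩, ?_⟩
      · rintro h
        rw [← Option.some.inj h]
        exact hv
      · rw [eq_of_mem_cluster hW hv h]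
      · simpa using fun h => Finset.disjoint_left.1 (hV i) h hv
  choose f hf using key
  refine ⟨f, ?_, ?_⟩
  · ext i v
    simp [cluster, (hf v).1 i]
  · ext v
    simp [exceptional, (hf v).2]

lemma exceptional_add_cluster {n k s : ℕ} {f : Fin n → Option (Fin k)}
    (hs : ∀ i, #(cluster f i) = s) : #(exceptional f) + k * s = n := by
  have h1 : #(univ.biUnion (cluster f)) = k * s := by
    rw [card_biUnion fun i _ j _ h => disjoint_cluster f i j h]
    simp [hs]
  have h2 : Disjoint (exceptional f) (univ.biUnion (cluster f)) := by
    rw [Finset.disjoint_left]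
    intro v h h'
    simp only [exceptional, cluster, mem_filter, mem_univ, true_and, mem_biUnion] at h h'
    obtain ⟨i, h'⟩ := h'
    rw [h] at h'
    cases h'
  rw [← h1, ← card_union_of_disjoint h2, exceptional_union_cluster]
  simp

lemma card_le_homNum_s15 {n : ℕ} {G : SimpleGraph (Fin n)} {A : Finset (Fin n)}
    (hA : G.IsClique (A : Set (Fin n)) ∨ Gᶜ.IsClique (A : Set (Fin n))) : #A ≤ homNum G := by
  refine le_csSup ⟨n, ?_⟩ ⟨A, rfl, hA⟩
  rintro m ⟨B, rfl, -⟩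
  simpa using card_le_univ B

/-- The encoded partition `f` witnesses the part of `HasType` for `R` used in the count:
cluster sizes, the size of the exceptional set, and the densities of white and black pairs. -/
def Witnesses {n k : ℕ} (R : ColouredGraph k) (ε d : ℝ) (f : Fin n → Option (Fin k))
    (G : SimpleGraph (Fin n)) : Prop :=
  (#(exceptional f) : ℝ) ≤ ε * n ∧ (∀ i j, #(cluster f i) = #(cluster f j)) ∧
    ∀ i j, R.NonGrey i j → (R.ecol i j = 1 ∧ 1 - d < dens G (cluster f i) (cluster f j)) ∨
      (R.ecol i j ≠ 1 ∧ dens G (cluster f i) (cluster f j) < d)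

lemma HasType.exists_witness {n k k' : ℕ} {R : ColouredGraph k} {ε ε' d : ℝ}
    {G : SimpleGraph (Fin n)} (h : HasType G ε ε' d k' R) :
    ∃ f : Fin n → Option (Fin k), Witnesses R ε d f G := by
  obtain ⟨μ, -, V0, W, hW, hV, hcov, hV0, hcard, -, -, hcol, -⟩ := h
  obtain ⟨f, rfl, rfl⟩ := exists_encoding hW hV hcov
  refine ⟨f, hV0, hcard, fun i j hij => ?_⟩
  obtain ⟨h0, h1, h2⟩ := hcol i j hij.1
  rcases lt_or_ge (dens G (cluster f i) (cluster f j)) d with hlt | hge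
  · exact Or.inr ⟨by rw [h0 hlt]; norm_num, hlt⟩
  · rcases lt_or_ge (1 - d) (dens G (cluster f i) (cluster f j)) with hlt | hle
    · exact Or.inl ⟨h1 hlt, hlt⟩
    · exact absurd (h2 hge hle) hij.2

lemma card_RsetForb_le {n k k' k₁ : ℕ} {c a d ε ε' : ℝ} (hc0 : 0 < c) (hc1 : c ≤ 1 / 2)
    (ha0 : 0 < a) (ha1 : a ≤ 1) (hd : 0 < d) (hε : ε ≤ 1 / 6) (hk : 0 < k) (hkk : k ≤ k₁)
    {R : ColouredGraph k} (hR : (R.nonEdges : ℝ) ≤ ε * (k : ℝ) ^ 2)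
    (htri : ¬ R.HasGreyTriangle) :
    (#(RsetForb R ε ε' d k' n c (1 / (6 * (k₁ : ℝ)))) : ℝ) ≤ ((k : ℝ) + 1) ^ n *
      (2 : ℝ) ^ ((n.choose 2 : ℝ) * (hfun c - rfun c) + n / 4 +
      ((2 * ε + 1 / k) * (n : ℝ) ^ 2 +
        (Real.logb 2 (1 + a) * (n : ℝ) ^ 2 + d * (n : ℝ) ^ 2 * -Real.logb 2 a))) := by
  set S := RsetForb R ε ε' d k' n c (1 / (6 * (k₁ : ℝ))) with hS
  set B := (2 : ℝ) ^ ((n.choose 2 : ℝ) * (hfun c - rfun c) + n / 4 +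
      ((2 * ε + 1 / k) * (n : ℝ) ^ 2 +
        (Real.logb 2 (1 + a) * (n : ℝ) ^ 2 + d * (n : ℝ) ^ 2 * -Real.logb 2 a))) with hB
  have hmem : ∀ G ∈ S, (edgeCount G = ⌊c * (n.choose 2 : ℝ)⌋₊ ∧ HasType G ε ε' d k' R) ∧
      ¬ HasInducedC5 G ∧ (homNum G : ℝ) < 1 / (6 * (k₁ : ℝ)) * n := by
    intro G hG
    obtain ⟨h1, h2⟩ := mem_filter.1 hG
    exact ⟨(mem_filter.1 h1).2, h2⟩
  have hsub : S ⊆ univ.biUnion fun f : Fin n → Option (Fin k) =>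
      S.filter fun G => Witnesses R ε d f G := by
    intro G hG
    obtain ⟨f, hf⟩ := (hmem G hG).1.2.exists_witness
    exact mem_biUnion.2 ⟨f, mem_univ _, mem_filter.2 ⟨hG, hf⟩⟩
  have hkR : (0 : ℝ) < k := by exact_mod_cast hk
  have hfix : ∀ f : Fin n → Option (Fin k),
      (#(S.filter fun G => Witnesses R ε d f G) : ℝ) ≤ B := by
    intro f
    rcases (S.filter fun G => Witnesses R ε d f G).eq_empty_or_nonempty with h0 | ⟨G₀, hG₀⟩
    · rw [h0, card_empty, Nat.cast_zero]
      positivity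
    obtain ⟨hV0, hcard, -⟩ := (mem_filter.1 hG₀).2
    have hs : ∀ i, #(cluster f i) = #(cluster f ⟨0, hk⟩) := fun i => hcard i _
    have hsum := exceptional_add_cluster hs
    refine card_fixed_partition_le hc0 hc1 ha0 ha1 hd hk hR htri (disjoint_cluster f) hs
      (by omega) (exceptional_union_cluster f) hV0 _
      (fun G hG => (hmem G (mem_filter.1 hG).1).2.1)
      (fun G hG => by rw [card_edges, (hmem G (mem_filter.1 hG).1).1.1])
      (fun G hG A hA => ?_) (fun G hG => (mem_filter.1 hG).2.2.2)
    -- a cluster has at least `5n / (6k)` vertices, a homogeneous set fewer than `n / (6k)`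
    have hA1 : (#A : ℝ) ≤ homNum G := by exact_mod_cast card_le_homNum_s15 hA
    have hA2 := (hmem G (mem_filter.1 hG).1).2.2
    have hk1R : (k : ℝ) ≤ k₁ := by exact_mod_cast hkk
    have hn0 : (0 : ℝ) ≤ n := Nat.cast_nonneg n
    have hA3 : 1 / (6 * (k₁ : ℝ)) * n ≤ 1 / (6 * (k : ℝ)) * n := by gcongr
    have hA4 : (#A : ℝ) * (6 * k) ≤ n := by
      have : (#A : ℝ) ≤ n / (6 * k) := by
        rw [div_eq_inv_mul, ← one_div]
        linarith
      rwa [le_div_iff₀ (by positivity)] at this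
    have hsumR : (#(exceptional f) : ℝ) + k * #(cluster f ⟨0, hk⟩) = n := by exact_mod_cast hsum
    have hε' : ε * n ≤ 1 / 6 * n := by gcongr
    have : (k : ℝ) * (5 * #A) ≤ k * #(cluster f ⟨0, hk⟩) := by linarith
    exact_mod_cast le_of_mul_le_mul_left this hkR
  calc (#S : ℝ) ≤ ((∑ f : Fin n → Option (Fin k),
        #(S.filter fun G => Witnesses R ε d f G) : ℕ) : ℝ) := by
        exact_mod_cast (card_le_card hsub).trans card_biUnion_le
    _ = ∑ f : Fin n → Option (Fin k), (#(S.filter fun G => Witnesses R ε d f G) : ℝ) := by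
        push_cast; rfl
    _ ≤ ∑ _f : Fin n → Option (Fin k), B := sum_le_sum fun f _ => hfix f
    _ = ((k : ℝ) + 1) ^ n * B := by simp

/-- Lemma 3.3: for every `0 < c ≤ 1/2` and `γ > 0` there exist `ε₀, d₀ > 0` and `k₀` such that
for all `k₁ ≥ k₀` and `k'` there is `n₀` such that for all `0 < d ≤ d₀`, `0 < ε ≤ ε₀`,
`ε' > 0`, `n ≥ n₀` and `k₀ ≤ k ≤ k₁`: if `R` is a coloured graph on `k` vertices with at most
`εk²` non-edges and no grey triangle, and `η = 1/(6k₁)`, then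
`|ℛ(R,ε,ε',d,k',n,c) ∩ Forb*_{n,η}(C₅,c)| ≤ 2^{(h(c)−r(c)+γ)·C(n,2)}`. -/
theorem stmt15 (c γ : ℝ) (hc0 : 0 < c) (hc1 : c ≤ 1/2) (hγ : 0 < γ) :
    ∃ ε₀ d₀ : ℝ, ∃ k₀ : ℕ, 0 < ε₀ ∧ 0 < d₀ ∧
      ∀ k₁ : ℕ, k₀ ≤ k₁ → ∀ k' : ℕ, ∃ n₀ : ℕ,
      ∀ d : ℝ, 0 < d → d ≤ d₀ → ∀ ε : ℝ, 0 < ε → ε ≤ ε₀ → ∀ ε' : ℝ, 0 < ε' →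
      ∀ n : ℕ, n₀ ≤ n → ∀ k : ℕ, k₀ ≤ k → k ≤ k₁ → ∀ R : ColouredGraph k,
        ((R.nonEdges : ℝ) ≤ ε * (k : ℝ)^2) → ¬ R.HasGreyTriangle →
        ((RsetForb R ε ε' d k' n c (1 / (6 * (k₁ : ℝ)))).card : ℝ) ≤
          (2 : ℝ) ^ ((hfun c - rfun c + γ) * (n.choose 2 : ℝ)) := by
  -- error budget: the number of partitions with the rounding, the free slots, and the two factors
  -- counting deviations contribute at most `γ n² / 16`, `γ n² / 16`, `γ n² / 32` and
  -- `γ n² / 32`, while `C(n,2) ≥ n² / 4`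
  set a : ℝ := min (γ / 64) (1 / 2) with ha
  have ha0 : 0 < a := lt_min (by positivity) (by norm_num)
  have ha2 : a ≤ 1 / 2 := min_le_right _ _
  have hloga : Real.logb 2 (1 + a) ≤ γ / 32 := by
    have h1 : Real.log (1 + a) ≤ a := by
      linarith [Real.log_le_sub_one_of_pos (show 0 < 1 + a by linarith)]
    have h2 : a ≤ γ / 64 := min_le_left _ _
    rw [Real.logb, div_le_iff₀ (Real.log_pos one_lt_two)]
    nlinarith [Real.log_two_gt_d9]
  set b : ℝ := -Real.logb 2 a with hb
  have hb0 : 0 < b := by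
    rw [hb, neg_pos]
    exact Real.logb_neg one_lt_two ha0 (by linarith)
  obtain ⟨k₀, hk₀⟩ := exists_nat_ge (max 1 (32 / γ))
  have hk₀1 : (1 : ℝ) ≤ k₀ := (le_max_left _ _).trans hk₀
  have hk₀2 : 32 / γ ≤ k₀ := (le_max_right _ _).trans hk₀
  refine ⟨min (1 / 6) (γ / 64), γ / 32 / b, k₀, lt_min (by norm_num) (by positivity),
    by positivity, fun k₁ hk₁ k' => ?_⟩
  set l : ℝ := Real.logb 2 (k₁ + 1) with hl
  obtain ⟨n₀, hn₀⟩ := exists_nat_ge (max 2 ((l + 1 / 4) / (γ / 16)))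
  refine ⟨n₀, fun d hd hdd ε hε hεε ε' _ n hn k hk hkk R hR htri => ?_⟩
  have hnR : (n₀ : ℝ) ≤ n := by exact_mod_cast hn
  have hn2 : (2 : ℝ) ≤ n := (le_max_left _ _).trans (hn₀.trans hnR)
  have hnl : (l + 1 / 4) / (γ / 16) ≤ n := (le_max_right _ _).trans (hn₀.trans hnR)
  have hkR : (k₀ : ℝ) ≤ k := by exact_mod_cast hk
  have hkk₁ : (k : ℝ) ≤ k₁ := by exact_mod_cast hkk
  have hk1 : (1 : ℝ) ≤ k := hk₀1.trans hkR
  have hkpos : 0 < k := by exact_mod_cast (zero_lt_one.trans_le hk1)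
  refine (card_RsetForb_le hc0 hc1 ha0 (by linarith) hd (hεε.trans (min_le_left _ _)) hkpos hkk
    hR htri).trans ?_
  have hpart : ((k : ℝ) + 1) ^ n ≤ (2 : ℝ) ^ (l * n) := by
    rw [Real.rpow_mul two_pos.le, Real.rpow_natCast, hl,
      Real.rpow_logb two_pos (by norm_num) (by positivity)]
    gcongr
  refine (mul_le_mul_of_nonneg_right hpart (by positivity)).trans ?_
  rw [← Real.rpow_add two_pos]
  refine Real.rpow_le_rpow_of_exponent_le one_le_two ?_
  have hsq : (0 : ℝ) ≤ (n : ℝ) ^ 2 := by positivity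
  have hM : (n : ℝ) ^ 2 / 4 ≤ (n.choose 2 : ℝ) := by
    rw [Nat.cast_choose_two]
    nlinarith
  have e1 : (l + 1 / 4) * n ≤ γ / 16 * (n : ℝ) ^ 2 := by
    rw [div_le_iff₀ (by positivity)] at hnl
    nlinarith
  have e2 : (2 * ε + 1 / k) * (n : ℝ) ^ 2 ≤ γ / 16 * (n : ℝ) ^ 2 := by
    refine mul_le_mul_of_nonneg_right ?_ hsq
    have h1 : ε ≤ γ / 64 := hεε.trans (min_le_right _ _)
    have h2 : 1 / (k : ℝ) ≤ γ / 32 := by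
      rw [div_le_iff₀ (by positivity)] at hk₀2 ⊢
      nlinarith
    linarith
  have e3 : Real.logb 2 (1 + a) * (n : ℝ) ^ 2 ≤ γ / 32 * (n : ℝ) ^ 2 :=
    mul_le_mul_of_nonneg_right hloga hsq
  have e4 : d * (n : ℝ) ^ 2 * b ≤ γ / 32 * (n : ℝ) ^ 2 := by
    have : d * b ≤ γ / 32 := by
      rwa [le_div_iff₀ hb0] at hdd
    calc d * (n : ℝ) ^ 2 * b = d * b * (n : ℝ) ^ 2 := by ring
      _ ≤ γ / 32 * (n : ℝ) ^ 2 := mul_le_mul_of_nonneg_right this hsq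
  have e5 : γ * ((n : ℝ) ^ 2 / 4) ≤ γ * (n.choose 2 : ℝ) := mul_le_mul_of_nonneg_left hM hγ.le
  have e6 : 0 ≤ γ * (n : ℝ) ^ 2 := by positivity
  linarith
end

section
/- Every generalised split graph is perfect. -/
/-!
Both halves of the definition are inherited by induced subgraphs, so it suffices to colour a finite
generalised split graph with `ω = cliqueNum` colours.

If `G` itself has a generalised clique partition `V₁, …, V_k`, colour the clique `V₁` injectively
with colours below `ω`. Since there are no edges among the other parts, each of them can be coloured
separately. In a part `Vᵢ` the vertex `v` may take any colour not used on its neighbours in `V₁`,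
and Hall's theorem yields distinct choices: a nonempty `S ⊆ Vᵢ` together with the common neighbours
`N` of `S` in `V₁` is a clique, so `|S| ≤ ω - |N|`, and a colour forbidden for all of `S` must be the
colour of a vertex of `N` (`exists_part_coloring`).

If the complement has such a partition, then all parts are independent in `G` and the parts other
than `V₁` are completely joined to each other. Let `k` be the number of nonempty parts other
than `V₁`. If some `v₀ ∈ V₁` has a neighbour in each of these, there is a clique of size `k + 1`, and
colouring by parts uses at most `k + 1` colours. Otherwise every vertex of `V₁` is anticomplete to
one of these parts and can take its colour, so `k` colours suffice, and a transversal is a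
clique of size `k`.
-/

open Finset SimpleGraph
open scoped Classical

/-- `G` admits a generalised clique partition: a partition `V = V₁ ∪ … ∪ V_k` (here encoded by a
labelling `f` of the vertices, part `0` playing the role of `V₁`) such that every part induces a
clique and there are no edges between two distinct parts other than the first. -/
def HasGenCliquePartition {V : Type} (G : SimpleGraph V) : Prop :=
  ∃ f : V → ℕ,
    (∀ u v, f u = f v → u ≠ v → G.Adj u v) ∧
    (∀ u v, f u ≠ f v → f u ≠ 0 → f v ≠ 0 → ¬ G.Adj u v)

/-- `G` is a generalised split graph: `G` or its complement admits a generalised clique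
partition. -/
def IsGenSplit {V : Type} (G : SimpleGraph V) : Prop :=
  HasGenCliquePartition G ∨ HasGenCliquePartition Gᶜ

/-- `G` is perfect: for every induced subgraph the chromatic number equals the clique number. -/
noncomputable def IsPerfect {V : Type} (G : SimpleGraph V) : Prop :=
  ∀ s : Set V, (G.induce s).chromaticNumber = ((G.induce s).cliqueNum : ℕ∞)

lemma HasGenCliquePartition.induce {V : Type} {G : SimpleGraph V} (h : HasGenCliquePartition G)
    (s : Set V) : HasGenCliquePartition (G.induce s) := by
  obtain ⟨f, h1, h2⟩ := h
  refine ⟨fun v => f v, fun u v huv hne => ?_, fun u v huv hu hv => ?_⟩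
  · exact h1 u v huv (fun h => hne (Subtype.ext h))
  · exact h2 u v huv hu hv

lemma compl_induce_eq {V : Type} (G : SimpleGraph V) (s : Set V) :
    (G.induce s)ᶜ = Gᶜ.induce s := by
  ext u v
  simp [Subtype.ext_iff]

lemma chromaticNumber_eq_cliqueNum_of_colorable {V : Type} [Finite V] {G : SimpleGraph V}
    (h : G.Colorable G.cliqueNum) : G.chromaticNumber = (G.cliqueNum : ℕ∞) := by
  exact le_antisymm h.chromaticNumber_le G.cliqueNum_le_chromaticNumber

/-- A colouring `c` that is injective on the first part (label `0`) extends properly to any single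
further part (label `i`), injectively and with colours below the clique number, by Hall's
theorem. -/
lemma exists_part_coloring {V : Type} [Fintype V] (G : SimpleGraph V) (f : V → ℕ)
    (h1 : ∀ u v, f u = f v → u ≠ v → G.Adj u v) (c : V → ℕ)
    (hinj : ∀ u v, f u = 0 → f v = 0 → c u = c v → u = v)
    (i : ℕ) (hi : i ≠ 0) :
    ∃ g : V → ℕ, (∀ u v, f u = i → f v = i → g u = g v → u = v) ∧
      (∀ v, f v = i → g v < G.cliqueNum) ∧
      (∀ u v, f u = 0 → f v = i → G.Adj u v → c u ≠ g v) := by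
  let t : {v // f v = i} → Finset ℕ := fun v =>
    range G.cliqueNum \ ({u | f u = 0 ∧ G.Adj u v} : Finset V).image c
  have hall : ∀ S : Finset {v // f v = i}, #S ≤ #(S.biUnion t) := by
    intro S
    rcases S.eq_empty_or_nonempty with rfl | ⟨w, hw⟩
    · simp
    let N : Finset V := {u | f u = 0 ∧ ∀ v ∈ S, G.Adj u v}
    have hsub : range G.cliqueNum \ N.image c ⊆ S.biUnion t := by
      intro x hx
      rw [mem_sdiff] at hx
      by_contra hcon
      have hforb : ∀ v ∈ S, ∃ u, f u = 0 ∧ G.Adj u v ∧ c u = x := by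
        intro v hv
        by_contra hno
        refine hcon (mem_biUnion.2 ⟨v, hv, mem_sdiff.2 ⟨hx.1, fun hm => hno ?_⟩⟩)
        obtain ⟨u, hu, hux⟩ := mem_image.1 hm
        rw [mem_filter] at hu
        exact ⟨u, hu.2.1, hu.2.2, hux⟩
      -- As `c` is injective on the first part, one vertex `u` blocks `x` for all of `S`.
      obtain ⟨u, hu0, -, hux⟩ := hforb w hw
      refine hx.2 (mem_image.2 ⟨u, mem_filter.2 ⟨mem_univ _, hu0, fun v hv => ?_⟩, hux⟩)
      obtain ⟨u', hu0', hadj, hux'⟩ := hforb v hv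
      rwa [hinj u u' hu0 hu0' (hux.trans hux'.symm)]
    have hdisj : Disjoint (S.map (Function.Embedding.subtype _)) N := by
      rw [Finset.disjoint_left]
      intro a ha haN
      obtain ⟨b, -, rfl⟩ := mem_map.1 ha
      exact hi (b.2.symm.trans (mem_filter.1 haN).2.1)
    have hclique : G.IsClique (S.map (Function.Embedding.subtype _) ∪ N : Finset V) := by
      intro a ha b hb hab
      rw [mem_coe, mem_union] at ha hb
      rcases ha with ha | ha <;> rcases hb with hb | hb
      · obtain ⟨a', -, rfl⟩ := mem_map.1 ha
        obtain ⟨b', -, rfl⟩ := mem_map.1 hb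
        exact h1 _ _ (a'.2.trans b'.2.symm) hab
      · obtain ⟨a', ha', rfl⟩ := mem_map.1 ha
        exact ((mem_filter.1 hb).2.2 a' ha').symm
      · obtain ⟨b', hb', rfl⟩ := mem_map.1 hb
        exact (mem_filter.1 ha).2.2 b' hb'
      · exact h1 _ _ ((mem_filter.1 ha).2.1.trans (mem_filter.1 hb).2.1.symm) hab
    have hcard := hclique.card_le_cliqueNum
    rw [card_union_of_disjoint hdisj, card_map] at hcard
    have h3 := card_le_card hsub
    have h4 := le_card_sdiff (N.image c) (range G.cliqueNum)
    have h5 : #(N.image c) ≤ #N := card_image_le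
    rw [card_range] at h4
    omega
  obtain ⟨g, hg, hgt⟩ := (Finset.all_card_le_biUnion_card_iff_exists_injective t).1 hall
  refine ⟨fun v => if h : f v = i then g ⟨v, h⟩ else 0, ?_, ?_, ?_⟩
  · intro u v hu hv huv
    simp only [hu, hv, dif_pos] at huv
    exact congrArg Subtype.val (hg huv)
  · intro v hv
    simp only [hv, dif_pos]
    exact mem_range.1 (mem_sdiff.1 (hgt ⟨v, hv⟩)).1
  · intro u v hu hv hadj heq
    simp only [hv, dif_pos] at heq
    exact (mem_sdiff.1 (hgt ⟨v, hv⟩)).2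
      (mem_image.2 ⟨u, mem_filter.2 ⟨mem_univ _, hu, hadj⟩, heq⟩)

lemma HasGenCliquePartition.colorable {V : Type} [Fintype V] {G : SimpleGraph V}
    (h : HasGenCliquePartition G) : G.Colorable G.cliqueNum := by
  obtain ⟨f, h1, h2⟩ := h
  let C : Finset V := {v | f v = 0}
  have hC : #C ≤ G.cliqueNum := by
    refine IsClique.card_le_cliqueNum (t := C) (tc := fun a ha b hb hab => ?_)
    exact h1 _ _ ((mem_filter.1 ha).2.trans (mem_filter.1 hb).2.symm) hab
  have hmem : ∀ v, f v = 0 → v ∈ C := fun v hv => mem_filter.2 ⟨mem_univ _, hv⟩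
  obtain ⟨c, hinj, hlt⟩ : ∃ c : V → ℕ, (∀ u v, f u = 0 → f v = 0 → c u = c v → u = v) ∧
      ∀ v, f v = 0 → c v < G.cliqueNum := by
    refine ⟨fun v => if h : v ∈ C then (C.equivFin ⟨v, h⟩ : ℕ) else 0, ?_, ?_⟩
    · intro u v hu hv huv
      simp only [hmem u hu, hmem v hv, dif_pos] at huv
      exact congrArg Subtype.val (C.equivFin.injective (Fin.ext huv))
    · intro v hv
      simp only [hmem v hv, dif_pos]
      exact (Fin.is_lt _).trans_le hC
  choose! g hginj hglt hgc using exists_part_coloring G f h1 c hinj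
  refine ⟨Coloring.mk (fun v => (⟨if f v = 0 then c v else g (f v) v, ?_⟩ : Fin G.cliqueNum)) ?_⟩
  · split_ifs with h0
    · exact hlt v h0
    · exact hglt _ h0 v rfl
  · intro u v hadj heq
    have heq := congrArg Fin.val heq
    by_cases hu : f u = 0 <;> by_cases hv : f v = 0 <;> simp only [hu, hv, if_true, if_false] at heq
    · exact hadj.ne (hinj u v hu hv heq)
    · exact hgc _ hv u v hu rfl hadj heq
    · exact hgc _ hu v u hv rfl hadj.symm heq.symm
    · by_cases huv : f u = f v
      · rw [huv] at heq
        exact hadj.ne (hginj _ hv u v huv rfl heq)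
      · exact h2 u v huv hu hv hadj

lemma HasGenCliquePartition.colorable_of_compl {V : Type} [Fintype V] {G : SimpleGraph V}
    (h : HasGenCliquePartition Gᶜ) : G.Colorable G.cliqueNum := by
  obtain ⟨f, h1, h2⟩ := h
  have hind : ∀ u v, G.Adj u v → f u ≠ f v := fun u v hadj huv =>
    ((compl_adj G u v).1 (h1 u v huv hadj.ne)).2 hadj
  have hjoin : ∀ u v, f u ≠ f v → f u ≠ 0 → f v ≠ 0 → G.Adj u v := by
    intro u v huv hu hv
    by_contra hadj
    exact h2 u v huv hu hv ((compl_adj G u v).2 ⟨fun h => huv (congrArg f h), hadj⟩)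
  -- The labels of the nonempty parts other than the first.
  let I : Finset ℕ := (univ.image f).erase 0
  have hI : ∀ v, f v ≠ 0 → f v ∈ I := fun v hv =>
    mem_erase.2 ⟨hv, mem_image_of_mem _ (mem_univ _)⟩
  have htrans : ∀ r : I → V, (∀ i, f (r i) = i) →
      G.IsClique (univ.image r : Finset V) ∧ #(univ.image r) = #I := by
    intro r hr
    constructor
    · intro a ha b hb hab
      obtain ⟨i, -, rfl⟩ := mem_image.1 ha
      obtain ⟨j, -, rfl⟩ := mem_image.1 hb
      refine hjoin _ _ ?_ ?_ ?_
      · rw [hr, hr]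
        exact fun hij => hab (congrArg r (Subtype.ext hij))
      · rw [hr]
        exact (mem_erase.1 i.2).1
      · rw [hr]
        exact (mem_erase.1 j.2).1
    · rw [card_image_of_injective, card_univ, Fintype.card_coe]
      intro i j hij
      exact Subtype.ext (by rw [← hr i, ← hr j, hij])
  by_cases hcase : ∃ v₀, f v₀ = 0 ∧ ∀ i : I, ∃ v, f v = i ∧ G.Adj v₀ v
  · obtain ⟨v₀, h0, hv⟩ := hcase
    choose r hr hadj using hv
    obtain ⟨hcl, hcard⟩ := htrans r hr
    have hnot : v₀ ∉ univ.image r := by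
      intro hm
      obtain ⟨i, -, hi⟩ := mem_image.1 hm
      exact (hadj i).ne hi.symm
    have hcl' : G.IsClique (insert v₀ (univ.image r) : Finset V) := by
      rw [coe_insert]
      refine hcl.insert (fun b hb _ => ?_)
      obtain ⟨i, -, rfl⟩ := mem_image.1 hb
      exact hadj i
    have hle := hcl'.card_le_cliqueNum
    rw [card_insert_of_notMem hnot, hcard] at hle
    have hcol : G.Coloring (univ.image f : Finset ℕ) :=
      Coloring.mk (fun v => ⟨f v, mem_image_of_mem _ (mem_univ _)⟩)
        (fun {u v} hadj heq => hind u v hadj (congrArg Subtype.val heq))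
    refine hcol.colorable.mono ?_
    rw [Fintype.card_coe]
    have : #(univ.image f) ≤ #I + 1 := by
      have : #(univ.image f) - 1 ≤ #I := pred_card_le_card_erase
      omega
    omega
  · push Not at hcase
    choose g hg using hcase
    have hrep : ∀ i : I, ∃ v, f v = i := fun i => by
      obtain ⟨v, -, hv⟩ := mem_image.1 (mem_erase.1 i.2).2
      exact ⟨v, hv⟩
    choose r hr using hrep
    obtain ⟨hcl, hcard⟩ := htrans r hr
    have hle := hcl.card_le_cliqueNum
    rw [hcard] at hle
    have hcol : G.Coloring I :=
      Coloring.mk (fun v => if h : f v = 0 then g v h else ⟨f v, hI v h⟩) (by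
        intro u v hadj heq
        by_cases hu : f u = 0 <;> by_cases hv : f v = 0 <;>
          simp only [hu, hv, dif_pos, dif_neg, not_false_eq_true] at heq
        · exact hind u v hadj (hu.trans hv.symm)
        · exact hg u hu v (congrArg Subtype.val heq).symm hadj
        · exact hg v hv u (congrArg Subtype.val heq) hadj.symm
        · exact hind u v hadj (congrArg Subtype.val heq))
    refine hcol.colorable.mono ?_
    rwa [Fintype.card_coe]

/-- Every generalised split graph is perfect. -/
theorem stmt16 {V : Type} [Fintype V] (G : SimpleGraph V) (h : IsGenSplit G) :
    IsPerfect G := by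
  intro s
  apply chromaticNumber_eq_cliqueNum_of_colorable
  rcases h with h | h
  · exact (h.induce s).colorable
  · refine HasGenCliquePartition.colorable_of_compl ?_
    rw [compl_induce_eq]
    exact h.induce s
end
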